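/- Let φ : V(ℤ) → ℝ be a large and locally well approximated function. Then each Dirichlet series D^{±}(φ,s) = Σ_{a≥1} ν_{±a}(φ)/a^s converges absolutely for Re(s) > 1 and extends to a meromorphic function on the half-plane {s ∈ ℂ : Re(s) > 1/3} which is holomorphic there except for at most a simple pole at s = 1. In particular, the values D^{±}(φ, 1/2) are well defined. -/

import Mathlib

noncomputable section

namespace BQPaper

/-- A binary quartic form `a x⁴ + b x³y + c x²y² + d xy³ + e y⁴` over `R`,
recorded by its coefficients. -/
structure BQ (R : Type*) where
  a : R
  b : R
  c : R
  d : R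
  e : R

/-- A 2×2 matrix `!![p, q; r, s]`, recorded by its entries. -/
structure Mat2 (R : Type*) where
  p : R
  q : R
  r : R
  s : R

variable {R S : Type*} [CommRing R] [CommRing S]

def Mat2.det (m : Mat2 R) : R := m.p * m.s - m.q * m.r

/-- Matrix product. -/
def Mat2.mul (m n : Mat2 R) : Mat2 R :=
  ⟨m.p * n.p + m.q * n.r, m.p * n.q + m.q * n.s,
   m.r * n.p + m.s * n.r, m.r * n.q + m.s * n.s⟩

/-- Scalar multiple of a matrix. -/
def Mat2.smul (z : R) (m : Mat2 R) : Mat2 R := ⟨z * m.p, z * m.q, z * m.r, z * m.s⟩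

def Mat2.map (φ : R →+* S) (m : Mat2 R) : Mat2 S := ⟨φ m.p, φ m.q, φ m.r, φ m.s⟩

/-- Evaluation of a binary quartic form at `(x, y)`. -/
def BQ.eval (f : BQ R) (x y : R) : R :=
  f.a * x ^ 4 + f.b * x ^ 3 * y + f.c * x ^ 2 * y ^ 2 + f.d * x * y ^ 3 + f.e * y ^ 4

/-- The invariant `I(f) = 12ae − 3bd + c²`. -/
def BQ.invI (f : BQ R) : R := 12 * f.a * f.e - 3 * f.b * f.d + f.c ^ 2

/-- The invariant `J(f) = 72ace + 9bcd − 27ad² − 27eb² − 2c³`. -/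
def BQ.invJ (f : BQ R) : R :=
  72 * f.a * f.c * f.e + 9 * f.b * f.c * f.d - 27 * f.a * f.d ^ 2
    - 27 * f.e * f.b ^ 2 - 2 * f.c ^ 3

/-- The discriminant of a binary quartic form; one has `Δ = (4I³ − J²)/27`. -/
def BQ.disc (f : BQ R) : R :=
  256 * f.a ^ 3 * f.e ^ 3 - 192 * f.a ^ 2 * f.b * f.d * f.e ^ 2
    - 128 * f.a ^ 2 * f.c ^ 2 * f.e ^ 2 + 144 * f.a ^ 2 * f.c * f.d ^ 2 * f.e
    - 27 * f.a ^ 2 * f.d ^ 4 + 144 * f.a * f.b ^ 2 * f.c * f.e ^ 2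
    - 6 * f.a * f.b ^ 2 * f.d ^ 2 * f.e - 80 * f.a * f.b * f.c ^ 2 * f.d * f.e
    + 18 * f.a * f.b * f.c * f.d ^ 3 + 16 * f.a * f.c ^ 4 * f.e
    - 4 * f.a * f.c ^ 3 * f.d ^ 2 - 27 * f.b ^ 4 * f.e ^ 2
    + 18 * f.b ^ 3 * f.c * f.d * f.e - 4 * f.b ^ 3 * f.d ^ 3
    - 4 * f.b ^ 2 * f.c ^ 3 * f.e + f.b ^ 2 * f.c ^ 2 * f.d ^ 2

/-- Multiplication of all coefficients of a form by a scalar. -/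
def BQ.rsmul (t : R) (f : BQ R) : BQ R := ⟨t * f.a, t * f.b, t * f.c, t * f.d, t * f.e⟩

/-- Substitution action of a 2×2 matrix on binary quartic forms:
`(m • f)(x,y) = f((x,y)·m) = f(px + ry, qx + sy)` for `m = !![p, q; r, s]`. -/
def BQ.subst (m : Mat2 R) (f : BQ R) : BQ R where
  a := f.a * m.p ^ 4 + f.b * m.p ^ 3 * m.q + f.c * m.p ^ 2 * m.q ^ 2
      + f.d * m.p * m.q ^ 3 + f.e * m.q ^ 4
  b := 4 * f.a * m.p ^ 3 * m.r + f.b * m.p ^ 3 * m.s + 3 * f.b * m.p ^ 2 * m.q * m.r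
      + 2 * f.c * m.p ^ 2 * m.q * m.s + 2 * f.c * m.p * m.q ^ 2 * m.r
      + 3 * f.d * m.p * m.q ^ 2 * m.s + f.d * m.q ^ 3 * m.r + 4 * f.e * m.q ^ 3 * m.s
  c := 6 * f.a * m.p ^ 2 * m.r ^ 2 + 3 * f.b * m.p ^ 2 * m.r * m.s
      + 3 * f.b * m.p * m.q * m.r ^ 2 + f.c * m.p ^ 2 * m.s ^ 2
      + 4 * f.c * m.p * m.q * m.r * m.s + f.c * m.q ^ 2 * m.r ^ 2
      + 3 * f.d * m.p * m.q * m.s ^ 2 + 3 * f.d * m.q ^ 2 * m.r * m.s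
      + 6 * f.e * m.q ^ 2 * m.s ^ 2
  d := 4 * f.a * m.p * m.r ^ 3 + 3 * f.b * m.p * m.r ^ 2 * m.s + f.b * m.q * m.r ^ 3
      + 2 * f.c * m.p * m.r * m.s ^ 2 + 2 * f.c * m.q * m.r ^ 2 * m.s
      + f.d * m.p * m.s ^ 3 + 3 * f.d * m.q * m.r * m.s ^ 2 + 4 * f.e * m.q * m.s ^ 3
  e := f.a * m.r ^ 4 + f.b * m.r ^ 3 * m.s + f.c * m.r ^ 2 * m.s ^ 2
      + f.d * m.r * m.s ^ 3 + f.e * m.s ^ 4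

/-- The twisted action `(γ·f)(x,y) = f((x,y)·γ)/det(γ)²`, which descends to `PGL₂`.
(`Ring.inverse` is the genuine inverse when `det` is a unit.) -/
def BQ.twist (m : Mat2 R) (f : BQ R) : BQ R :=
  BQ.rsmul (Ring.inverse m.det ^ 2) (f.subst m)

/-- Coefficientwise map of forms along a ring homomorphism. -/
def BQ.map (φ : R →+* S) (f : BQ R) : BQ S := ⟨φ f.a, φ f.b, φ f.c, φ f.d, φ f.e⟩

end BQPaper

namespace BQPaper

open MeasureTheory

instance (p : Nat.Primes) : Fact (p : ℕ).Prime := ⟨p.2⟩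

noncomputable instance (p : ℕ) [Fact p.Prime] : MeasurableSpace ℤ_[p] := borel _
instance (p : ℕ) [Fact p.Prime] : BorelSpace ℤ_[p] := ⟨rfl⟩

/-- Coefficientwise congruence `f ≡ g (mod p^j V(ℤ_p))`. -/
def CongMod (p : ℕ) [Fact p.Prime] (j : ℕ) (f g : BQ ℤ_[p]) : Prop :=
  (p : ℤ_[p]) ^ j ∣ (f.a - g.a) ∧ (p : ℤ_[p]) ^ j ∣ (f.b - g.b) ∧
  (p : ℤ_[p]) ^ j ∣ (f.c - g.c) ∧ (p : ℤ_[p]) ^ j ∣ (f.d - g.d) ∧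
  (p : ℤ_[p]) ^ j ∣ (f.e - g.e)

/-- `ψ k` is an approximating series for `φ_p`: `ψ 0 ≡ 1`, each `|ψ k| ≤ 1`, each `ψ k`
is periodic modulo `p^{2k}`, and `Σ_k ψ k f = φ_p f` with absolute convergence whenever
`Δ(f) ≠ 0`. -/
def ApproxSeries (p : ℕ) [Fact p.Prime] (φp : BQ ℤ_[p] → ℝ) (ψ : ℕ → BQ ℤ_[p] → ℝ) :
    Prop :=
  (∀ f, ψ 0 f = 1) ∧
  (∀ k f, |ψ k f| ≤ 1) ∧
  (∀ f : BQ ℤ_[p], f.disc ≠ 0 →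
    Summable (fun k => |ψ k f|) ∧ HasSum (fun k => ψ k f) (φp f)) ∧
  (∀ (k : ℕ) (f g : BQ ℤ_[p]), CongMod p (2 * k) f g → ψ k f = ψ k g)

/-- The support condition: `ψ k` is supported on forms with `p^{2k−c} ∣ Δ(f)`.
With `c = 0` this is the support condition of "well approximated"; with some `c = O(1)`
it is that of "almost well approximated". -/
def SupportBound (p : ℕ) [Fact p.Prime] (ψ : ℕ → BQ ℤ_[p] → ℝ) (c : ℕ) : Prop :=
  ∀ (k : ℕ) (f : BQ ℤ_[p]), ψ k f ≠ 0 → (p : ℤ_[p]) ^ (2 * k) ∣ (p : ℤ_[p]) ^ c * f.disc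

/-- Strong invariance of the approximating functions: invariance under the twisted
action of `PGL₂(ℤ_p)` and under multiplication by squares of units. -/
def StronglyInvariantFamily (p : ℕ) [Fact p.Prime] (ψ : ℕ → BQ ℤ_[p] → ℝ) : Prop :=
  ∀ k : ℕ,
    (∀ m : Mat2 ℤ_[p], IsUnit m.det → ∀ f, ψ k (f.twist m) = ψ k f) ∧
    (∀ t : ℤ_[p], IsUnit t → ∀ f, ψ k (f.rsmul (t ^ 2)) = ψ k f)

/-- `ν_a(φ) = ∏_p ∫_{V_a(ℤ_p)} φ_p`, the product over all primes of the average of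
`φ_p` over forms with leading coefficient `a` (with respect to the given Haar
probability measures on `V_a(ℤ_p) ≅ ℤ_p⁴`). -/
def nuA (φp : (p : Nat.Primes) → BQ ℤ_[(p : ℕ)] → ℝ)
    (μ : (p : Nat.Primes) → Measure (Fin 4 → ℤ_[(p : ℕ)])) (a : ℤ) : ℝ :=
  ∏' p : Nat.Primes,
    ∫ v, φp p ⟨(a : ℤ_[(p : ℕ)]), v 0, v 1, v 2, v 3⟩ ∂(μ p)

/-- The Dirichlet series `D^{±}(φ,s) = Σ_{a ≥ 1} ν_{±a}(φ)/a^s` (the sign chosen by the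
boolean). -/
def Dseries (φp : (p : Nat.Primes) → BQ ℤ_[(p : ℕ)] → ℝ)
    (μ : (p : Nat.Primes) → Measure (Fin 4 → ℤ_[(p : ℕ)])) (sgn : Bool) (s : ℂ) : ℂ :=
  ∑' n : ℕ,
    (nuA φp μ (if sgn then ((n : ℤ) + 1) else -((n : ℤ) + 1)) : ℂ) / ((n : ℂ) + 1) ^ s

/-!
Write `E_p(a)` for the local factor `∫ φ_p` over `V_a(ℤ_p)`, so that `ν_a(φ) = ∏_p E_p(a)`. Since
`φ_p - 1` is a sum of functions `ψ^(k)` supported on `p^(2k) ∣ Δ`, the difference `E_p(a) - 1` is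
bounded by the densities of these conditions: it is `O(1/p)`, and even `O(1/p²)` if `p² ∤ a`.

The factor `E_p(p^j u)`, with `p ∤ u`, depends only on `j` and on `u` modulo `p` (modulo `32` if
`p = 2`), because `diag(t, t⁻¹)` carries `V_a` to `V_{t⁴a}`. The `SL₂(ℤ_p)`-invariance this needs
comes from the `SL₂(ℤ)`-invariance of `φ`: a form over `ℤ_p` is approximated by an integral form
whose discriminant is not divisible by `q²` for any prime `q` outside a finite set, so that `φ_q` is
`1` there, and the substitution is approximated by one in `SL₂(ℤ)`.

Expanding the product, `ν` is a sum of functions bounded by `B`, supported on the multiples of `n`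
and periodic along them with period `Q`. The summatory function of each is linear up to
`O(B n^(-σ) Q^(1-σ) N^σ)` for `0 ≤ σ ≤ 1`. The sum of these weights is an Euler product in which
`p` contributes `p^(1-σ) (p^(-2) + p^(-2-σ) + p^(-1-2σ) + ⋯)`, of order `p^(-3σ)` for `σ ≤ 1/2`; it
converges for `σ > 1/3`. A summatory function `c N + O(N^σ)` gives the continuation to `Re s > σ`.
-/

open Filter Topology Asymptotics

section PowerSaving

/-- The error term `∑_{k ≤ t} f k - c t`, cut off to `t > 1` so that its Mellin transform converges
at `0`. -/
def meanError (f : ℕ → ℂ) (c : ℂ) : ℝ → ℂ :=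
  (Set.Ioi 1).indicator fun t ↦ ∑ k ∈ Finset.Icc 1 ⌊t⌋₊, f k - c * t

lemma locallyIntegrableOn_meanError (f : ℕ → ℂ) (c : ℂ) :
    LocallyIntegrableOn (meanError f c) (Set.Ioi 0) := by
  have hconst : LocallyIntegrableOn (fun _ : ℝ ↦ (1 : ℂ)) (Set.Ici 0) :=
    (locallyIntegrable_const 1).locallyIntegrableOn _
  have hsum := locallyIntegrableOn_mul_sum_Icc (m := 1) f le_rfl hconst
  have hlin : LocallyIntegrableOn (fun t : ℝ ↦ c * t) (Set.Ici 0) :=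
    (Continuous.locallyIntegrable (by fun_prop)).locallyIntegrableOn _
  simp only [one_mul] at hsum
  intro t ht
  obtain ⟨u, hu, hint⟩ := (hsum.sub hlin).mono_set Set.Ioi_subset_Ici_self t ht
  exact ⟨u, hu, hint.indicator measurableSet_Ioi⟩

lemma meanError_isBigO_atTop {f : ℕ → ℂ} {c : ℂ} {σ : ℝ} (hσ : 0 ≤ σ)
    (hO : (fun n : ℕ ↦ ∑ k ∈ Finset.Icc 1 n, f k - c * n) =O[atTop] fun n ↦ (n : ℝ) ^ σ) :
    meanError f c =O[atTop] fun t ↦ t ^ σ := by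
  have hfloor : (fun t : ℝ ↦ ∑ k ∈ Finset.Icc 1 ⌊t⌋₊, f k - c * (⌊t⌋₊ : ℂ)) =O[atTop]
      fun t ↦ t ^ σ := by
    refine (hO.comp_tendsto tendsto_nat_floor_atTop).trans (IsBigO.of_bound 1 ?_)
    filter_upwards [eventually_ge_atTop 0] with t ht
    rw [one_mul, Function.comp_apply, Real.norm_of_nonneg (by positivity),
      Real.norm_of_nonneg (by positivity)]
    exact Real.rpow_le_rpow (by positivity) (Nat.floor_le ht) hσ
  have hfract : (fun t : ℝ ↦ c * (⌊t⌋₊ - t : ℂ)) =O[atTop] fun t ↦ t ^ σ := by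
    refine IsBigO.of_bound ‖c‖ ?_
    filter_upwards [eventually_ge_atTop 1] with t ht
    have hfloor_sub : ‖(⌊t⌋₊ - t : ℂ)‖ ≤ 1 := by
      rw [← Complex.ofReal_natCast, ← Complex.ofReal_sub, Complex.norm_real, Real.norm_eq_abs,
        abs_le]
      constructor <;> linarith [Nat.lt_floor_add_one t, Nat.floor_le (zero_le_one.trans ht)]
    rw [norm_mul, Real.norm_of_nonneg (by positivity)]
    gcongr
    exact hfloor_sub.trans (Real.one_le_rpow ht hσ)
  refine (hfloor.add hfract).congr' ?_ EventuallyEq.rfl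
  filter_upwards [eventually_gt_atTop 1] with t ht
  rw [meanError, Set.indicator_of_mem (Set.mem_Ioi.2 ht)]
  ring

lemma meanError_isBigO_nhdsGT_zero (f : ℕ → ℂ) (c : ℂ) (b : ℝ) :
    meanError f c =O[𝓝[>] 0] fun t ↦ t ^ b := by
  refine (isBigO_zero _ _).congr' ?_ EventuallyEq.rfl
  filter_upwards [Ioo_mem_nhdsGT one_pos] with t ht
  exact (Set.indicator_of_notMem (by simpa using ht.2.le) _).symm

lemma mellin_meanError_neg {f : ℕ → ℂ} {c : ℂ} {σ : ℝ} (hσ : 0 ≤ σ) (hσ1 : σ < 1)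
    (hO : (fun n : ℕ ↦ ∑ k ∈ Finset.Icc 1 n, f k - c * n) =O[atTop] fun n ↦ (n : ℝ) ^ σ)
    {s : ℂ} (hs : 1 < s.re) :
    (∫ t in Set.Ioi (1 : ℝ), (∑ k ∈ Finset.Icc 1 ⌊t⌋₊, f k) * (t : ℂ) ^ (-(s + 1))) =
      mellin (meanError f c) (-s) + c / (s - 1) := by
  have hconv : MellinConvergent (meanError f c) (-s) :=
    mellinConvergent_of_isBigO_rpow (locallyIntegrableOn_meanError f c) (a := -σ)
      (by simpa using meanError_isBigO_atTop hσ hO) (by simp; linarith)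
      (meanError_isBigO_nhdsGT_zero f c (-(-s.re - 1))) (by simp)
  have hre : (-s).re < -1 := by simpa using hs
  have hindicator : (fun t : ℝ ↦ (t : ℂ) ^ (-s - 1) • meanError f c t) = (Set.Ioi (1 : ℝ)).indicator
      fun t ↦ (t : ℂ) ^ (-s - 1) * (∑ k ∈ Finset.Icc 1 ⌊t⌋₊, f k - c * t) := by
    ext t
    simp only [meanError, Set.indicator_apply, smul_eq_mul, mul_ite, mul_zero]
  have hIoi : Set.Ioi (1 : ℝ) ∩ Set.Ioi 0 = Set.Ioi 1 := by
    rw [Set.Ioi_inter_Ioi, sup_of_le_left zero_le_one]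
  rw [MellinConvergent, hindicator, IntegrableOn, integrable_indicator_iff measurableSet_Ioi,
    IntegrableOn, Measure.restrict_restrict measurableSet_Ioi, hIoi] at hconv
  have hpow : (∫ t in Set.Ioi (1 : ℝ), c * (t : ℂ) ^ (-s)) = c / (s - 1) := by
    rw [integral_const_mul, integral_Ioi_cpow_of_lt hre one_pos, Complex.ofReal_one,
      Complex.one_cpow, show -s + 1 = -(s - 1) by ring, neg_div_neg_eq, mul_one_div]
  rw [mellin, hindicator, integral_indicator measurableSet_Ioi,
    Measure.restrict_restrict measurableSet_Ioi, hIoi, ← hpow, ← integral_add hconv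
    ((integrableOn_Ioi_cpow_of_lt hre one_pos).const_mul c)]
  refine setIntegral_congr_fun measurableSet_Ioi fun t ht ↦ ?_
  have ht0 : (t : ℂ) ≠ 0 := Complex.ofReal_ne_zero.2 (one_pos.trans ht).ne'
  have hshift : (t : ℂ) ^ (-s) = (t : ℂ) ^ (-s - 1) * t := by
    rw [Complex.cpow_sub _ _ ht0, Complex.cpow_one, div_mul_cancel₀ _ ht0]
  simp only [hshift, show -(s + 1) = -s - 1 by ring]
  ring

theorem exists_differentiableOn_LSeries_eq_add_div {f : ℕ → ℂ} {c : ℂ} {θ : ℝ} (hθ : 0 ≤ θ)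
    (hθ1 : θ < 1) (hf : ∀ s : ℂ, 1 < s.re → LSeriesSummable f s)
    (hO : ∀ᶠ σ in 𝓝[>] θ,
      (fun n : ℕ ↦ ∑ k ∈ Finset.Icc 1 n, f k - c * n) =O[atTop] fun n ↦ (n : ℝ) ^ σ) :
    ∃ G : ℂ → ℂ, DifferentiableOn ℂ G {s | θ < s.re} ∧
      ∀ s : ℂ, 1 < s.re → LSeries f s = G s + c / (s - 1) := by
  have hexp : ∀ x > θ, ∃ σ, θ < σ ∧ σ < x ∧
      (fun n : ℕ ↦ ∑ k ∈ Finset.Icc 1 n, f k - c * n) =O[atTop] fun n ↦ (n : ℝ) ^ σ := by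
    intro x hx
    obtain ⟨σ, hσO, hσ⟩ := (hO.and (Ioo_mem_nhdsGT hx)).exists
    exact ⟨σ, hσ.1, hσ.2, hσO⟩
  refine ⟨fun s ↦ c + s * mellin (meanError f c) (-s), fun s hs ↦ ?_, fun s hs ↦ ?_⟩
  · obtain ⟨σ, hθσ, hσs, hσO⟩ := hexp s.re hs
    have hmellin : DifferentiableAt ℂ (mellin (meanError f c)) (-s) :=
      mellin_differentiableAt_of_isBigO_rpow (locallyIntegrableOn_meanError f c) (a := -σ)
        (by simpa using meanError_isBigO_atTop (hθ.trans hθσ.le) hσO) (by simpa using hσs)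
        (meanError_isBigO_nhdsGT_zero f c (-(-s.re - 1))) (by simp)
    exact ((differentiableAt_id.mul
      (hmellin.comp s differentiableAt_id.neg)).const_add c).differentiableWithinAt
  · obtain ⟨σ, hθσ, hσ1, hσO⟩ := hexp 1 hθ1
    have hS : (fun n : ℕ ↦ ∑ k ∈ Finset.Icc 1 n, f k) =O[atTop] fun n ↦ (n : ℝ) ^ (1 : ℝ) := by
      have hlin : (fun n : ℕ ↦ c * n) =O[atTop] fun n ↦ (n : ℝ) ^ (1 : ℝ) :=
        IsBigO.of_bound ‖c‖ (Eventually.of_forall fun n ↦ by simp)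
      have hσ' : (fun n : ℕ ↦ (n : ℝ) ^ σ) =O[atTop] fun n ↦ (n : ℝ) ^ (1 : ℝ) :=
        IsBigO.of_bound' <| (eventually_ge_atTop 1).mono fun n hn ↦ by
          rw [Real.norm_of_nonneg (by positivity), Real.norm_of_nonneg (by positivity)]
          exact Real.rpow_le_rpow_of_exponent_le (by exact_mod_cast hn) hσ1.le
      exact ((hσO.trans hσ').add hlin).congr_left fun n ↦ sub_add_cancel _ _
    have hs1 : s - 1 ≠ 0 := fun h ↦ by simp [sub_eq_zero.1 h] at hs
    rw [LSeries_eq_mul_integral f zero_le_one hs (hf s hs) hS,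
      mellin_meanError_neg (hθ.trans hθσ.le) hσ1 hσO hs]
    field_simp
    ring

lemma LSeries_term_succ (f : ℕ → ℂ) (s : ℂ) (n : ℕ) :
    LSeries.term f s (n + 1) = f (n + 1) / ((n : ℂ) + 1) ^ s := by
  rw [LSeries.term_of_ne_zero n.succ_ne_zero, Nat.cast_succ]

lemma tsum_div_cpow_eq_LSeries (f : ℕ → ℂ) (s : ℂ) :
    ∑' n : ℕ, f (n + 1) / ((n : ℂ) + 1) ^ s = LSeries f s := by
  simp_rw [← LSeries_term_succ f s]
  refine (add_left_injective 1).tsum_eq (f := LSeries.term f s) fun n hn ↦ ?_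
  refine ⟨n - 1, Nat.sub_add_cancel (Nat.one_le_iff_ne_zero.2 ?_)⟩
  rintro rfl
  exact hn (LSeries.term_zero f s)

end PowerSaving

section PeriodicSums

/-- The average of `g` over one period `{1, …, Q}`. -/
def periodMean (g : ℕ → ℝ) (Q : ℕ) : ℝ := (∑ u ∈ Finset.Icc 1 Q, g u) / Q

variable {g : ℕ → ℝ} {Q : ℕ} {B : ℝ}

lemma abs_sum_Icc_le (hB : ∀ u, |g u| ≤ B) (n : ℕ) : |∑ u ∈ Finset.Icc 1 n, g u| ≤ n * B := by
  refine (Finset.abs_sum_le_sum_abs _ _).trans ((Finset.sum_le_sum fun u _ ↦ hB u).trans_eq ?_)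
  rw [Finset.sum_const, Nat.card_Icc, Nat.add_sub_cancel, nsmul_eq_mul]

lemma abs_periodMean_le (hQ : 0 < Q) (hB : ∀ u, |g u| ≤ B) : |periodMean g Q| ≤ B := by
  have hQ' : (0 : ℝ) < Q := Nat.cast_pos.2 hQ
  rw [periodMean, abs_div, Nat.abs_cast, div_le_iff₀ hQ', mul_comm]
  exact abs_sum_Icc_le hB Q

lemma sum_Icc_eq_sum_range_succ (g : ℕ → ℝ) (n : ℕ) :
    ∑ u ∈ Finset.Icc 1 n, g u = ∑ u ∈ Finset.range n, g (u + 1) := by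
  rw [Finset.range_eq_Ico, Finset.sum_Ico_add' g 0 n 1, zero_add, Finset.Ico_add_one_right_eq_Icc]

lemma sum_Icc_mul_add_of_periodic (hg : Function.Periodic g Q) (q r : ℕ) :
    ∑ u ∈ Finset.Icc 1 (Q * q + r), g u =
      q * ∑ u ∈ Finset.Icc 1 Q, g u + ∑ u ∈ Finset.Icc 1 r, g u := by
  have hshift : ∀ q u : ℕ, g (Q * q + u + 1) = g (u + 1) := fun q u ↦ by
    simpa [show Q * q + u + 1 = u + 1 + q * Q by ring] using hg.nat_mul q (u + 1)
  simp only [sum_Icc_eq_sum_range_succ, Finset.sum_range_add, hshift]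
  congr 1
  induction q with
  | zero => simp
  | succ q ih =>
    rw [Nat.mul_succ, Finset.sum_range_add, ih]
    simp only [hshift, Nat.cast_succ]
    ring

lemma abs_sum_Icc_floor_sub_le_mul_period (hQ : 0 < Q) (hg : Function.Periodic g Q)
    (hB : ∀ u, |g u| ≤ B) {y : ℝ} (hy : 0 ≤ y) :
    |∑ u ∈ Finset.Icc 1 ⌊y⌋₊, g u - y * periodMean g Q| ≤ 2 * B * Q := by
  set q := ⌊y⌋₊ / Q
  set r := ⌊y⌋₊ % Q
  have hB0 : 0 ≤ B := (abs_nonneg _).trans (hB 0)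
  have hperiod : ∑ u ∈ Finset.Icc 1 Q, g u = Q * periodMean g Q :=
    (mul_div_cancel₀ _ (Nat.cast_ne_zero.2 hQ.ne')).symm
  have hdiv : ⌊y⌋₊ = Q * q + r := (Nat.div_add_mod _ _).symm
  have hr : (r : ℝ) + 1 ≤ Q := by exact_mod_cast Nat.mod_lt ⌊y⌋₊ hQ
  have hfloor : (⌊y⌋₊ : ℝ) = Q * q + r := by exact_mod_cast hdiv
  have hy0 : 0 ≤ y - Q * q := by
    linarith [Nat.floor_le hy, (Nat.cast_nonneg r : (0 : ℝ) ≤ r)]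
  have hyQ : y - Q * q ≤ Q := by linarith [Nat.lt_floor_add_one y]
  have hsplit : ∑ u ∈ Finset.Icc 1 ⌊y⌋₊, g u - y * periodMean g Q =
      ∑ u ∈ Finset.Icc 1 r, g u - (y - Q * q) * periodMean g Q := by
    rw [hdiv, sum_Icc_mul_add_of_periodic hg, hperiod]
    ring
  rw [hsplit]
  calc |∑ u ∈ Finset.Icc 1 r, g u - (y - Q * q) * periodMean g Q|
      ≤ r * B + (y - Q * q) * B := by
        refine (abs_sub _ _).trans (add_le_add (abs_sum_Icc_le hB r) ?_)
        rw [abs_mul, abs_of_nonneg hy0]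
        exact mul_le_mul_of_nonneg_left (abs_periodMean_le hQ hB) hy0
    _ ≤ Q * B + Q * B := by
        gcongr
        exact (Nat.mod_lt _ hQ).le
    _ = 2 * B * Q := by ring

lemma abs_sum_Icc_floor_sub_le_mul_self (hQ : 0 < Q) (hB : ∀ u, |g u| ≤ B) {y : ℝ} (hy : 0 ≤ y) :
    |∑ u ∈ Finset.Icc 1 ⌊y⌋₊, g u - y * periodMean g Q| ≤ 2 * B * y := by
  have hB0 : 0 ≤ B := (abs_nonneg _).trans (hB 0)
  calc |∑ u ∈ Finset.Icc 1 ⌊y⌋₊, g u - y * periodMean g Q|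
      ≤ ⌊y⌋₊ * B + y * B := by
        refine (abs_sub _ _).trans (add_le_add (abs_sum_Icc_le hB _) ?_)
        rw [abs_mul, abs_of_nonneg hy]
        exact mul_le_mul_of_nonneg_left (abs_periodMean_le hQ hB) hy
    _ ≤ y * B + y * B := by gcongr; exact Nat.floor_le hy
    _ = 2 * B * y := by ring

lemma abs_sum_Icc_floor_sub_le (hQ : 0 < Q) (hg : Function.Periodic g Q) (hB : ∀ u, |g u| ≤ B)
    {y σ : ℝ} (hy : 0 ≤ y) (hσ0 : 0 ≤ σ) (hσ1 : σ ≤ 1) :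
    |∑ u ∈ Finset.Icc 1 ⌊y⌋₊, g u - y * periodMean g Q| ≤
      2 * B * ((Q : ℝ) ^ (1 - σ) * y ^ σ) := by
  have hB0 : 0 ≤ B := (abs_nonneg _).trans (hB 0)
  set m := min (Q : ℝ) y
  have hm0 : 0 ≤ m := le_min (Nat.cast_nonneg Q) hy
  have hle : |∑ u ∈ Finset.Icc 1 ⌊y⌋₊, g u - y * periodMean g Q| ≤ 2 * B * m := by
    rw [mul_min_of_nonneg _ _ (by positivity)]
    exact le_min (abs_sum_Icc_floor_sub_le_mul_period hQ hg hB hy)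
      (abs_sum_Icc_floor_sub_le_mul_self hQ hB hy)
  refine hle.trans (mul_le_mul_of_nonneg_left ?_ (by positivity))
  calc m = m ^ (1 - σ) * m ^ σ := by
        rw [← Real.rpow_add_of_nonneg hm0 (sub_nonneg.2 hσ1) hσ0, sub_add_cancel, Real.rpow_one]
    _ ≤ (Q : ℝ) ^ (1 - σ) * y ^ σ := by
        gcongr
        · exact min_le_left _ _
        · exact min_le_right _ _

end PeriodicSums

section Superposition

/-- A function bounded by `B` that vanishes off the multiples of `n` and is `Q`-periodic along
them. -/
structure PeriodicOnMultiples (X : ℕ → ℝ) (n Q : ℕ) (B : ℝ) : Prop where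
  pos : 0 < n
  period_pos : 0 < Q
  dvd_of_ne_zero : ∀ a, X a ≠ 0 → n ∣ a
  periodic : Function.Periodic (fun u ↦ X (n * u)) Q
  abs_le : ∀ a, |X a| ≤ B

/-- The asymptotic mean value of a function that is `Q`-periodic along the multiples of `n` and
vanishes elsewhere. -/
def meanOnMultiples (X : ℕ → ℝ) (n Q : ℕ) : ℝ := periodMean (fun u ↦ X (n * u)) Q / n

variable {X : ℕ → ℝ} {n Q : ℕ} {B : ℝ}

lemma sum_Icc_eq_sum_multiples (hn : 0 < n) {F : ℕ → ℝ} (hF : ∀ a, F a ≠ 0 → n ∣ a) (N : ℕ) :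
    ∑ k ∈ Finset.Icc 1 N, F k = ∑ u ∈ Finset.Icc 1 (N / n), F (n * u) := by
  refine (Finset.sum_of_injOn (n * ·) (mul_right_injective₀ hn.ne').injOn ?_ ?_ fun _ _ ↦ rfl).symm
  · intro u hu
    simp only [Finset.coe_Icc, Set.mem_Icc] at hu ⊢
    exact ⟨Nat.one_le_iff_ne_zero.2 (mul_ne_zero hn.ne' (by omega)),
      (Nat.mul_le_mul_left n hu.2).trans (Nat.mul_div_le N n)⟩
  · intro k hk hnot
    by_contra hne
    obtain ⟨u, rfl⟩ := hF k hne
    rw [Finset.mem_Icc] at hk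
    refine hnot ⟨u, ?_, rfl⟩
    rw [Finset.coe_Icc, Set.mem_Icc, Nat.le_div_iff_mul_le hn, mul_comm u]
    exact ⟨Nat.one_le_iff_ne_zero.2 (by rintro rfl; simp at hk), hk.2⟩

namespace PeriodicOnMultiples

lemma bound_nonneg (h : PeriodicOnMultiples X n Q B) : 0 ≤ B := (abs_nonneg _).trans (h.abs_le 0)

lemma sum_abs_le (h : PeriodicOnMultiples X n Q B) (N : ℕ) :
    ∑ k ∈ Finset.Icc 1 N, |X k| ≤ N * (B / n) := by
  have hB := h.bound_nonneg
  rw [sum_Icc_eq_sum_multiples h.pos fun a ha ↦ h.dvd_of_ne_zero a (abs_ne_zero.1 ha)]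
  calc ∑ u ∈ Finset.Icc 1 (N / n), |X (n * u)| ≤ (N / n : ℕ) * B :=
        (le_abs_self _).trans (abs_sum_Icc_le (fun u ↦ (abs_abs _).trans_le (h.abs_le _)) _)
    _ ≤ N / n * B := by gcongr; exact Nat.cast_div_le
    _ = N * (B / n) := by ring

lemma abs_meanOnMultiples_le (h : PeriodicOnMultiples X n Q B) :
    |meanOnMultiples X n Q| ≤ B / n := by
  rw [meanOnMultiples, abs_div, Nat.abs_cast]
  gcongr
  exact abs_periodMean_le h.period_pos fun u ↦ h.abs_le _

lemma abs_sum_sub_le (h : PeriodicOnMultiples X n Q B) (N : ℕ) {σ : ℝ} (hσ0 : 0 ≤ σ)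
    (hσ1 : σ ≤ 1) :
    |∑ k ∈ Finset.Icc 1 N, X k - N * meanOnMultiples X n Q| ≤
      2 * (N : ℝ) ^ σ * (B * (n : ℝ) ^ (-σ) * (Q : ℝ) ^ (1 - σ)) := by
  have hbound := abs_sum_Icc_floor_sub_le h.period_pos h.periodic (fun u ↦ h.abs_le _)
    (div_nonneg N.cast_nonneg n.cast_nonneg) hσ0 hσ1
  rw [Nat.floor_div_natCast, Nat.floor_natCast] at hbound
  rw [sum_Icc_eq_sum_multiples h.pos h.dvd_of_ne_zero, meanOnMultiples, ← mul_div_assoc,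
    mul_div_right_comm]
  refine hbound.trans_eq ?_
  rw [Real.div_rpow N.cast_nonneg n.cast_nonneg, Real.rpow_neg n.cast_nonneg]
  ring

lemma div_le_weight (h : PeriodicOnMultiples X n Q B) {σ : ℝ} (hσ1 : σ ≤ 1) :
    B / n ≤ B * (n : ℝ) ^ (-σ) * (Q : ℝ) ^ (1 - σ) := by
  have hB := h.bound_nonneg
  have hQ : (1 : ℝ) ≤ (Q : ℝ) ^ (1 - σ) :=
    Real.one_le_rpow (by exact_mod_cast h.period_pos) (sub_nonneg.2 hσ1)
  have hn : (n : ℝ)⁻¹ ≤ (n : ℝ) ^ (-σ) := by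
    rw [← Real.rpow_neg_one]
    exact Real.rpow_le_rpow_of_exponent_le (by exact_mod_cast h.pos) (neg_le_neg hσ1)
  calc B / n = B * (n : ℝ)⁻¹ * 1 := by rw [mul_one, div_eq_mul_inv]
    _ ≤ B * (n : ℝ) ^ (-σ) * (Q : ℝ) ^ (1 - σ) := by gcongr

end PeriodicOnMultiples

variable {ι : Type*} {X : ι → ℕ → ℝ} {n Q : ι → ℕ} {B : ι → ℝ} {ν : ℕ → ℝ}

section Sum

variable (h : ∀ i, PeriodicOnMultiples (X i) (n i) (Q i) (B i))
  (hν : ∀ a, a ≠ 0 → HasSum (fun i ↦ X i a) (ν a))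

include hν in
lemma hasSum_sum_Icc (N : ℕ) :
    HasSum (fun i ↦ ∑ k ∈ Finset.Icc 1 N, X i k) (∑ k ∈ Finset.Icc 1 N, ν k) :=
  hasSum_sum fun k hk ↦ hν k (Nat.one_le_iff_ne_zero.1 (Finset.mem_Icc.1 hk).1)

include h hν in
lemma sum_abs_le_of_hasSum (hsum : Summable fun i ↦ B i / n i) (N : ℕ) :
    ∑ k ∈ Finset.Icc 1 N, |ν k| ≤ N * ∑' i, B i / n i := by
  have hpartial : ∀ S : Finset ι, ∑ k ∈ Finset.Icc 1 N, |∑ i ∈ S, X i k| ≤ N * ∑' i, B i / n i := by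
    intro S
    calc ∑ k ∈ Finset.Icc 1 N, |∑ i ∈ S, X i k|
        ≤ ∑ k ∈ Finset.Icc 1 N, ∑ i ∈ S, |X i k| :=
          Finset.sum_le_sum fun k _ ↦ Finset.abs_sum_le_sum_abs _ _
      _ = ∑ i ∈ S, ∑ k ∈ Finset.Icc 1 N, |X i k| := Finset.sum_comm
      _ ≤ ∑ i ∈ S, N * (B i / n i) := Finset.sum_le_sum fun i _ ↦ (h i).sum_abs_le N
      _ = N * ∑ i ∈ S, B i / n i := (Finset.mul_sum _ _ _).symm
      _ ≤ N * ∑' i, B i / n i := by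
          gcongr
          exact hsum.sum_le_tsum S fun i _ ↦ div_nonneg (h i).bound_nonneg (Nat.cast_nonneg _)
  refine le_of_tendsto (x := atTop) (tendsto_finsetSum _ fun k hk ↦ ?_)
    (Eventually.of_forall hpartial)
  exact (hν k (Nat.one_le_iff_ne_zero.1 (Finset.mem_Icc.1 hk).1)).abs

include h hν in
lemma abs_sum_sub_mean_le_of_hasSum {σ : ℝ} (hσ0 : 0 ≤ σ) (hσ1 : σ ≤ 1)
    (hw : Summable fun i ↦ B i * (n i : ℝ) ^ (-σ) * (Q i : ℝ) ^ (1 - σ)) (N : ℕ) :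
    |∑ k ∈ Finset.Icc 1 N, ν k - N * ∑' i, meanOnMultiples (X i) (n i) (Q i)| ≤
      2 * (N : ℝ) ^ σ * ∑' i, B i * (n i : ℝ) ^ (-σ) * (Q i : ℝ) ^ (1 - σ) := by
  have hmean : Summable fun i ↦ meanOnMultiples (X i) (n i) (Q i) :=
    Summable.of_norm_bounded hw fun i ↦
      (h i).abs_meanOnMultiples_le.trans ((h i).div_le_weight hσ1)
  have herror := (hasSum_sum_Icc hν N).sub (hmean.hasSum.mul_left (N : ℝ))
  rw [← herror.tsum_eq, ← Real.norm_eq_abs]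
  exact tsum_of_norm_bounded (hw.hasSum.mul_left (2 * (N : ℝ) ^ σ))
    fun i ↦ (h i).abs_sum_sub_le N hσ0 hσ1

end Sum

/-- The Dirichlet series of `ν` converges absolutely on `1 < re s` and extends to a meromorphic
function on `θ < re s` with at most a simple pole, at `s = 1`. -/
def HasLSeriesContinuation (ν : ℕ → ℝ) (θ : ℝ) : Prop :=
  (∀ s : ℂ, 1 < s.re → LSeriesSummable (fun a ↦ (ν a : ℂ)) s) ∧
    ∃ (G : ℂ → ℂ) (r : ℂ), DifferentiableOn ℂ G {s | θ < s.re} ∧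
      ∀ s : ℂ, 1 < s.re → LSeries (fun a ↦ (ν a : ℂ)) s = G s + r / (s - 1)

theorem hasLSeriesContinuation_of_hasSum_periodicOnMultiples
    (h : ∀ i, PeriodicOnMultiples (X i) (n i) (Q i) (B i))
    (hν : ∀ a, a ≠ 0 → HasSum (fun i ↦ X i a) (ν a)) {θ θ' : ℝ} (hθ : 0 ≤ θ) (hθθ' : θ < θ')
    (hθ' : θ' ≤ 1)
    (hw : ∀ σ, θ < σ → σ < θ' →
      Summable fun i ↦ B i * (n i : ℝ) ^ (-σ) * (Q i : ℝ) ^ (1 - σ)) :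
    HasLSeriesContinuation ν θ := by
  have hsummable : ∀ s : ℂ, 1 < s.re → LSeriesSummable (fun a ↦ (ν a : ℂ)) s := by
    intro s hs
    obtain ⟨σ, hθσ, hσθ'⟩ := exists_between hθθ'
    have hdiv : Summable fun i ↦ B i / n i :=
      (hw σ hθσ hσθ').of_nonneg_of_le
        (fun i ↦ div_nonneg (h i).bound_nonneg (Nat.cast_nonneg _))
        fun i ↦ (h i).div_le_weight (hσθ'.le.trans hθ')
    refine LSeriesSummable_of_sum_norm_bigO (IsBigO.of_bound (∑' i, B i / n i) ?_) zero_le_one hs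
    refine Eventually.of_forall fun N ↦ ?_
    simp only [Complex.norm_real, Real.norm_eq_abs, Real.rpow_one, Nat.abs_cast]
    rw [abs_of_nonneg (Finset.sum_nonneg fun _ _ ↦ abs_nonneg _), mul_comm]
    exact sum_abs_le_of_hasSum h hν hdiv N
  refine ⟨hsummable, ?_⟩
  set c : ℝ := ∑' i, meanOnMultiples (X i) (n i) (Q i) with hc
  obtain ⟨G, hG, hLG⟩ := exists_differentiableOn_LSeries_eq_add_div (c := c) hθ
    (hθθ'.trans_le hθ') hsummable <| by
      filter_upwards [Ioo_mem_nhdsGT hθθ'] with σ hσ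
      refine IsBigO.of_bound (2 * ∑' i, B i * (n i : ℝ) ^ (-σ) * (Q i : ℝ) ^ (1 - σ)) ?_
      refine Eventually.of_forall fun N ↦ ?_
      have hN := abs_sum_sub_mean_le_of_hasSum h hν (hθ.trans hσ.1.le) (hσ.2.le.trans hθ')
        (hw σ hσ.1 hσ.2) N
      rw [Real.norm_of_nonneg (by positivity), mul_right_comm]
      rw [← hc, ← Real.norm_eq_abs, ← Complex.norm_real, mul_comm (N : ℝ)] at hN
      exact_mod_cast hN
  exact ⟨G, c, hG, hLG⟩

end Superposition

section LocalFactors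

/-- Conditions on local factors `E p a` making `∏ p, E p a` a superposition of functions periodic
along multiples: on the integers exactly divisible by `p ^ j` the factor `E p` differs from `1` by
at most `b p j` and depends only on the cofactor modulo `Q p`. -/
structure LocallyPeriodicFactors (E : Nat.Primes → ℕ → ℝ) (Q : Nat.Primes → ℕ)
    (b : Nat.Primes → ℕ → ℝ) : Prop where
  period_pos : ∀ p, 0 < Q p
  dvd_period : ∀ p : Nat.Primes, (p : ℕ) ∣ Q p
  bound_nonneg : ∀ p j, 0 ≤ b p j
  abs_sub_one_le : ∀ (p : Nat.Primes) (j a : ℕ), (p : ℕ) ^ j ∣ a → ¬(p : ℕ) ^ (j + 1) ∣ a →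
    |E p a - 1| ≤ b p j
  periodic : ∀ (p : Nat.Primes) (j u u' : ℕ), ¬(p : ℕ) ∣ u → u ≡ u' [MOD Q p] →
    E p ((p : ℕ) ^ j * u) = E p ((p : ℕ) ^ j * u')

open Classical in
/-- The deviation `E p a - 1`, for `i = (p, j)`, restricted to those `a` exactly divisible by
`p ^ j`. -/
def localIncrement (E : Nat.Primes → ℕ → ℝ) (i : Nat.Primes × ℕ) (a : ℕ) : ℝ :=
  if (i.1 : ℕ) ^ i.2 ∣ a ∧ ¬(i.1 : ℕ) ^ (i.2 + 1) ∣ a then E i.1 a - 1 else 0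

/-- The term indexed by `T` in the expansion of `∏ p, E p a` into products of local increments. -/
def incrementProd (E : Nat.Primes → ℕ → ℝ) (T : Finset (Nat.Primes × ℕ)) (a : ℕ) : ℝ :=
  ∏ i ∈ T, localIncrement E i a

/-- The product of the prime powers `p ^ j` with `(p, j) ∈ T`. -/
def primePowerProd (T : Finset (Nat.Primes × ℕ)) : ℕ := ∏ i ∈ T, (i.1 : ℕ) ^ i.2

variable {E : Nat.Primes → ℕ → ℝ} {Q : Nat.Primes → ℕ} {b : Nat.Primes → ℕ → ℝ}

lemma exactDvd_of_localIncrement_ne_zero {i : Nat.Primes × ℕ} {a : ℕ}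
    (h : localIncrement E i a ≠ 0) : (i.1 : ℕ) ^ i.2 ∣ a ∧ ¬(i.1 : ℕ) ^ (i.2 + 1) ∣ a := by
  by_contra hc
  exact h (if_neg hc)

lemma eq_of_exactDvd {p j k a : ℕ} (hj : p ^ j ∣ a) (hj' : ¬p ^ (j + 1) ∣ a) (hk : p ^ k ∣ a)
    (hk' : ¬p ^ (k + 1) ∣ a) : j = k :=
  le_antisymm (not_lt.1 fun h ↦ hk' ((pow_dvd_pow p h).trans hj))
    (not_lt.1 fun h ↦ hj' ((pow_dvd_pow p h).trans hk))

lemma injOn_fst_of_incrementProd_ne_zero {T : Finset (Nat.Primes × ℕ)} {a : ℕ}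
    (h : incrementProd E T a ≠ 0) : Set.InjOn Prod.fst (T : Set (Nat.Primes × ℕ)) := by
  have hT := Finset.prod_ne_zero_iff.1 h
  rintro ⟨p, j⟩ hj ⟨_, k⟩ hk rfl
  have hj' := exactDvd_of_localIncrement_ne_zero (hT _ hj)
  have hk' := exactDvd_of_localIncrement_ne_zero (hT _ hk)
  exact Prod.ext rfl (eq_of_exactDvd hj'.1 hj'.2 hk'.1 hk'.2)

lemma coprime_of_injOn_fst {T : Finset (Nat.Primes × ℕ)}
    (hT : Set.InjOn Prod.fst (T : Set (Nat.Primes × ℕ))) {i k : Nat.Primes × ℕ} (hi : i ∈ T)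
    (hk : k ∈ T) (hne : i ≠ k) : Nat.Coprime i.1 k.1 :=
  (Nat.coprime_primes i.1.2 k.1.2).2 fun h ↦ hne (hT hi hk (Subtype.ext h))

lemma primePowerProd_dvd_of_incrementProd_ne_zero {T : Finset (Nat.Primes × ℕ)} {a : ℕ}
    (h : incrementProd E T a ≠ 0) : primePowerProd T ∣ a := by
  have hinj := injOn_fst_of_incrementProd_ne_zero h
  have hT := Finset.prod_ne_zero_iff.1 h
  refine Finset.prod_dvd_of_isRelPrime (fun i hi k hk hne ↦ ?_)
    fun i hi ↦ (exactDvd_of_localIncrement_ne_zero (hT i hi)).1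
  exact Nat.coprime_iff_isRelPrime.1 ((coprime_of_injOn_fst hinj hi hk hne).pow _ _)

lemma primePowerProd_pos (T : Finset (Nat.Primes × ℕ)) : 0 < primePowerProd T :=
  Finset.prod_pos fun i _ ↦ pow_pos i.1.2.pos _

lemma exists_primePowerProd_eq_mul {T : Finset (Nat.Primes × ℕ)}
    (hT : Set.InjOn Prod.fst (T : Set (Nat.Primes × ℕ))) {p : Nat.Primes} {j : ℕ}
    (hi : (p, j) ∈ T) :
    ∃ m, Nat.Coprime p m ∧ primePowerProd T = (p : ℕ) ^ j * m := by
  refine ⟨∏ k ∈ T.erase (p, j), (k.1 : ℕ) ^ k.2, Nat.Coprime.prod_right fun k hk ↦ ?_,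
    (Finset.mul_prod_erase T (fun k ↦ (k.1 : ℕ) ^ k.2) hi).symm⟩
  exact (coprime_of_injOn_fst hT hi (Finset.mem_of_mem_erase hk)
    (Finset.ne_of_mem_erase hk).symm).pow_right _

namespace LocallyPeriodicFactors

variable (h : LocallyPeriodicFactors E Q b)

include h

lemma abs_localIncrement_le (i : Nat.Primes × ℕ) (a : ℕ) :
    |localIncrement E i a| ≤ b i.1 i.2 := by
  unfold localIncrement
  split_ifs with hi
  · exact h.abs_sub_one_le _ _ _ hi.1 hi.2
  · exact abs_zero.trans_le (h.bound_nonneg _ _)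

lemma periodic_localIncrement {p : Nat.Primes} {j m N : ℕ} (hm : Nat.Coprime p m)
    (hN : Q p ∣ N) (u : ℕ) :
    localIncrement E (p, j) ((p : ℕ) ^ j * m * (u + N)) =
      localIncrement E (p, j) ((p : ℕ) ^ j * m * u) := by
  have hexact : ∀ v, (p : ℕ) ^ (j + 1) ∣ (p : ℕ) ^ j * m * v ↔ (p : ℕ) ∣ v := fun v ↦ by
    rw [pow_succ, mul_assoc, Nat.mul_dvd_mul_iff_left (pow_pos p.2.pos _), hm.dvd_mul_left]
  have hshift : (p : ℕ) ∣ u + N ↔ (p : ℕ) ∣ u := Nat.dvd_add_left ((h.dvd_period p).trans hN)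
  by_cases hu : (p : ℕ) ∣ u
  · simp only [localIncrement, hexact, hshift, hu, not_true_eq_false, and_false, if_false]
  · have hdvd : ∀ v, (p : ℕ) ^ j ∣ (p : ℕ) ^ j * m * v := fun v ↦
      (dvd_mul_right _ m).mul_right v
    simp only [localIncrement, hexact, hshift, hu, hdvd, not_false_eq_true, and_self, if_true]
    rw [mul_assoc, mul_assoc]
    refine congrArg (· - 1) (h.periodic p j _ _ (by rwa [hm.dvd_mul_left]) ?_).symm
    exact ((Nat.modEq_zero_iff_dvd.2 hN).symm.add_left u).mul_left m

lemma periodicOnMultiples_incrementProd (T : Finset (Nat.Primes × ℕ)) :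
    PeriodicOnMultiples (incrementProd E T) (primePowerProd T) (∏ i ∈ T, Q i.1)
      (∏ i ∈ T, b i.1 i.2) where
  pos := primePowerProd_pos T
  period_pos := Finset.prod_pos fun i _ ↦ h.period_pos i.1
  dvd_of_ne_zero _ := primePowerProd_dvd_of_incrementProd_ne_zero
  periodic u := by
    by_cases hT : Set.InjOn Prod.fst (T : Set (Nat.Primes × ℕ))
    · refine Finset.prod_congr rfl fun i hi ↦ ?_
      obtain ⟨m, hm, hTm⟩ := exists_primePowerProd_eq_mul hT hi
      simp only [hTm]
      exact h.periodic_localIncrement hm (Finset.dvd_prod_of_mem (fun k ↦ Q k.1) hi) u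
    · have hzero : ∀ a, incrementProd E T a = 0 := fun a ↦
        by_contra fun hne ↦ hT (injOn_fst_of_incrementProd_ne_zero hne)
      simp only [hzero]
  abs_le a := by
    rw [incrementProd, Finset.abs_prod]
    exact Finset.prod_le_prod (fun _ _ ↦ abs_nonneg _) fun i _ ↦ h.abs_localIncrement_le i a

lemma summable_localIncrement {σ : ℝ} (hσ0 : 0 ≤ σ) (hσ1 : σ ≤ 1)
    (hw : Summable fun i : Nat.Primes × ℕ ↦
      b i.1 i.2 * (((i.1 : ℕ) ^ i.2 : ℕ) : ℝ) ^ (-σ) * (Q i.1 : ℝ) ^ (1 - σ))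
    {a : ℕ} (ha : a ≠ 0) : Summable fun i ↦ ‖localIncrement E i a‖ := by
  refine (hw.mul_left ((a : ℝ) ^ σ)).of_nonneg_of_le (fun _ ↦ norm_nonneg _) fun i ↦ ?_
  have hb := h.bound_nonneg i.1 i.2
  by_cases hi : localIncrement E i a = 0
  · rw [hi, norm_zero]
    positivity
  have hpow : (0 : ℝ) < ((i.1 : ℕ) ^ i.2 : ℕ) := by exact_mod_cast pow_pos i.1.2.pos _
  have hle := Nat.le_of_dvd (Nat.pos_of_ne_zero ha) (exactDvd_of_localIncrement_ne_zero hi).1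
  have ha1 : 1 ≤ (a : ℝ) ^ σ * (((i.1 : ℕ) ^ i.2 : ℕ) : ℝ) ^ (-σ) := by
    rw [Real.rpow_neg hpow.le, ← div_eq_mul_inv, one_le_div (by positivity)]
    exact Real.rpow_le_rpow hpow.le (by exact_mod_cast hle) hσ0
  have hQ1 : 1 ≤ (Q i.1 : ℝ) ^ (1 - σ) :=
    Real.one_le_rpow (by exact_mod_cast h.period_pos i.1) (sub_nonneg.2 hσ1)
  calc ‖localIncrement E i a‖ ≤ b i.1 i.2 * 1 * 1 := by
        simpa only [mul_one, Real.norm_eq_abs] using h.abs_localIncrement_le i a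
    _ ≤ b i.1 i.2 * ((a : ℝ) ^ σ * (((i.1 : ℕ) ^ i.2 : ℕ) : ℝ) ^ (-σ)) *
          (Q i.1 : ℝ) ^ (1 - σ) := by gcongr
    _ = _ := by ring

omit h in
lemma tprod_one_add_localIncrement {a : ℕ} (ha : a ≠ 0) :
    ∏' i, (1 + localIncrement E i a) = ∏' p, E p a := by
  have hval : ∀ p : Nat.Primes,
      (p : ℕ) ^ padicValNat p a ∣ a ∧ ¬(p : ℕ) ^ (padicValNat p a + 1) ∣ a := fun p ↦
    ⟨pow_padicValNat_dvd, pow_succ_padicValNat_not_dvd ha⟩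
  have hinj : Function.Injective fun p : Nat.Primes ↦ (p, padicValNat p a) :=
    fun p q hpq ↦ congrArg Prod.fst hpq
  rw [← hinj.tprod_eq]
  · refine tprod_congr fun p ↦ ?_
    rw [localIncrement, if_pos (hval p), add_sub_cancel]
  · rintro ⟨p, j⟩ hi
    have hne : localIncrement E (p, j) a ≠ 0 := fun h0 ↦ by simp [h0] at hi
    have hj := exactDvd_of_localIncrement_ne_zero hne
    exact ⟨p, Prod.ext rfl (eq_of_exactDvd (hval p).1 (hval p).2 hj.1 hj.2)⟩

lemma hasSum_incrementProd {σ : ℝ} (hσ0 : 0 ≤ σ) (hσ1 : σ ≤ 1)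
    (hw : Summable fun i : Nat.Primes × ℕ ↦
      b i.1 i.2 * (((i.1 : ℕ) ^ i.2 : ℕ) : ℝ) ^ (-σ) * (Q i.1 : ℝ) ^ (1 - σ))
    {a : ℕ} (ha : a ≠ 0) : HasSum (fun T ↦ incrementProd E T a) (∏' p, E p a) := by
  have hsum := summable_finsetProd_of_summable_norm (h.summable_localIncrement hσ0 hσ1 hw ha)
  rw [← tprod_one_add_localIncrement ha, tprod_one_add hsum]
  exact hsum.hasSum

lemma summable_weight_incrementProd {σ : ℝ}
    (hw : Summable fun i : Nat.Primes × ℕ ↦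
      b i.1 i.2 * (((i.1 : ℕ) ^ i.2 : ℕ) : ℝ) ^ (-σ) * (Q i.1 : ℝ) ^ (1 - σ)) :
    Summable fun T : Finset (Nat.Primes × ℕ) ↦ (∏ i ∈ T, b i.1 i.2) *
      (primePowerProd T : ℝ) ^ (-σ) * ((∏ i ∈ T, Q i.1 : ℕ) : ℝ) ^ (1 - σ) := by
  have hnonneg : ∀ i : Nat.Primes × ℕ,
      0 ≤ b i.1 i.2 * (((i.1 : ℕ) ^ i.2 : ℕ) : ℝ) ^ (-σ) * (Q i.1 : ℝ) ^ (1 - σ) := fun i ↦ by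
    have := h.bound_nonneg i.1 i.2
    positivity
  refine (summable_finsetProd_of_summable_nonneg hnonneg hw).congr fun T ↦ ?_
  rw [Finset.prod_mul_distrib, Finset.prod_mul_distrib, primePowerProd, Nat.cast_prod,
    Nat.cast_prod, Real.finsetProd_rpow _ _ fun i _ ↦ Nat.cast_nonneg _,
    Real.finsetProd_rpow _ _ fun i _ ↦ Nat.cast_nonneg _]

theorem hasLSeriesContinuation {θ θ' : ℝ} (hθ : 0 ≤ θ) (hθθ' : θ < θ') (hθ' : θ' ≤ 1)
    (hw : ∀ σ : ℝ, θ < σ → σ < θ' → Summable fun i : Nat.Primes × ℕ ↦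
      b i.1 i.2 * (((i.1 : ℕ) ^ i.2 : ℕ) : ℝ) ^ (-σ) * (Q i.1 : ℝ) ^ (1 - σ)) :
    HasLSeriesContinuation (fun a ↦ ∏' p, E p a) θ := by
  obtain ⟨σ, hθσ, hσθ'⟩ := exists_between hθθ'
  exact hasLSeriesContinuation_of_hasSum_periodicOnMultiples h.periodicOnMultiples_incrementProd
    (fun a ha ↦ h.hasSum_incrementProd (hθ.trans hθσ.le) (hσθ'.le.trans hθ') (hw σ hθσ hσθ') ha)
    hθ hθθ' hθ' fun σ hθσ hσθ' ↦ h.summable_weight_incrementProd (hw σ hθσ hσθ')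

end LocallyPeriodicFactors

end LocalFactors

section Weights

/-- A modulus, divisible by `p`, such that the elements of `ℤ_p` congruent to `1` are fourth
powers. -/
def fourthPowerModulus (p : ℕ) : ℕ := if p = 2 then 32 else p

lemma fourthPowerModulus_of_ne_two {p : ℕ} (hp : p ≠ 2) : fourthPowerModulus p = p := if_neg hp

lemma fourthPowerModulus_pos {p : ℕ} (hp : 0 < p) : 0 < fourthPowerModulus p := by
  unfold fourthPowerModulus
  split_ifs
  · norm_num
  · exact hp

lemma dvd_fourthPowerModulus (p : ℕ) : p ∣ fourthPowerModulus p := by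
  unfold fourthPowerModulus
  split_ifs with h
  · rw [h]
    norm_num
  · exact dvd_rfl

/-- A bound for `|E p a - 1|` when `p ^ j` exactly divides `a`: trivial for the primes up to `P₀`,
and otherwise of order `p⁻²` as long as `p² ∤ a` and of order `p⁻¹` in general. -/
def localBound (P₀ : ℕ) (A : Nat.Primes → ℝ) (C : ℝ) (p : Nat.Primes) (j : ℕ) : ℝ :=
  if (p : ℕ) ≤ P₀ then A p + 1 else if j ≤ 1 then C / (p : ℝ) ^ 2 else C / p

variable {P₀ : ℕ} {A : Nat.Primes → ℝ} {C σ : ℝ}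

lemma localBound_nonneg (hA : ∀ p, 0 ≤ A p) (hC : 0 ≤ C) (p : Nat.Primes) (j : ℕ) :
    0 ≤ localBound P₀ A C p j := by
  have := hA p
  unfold localBound
  split_ifs <;> positivity

lemma rpow_neg_le_rpow_neg_two {x : ℝ} (hx : 2 ≤ x) (hσ0 : 0 ≤ σ) :
    x ^ (-σ) ≤ (2 : ℝ) ^ (-σ) :=
  Real.rpow_le_rpow_of_nonpos two_pos hx (neg_nonpos.2 hσ0)

lemma weight_le_of_le_one {x : ℝ} (hx : 2 ≤ x) (hC : 0 ≤ C) (hσ0 : 0 ≤ σ) (hσ : σ ≤ 1 / 2)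
    (j : ℕ) :
    C / x ^ 2 * (x ^ (-σ)) ^ j * x ^ (1 - σ) ≤ C * x ^ (-(3 * σ)) * ((2 : ℝ) ^ (-σ)) ^ j := by
  have hx0 : 0 < x := by linarith
  have hpow : x ^ (1 - σ) / x ^ 2 = x ^ (-1 - σ) := by
    rw [← Real.rpow_natCast x 2, ← Real.rpow_sub hx0]
    congr 1
    push_cast
    ring
  have hle := rpow_neg_le_rpow_neg_two hx hσ0
  calc C / x ^ 2 * (x ^ (-σ)) ^ j * x ^ (1 - σ)
      = C * (x ^ (1 - σ) / x ^ 2) * (x ^ (-σ)) ^ j := by ring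
    _ = C * x ^ (-1 - σ) * (x ^ (-σ)) ^ j := by rw [hpow]
    _ ≤ C * x ^ (-(3 * σ)) * ((2 : ℝ) ^ (-σ)) ^ j := by
        gcongr <;> linarith

lemma weight_le_of_two_le {x : ℝ} (hx : 2 ≤ x) (hC : 0 ≤ C) (hσ0 : 0 ≤ σ) (k : ℕ) :
    C / x * (x ^ (-σ)) ^ (k + 2) * x ^ (1 - σ) ≤ C * x ^ (-(3 * σ)) * ((2 : ℝ) ^ (-σ)) ^ k := by
  have hx0 : 0 < x := by linarith
  have hpow : (x ^ (-σ)) ^ 2 * x ^ (1 - σ) / x = x ^ (-(3 * σ)) := by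
    rw [← Real.rpow_natCast, ← Real.rpow_mul hx0.le, ← Real.rpow_add hx0,
      ← Real.rpow_sub_one hx0.ne']
    congr 1
    push_cast
    ring
  have hle := rpow_neg_le_rpow_neg_two hx hσ0
  calc C / x * (x ^ (-σ)) ^ (k + 2) * x ^ (1 - σ)
      = C * ((x ^ (-σ)) ^ 2 * x ^ (1 - σ) / x) * (x ^ (-σ)) ^ k := by ring
    _ = C * x ^ (-(3 * σ)) * (x ^ (-σ)) ^ k := by rw [hpow]
    _ ≤ C * x ^ (-(3 * σ)) * ((2 : ℝ) ^ (-σ)) ^ k := by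
        gcongr

/-- A majorant of the weights attached to a prime `p` by `localBound`, up to a geometric factor
in `j`. -/
def weightMajorant (P₀ : ℕ) (A : Nat.Primes → ℝ) (C σ : ℝ) (p : Nat.Primes) : ℝ :=
  if (p : ℕ) ≤ P₀ then (A p + 1) * (fourthPowerModulus p : ℝ) ^ (1 - σ)
  else C * (((2 : ℝ) ^ (-σ)) ^ 2)⁻¹ * (p : ℝ) ^ (-(3 * σ))

-- This is where the abscissa `1/3` comes from.
lemma summable_weightMajorant (hσ : 1 / 3 < σ) : Summable (weightMajorant P₀ A C σ) := by
  have hsum : Summable fun p : Nat.Primes ↦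
      C * (((2 : ℝ) ^ (-σ)) ^ 2)⁻¹ * (p : ℝ) ^ (-(3 * σ)) :=
    ((Real.summable_nat_rpow.2 (by linarith)).comp_injective Subtype.val_injective).mul_left _
  refine (summable_congr_cofinite ?_).1 hsum
  have hfin : {p : Nat.Primes | (p : ℕ) ≤ P₀}.Finite :=
    (Set.finite_Iic P₀).preimage Subtype.val_injective.injOn
  filter_upwards [hfin.compl_mem_cofinite] with p hp
  exact (if_neg hp).symm

lemma weight_le_weightMajorant (hP₀ : 2 ≤ P₀) (hA : ∀ p, 0 ≤ A p) (hC : 0 ≤ C) (hσ0 : 0 ≤ σ)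
    (hσ : σ ≤ 1 / 2) (p : Nat.Primes) (j : ℕ) :
    localBound P₀ A C p j * (((p : ℕ) ^ j : ℕ) : ℝ) ^ (-σ) * (fourthPowerModulus p : ℝ) ^ (1 - σ) ≤
      weightMajorant P₀ A C σ p * ((2 : ℝ) ^ (-σ)) ^ j := by
  have hp2 : (2 : ℝ) ≤ p := by exact_mod_cast p.2.two_le
  have hpow : (((p : ℕ) ^ j : ℕ) : ℝ) ^ (-σ) = ((p : ℝ) ^ (-σ)) ^ j := by
    rw [Nat.cast_pow, ← Real.rpow_natCast_mul (by positivity),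
      ← Real.rpow_mul_natCast (by positivity), mul_comm]
  rw [hpow]
  have hle := rpow_neg_le_rpow_neg_two hp2 hσ0
  by_cases hp : (p : ℕ) ≤ P₀
  · rw [localBound, weightMajorant, if_pos hp, if_pos hp, mul_right_comm]
    have := hA p
    gcongr
  have hQ : fourthPowerModulus p = p := fourthPowerModulus_of_ne_two (by lia)
  have hρ : 0 < (2 : ℝ) ^ (-σ) := by positivity
  rw [localBound, weightMajorant, if_neg hp, if_neg hp, hQ]
  split_ifs with hj
  · refine (weight_le_of_le_one hp2 hC hσ0 hσ j).trans ?_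
    have hρ1 : 1 ≤ (((2 : ℝ) ^ (-σ)) ^ 2)⁻¹ := (one_le_inv₀ (by positivity)).2
      (pow_le_one₀ hρ.le (Real.rpow_le_one_of_one_le_of_nonpos one_le_two (neg_nonpos.2 hσ0)))
    gcongr
    exact le_mul_of_one_le_right hC hρ1
  · obtain ⟨k, rfl⟩ : ∃ k, j = k + 2 := ⟨j - 2, by lia⟩
    refine (weight_le_of_two_le hp2 hC hσ0 k).trans_eq ?_
    rw [pow_add]
    field_simp

lemma summable_weight_localBound (hP₀ : 2 ≤ P₀) (hA : ∀ p, 0 ≤ A p) (hC : 0 ≤ C)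
    (hσ : 1 / 3 < σ) (hσ' : σ < 1 / 2) :
    Summable fun i : Nat.Primes × ℕ ↦ localBound P₀ A C i.1 i.2 *
      (((i.1 : ℕ) ^ i.2 : ℕ) : ℝ) ^ (-σ) * (fourthPowerModulus i.1 : ℝ) ^ (1 - σ) := by
  have hgeom : Summable fun j : ℕ ↦ ((2 : ℝ) ^ (-σ)) ^ j := summable_geometric_of_lt_one
    (by positivity) (Real.rpow_lt_one_of_one_lt_of_neg one_lt_two (by linarith))
  have hmaj : ∀ p, 0 ≤ weightMajorant P₀ A C σ p := fun p ↦ by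
    have := hA p
    unfold weightMajorant
    split_ifs <;> positivity
  refine ((summable_weightMajorant hσ).mul_of_nonneg hgeom hmaj
    fun j ↦ by positivity).of_nonneg_of_le (fun i ↦ ?_) fun i ↦
      weight_le_weightMajorant hP₀ hA hC (by linarith) hσ'.le i.1 i.2
  have := localBound_nonneg (P₀ := P₀) hA hC i.1 i.2
  positivity

theorem hasLSeriesContinuation_of_abs_sub_one_le {E : Nat.Primes → ℕ → ℝ} (hP₀ : 2 ≤ P₀)
    (hC : 0 ≤ C) (hA : ∀ p a, |E p a| ≤ A p)
    (h1 : ∀ (p : Nat.Primes) a, a ≠ 0 → P₀ < p → |E p a - 1| ≤ C / p)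
    (h2 : ∀ (p : Nat.Primes) a, P₀ < p → ¬(p : ℕ) ^ 2 ∣ a → |E p a - 1| ≤ C / (p : ℝ) ^ 2)
    (hper : ∀ (p : Nat.Primes) (j u u' : ℕ), ¬(p : ℕ) ∣ u → u ≡ u' [MOD fourthPowerModulus p] →
      E p ((p : ℕ) ^ j * u) = E p ((p : ℕ) ^ j * u')) :
    HasLSeriesContinuation (fun a ↦ ∏' p, E p a) (1 / 3) := by
  have hA0 : ∀ p, 0 ≤ A p := fun p ↦ (abs_nonneg _).trans (hA p 0)
  have h : LocallyPeriodicFactors E (fun p ↦ fourthPowerModulus p) (localBound P₀ A C) :=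
    { period_pos := fun p ↦ fourthPowerModulus_pos p.2.pos
      dvd_period := fun p ↦ dvd_fourthPowerModulus p
      bound_nonneg := localBound_nonneg hA0 hC
      abs_sub_one_le := fun p j a _ hj' ↦ by
        unfold localBound
        split_ifs with hp hj
        · exact (abs_sub _ _).trans (by simpa only [abs_one, add_le_add_iff_right] using hA p a)
        · exact h2 p a (not_le.1 hp) fun hd ↦ hj' ((pow_dvd_pow _ (by lia)).trans hd)
        · exact h1 p a (fun ha ↦ hj' (ha ▸ dvd_zero _)) (not_le.1 hp)
      periodic := hper }
  exact h.hasLSeriesContinuation (by norm_num) (by norm_num : (1 / 3 : ℝ) < 1 / 2) (by norm_num)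
    fun σ hσ hσ' ↦ summable_weight_localBound hP₀ hA0 hC hσ hσ'

end Weights

section SquareSieve

lemma exists_intCast_eq {ι : Type*} (S : Finset ι) (m : ι → ℕ) (hm : ∀ i ∈ S, m i ≠ 0)
    (hcop : (S : Set ι).Pairwise (Function.onFun Nat.Coprime m)) (y : ∀ i, ZMod (m i)) (L : ℤ) :
    ∃ x : ℤ, L ≤ x ∧ ∀ i ∈ S, (x : ZMod (m i)) = y i := by
  obtain ⟨x, hx⟩ := ZMod.intCast_surjective
    ((ZMod.prodEquivPi (fun i : S ↦ m i) fun i j hij ↦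
      hcop i.2 j.2 (Subtype.coe_injective.ne hij)).symm fun i ↦ y i)
  have hxy : ∀ i ∈ S, (x : ZMod (m i)) = y i := fun i hi ↦ by
    have := congrFun ((RingEquiv.eq_symm_apply _).1 hx) ⟨i, hi⟩
    rwa [map_intCast, Pi.intCast_apply] at this
  set M := ∏ i ∈ S, m i
  have hM1 : (1 : ℤ) ≤ M := by
    exact_mod_cast Nat.one_le_iff_ne_zero.2 (Finset.prod_ne_zero_iff.2 hm)
  refine ⟨x + M * (|x| + |L|), ?_, fun i hi ↦ ?_⟩
  · linarith [le_mul_of_one_le_left (by positivity : 0 ≤ |x| + |L|) hM1, neg_abs_le x,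
      le_abs_self L]
  · have hMi : ((M : ℤ) : ZMod (m i)) = 0 := by
      exact_mod_cast (ZMod.natCast_eq_zero_iff _ _).2 (Finset.dvd_prod_of_mem m hi)
    rw [Int.cast_add, Int.cast_mul, hMi, zero_mul, add_zero, hxy i hi]

lemma exists_intCast_eq_of_not_dvd {N : ℕ} (hN : N ≠ 0) {S : Finset ℕ}
    (hS : ∀ q ∈ S, q.Prime ∧ ¬q ∣ N) (x₀ : ℤ) (y : ∀ q : ℕ, ZMod q) (L : ℤ) :
    ∃ x : ℤ, L ≤ x ∧ (x : ZMod N) = x₀ ∧ ∀ q ∈ S, (x : ZMod q) = y q := by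
  have hNS : N ∉ S := fun h ↦ (hS N h).2 dvd_rfl
  have hcopN : ∀ q ∈ S, Nat.Coprime N q := fun q hq ↦
    ((hS q hq).1.coprime_iff_not_dvd.2 (hS q hq).2).symm
  obtain ⟨x, hLx, hx⟩ := exists_intCast_eq (insert N S) id
    (Finset.forall_mem_insert _ _ _ |>.2 ⟨hN, fun q hq ↦ (hS q hq).1.ne_zero⟩)
    (by
      have : Std.Symm (Function.onFun Nat.Coprime (id : ℕ → ℕ)) := ⟨fun _ _ h ↦ h.symm⟩
      rw [Finset.coe_insert, Set.pairwise_insert_of_symm]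
      exact ⟨fun q hq r hr hqr ↦ (Nat.coprime_primes (hS q hq).1 (hS r hr).1).2 hqr,
        fun q hq _ ↦ hcopN q hq⟩)
    (Function.update y N x₀) L
  refine ⟨x, hLx, by simpa using hx N (Finset.mem_insert_self _ _), fun q hq ↦ ?_⟩
  simpa [Function.update_of_ne (ne_of_mem_of_not_mem hq hNS)] using
    hx q (Finset.mem_insert_of_mem hq)

lemma card_filter_range_le (X m : ℕ) (P : ℕ → Prop) [DecidablePred P] :
    (Finset.filter P (Finset.range X)).card ≤
      (X / m + 1) * ((Finset.filter P (Finset.range X)).image (· % m)).card := by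
  refine Finset.card_le_mul_card_image _ _ fun r _ ↦ ?_
  rw [← Finset.card_range (X / m + 1)]
  refine Finset.card_le_card_of_injOn (· / m) (fun k hk ↦ ?_) fun k hk l hl hkl ↦ ?_
  · have hkX := Finset.mem_range.1 (Finset.mem_filter.1 (Finset.mem_filter.1 hk).1).1
    exact Finset.mem_coe.2 (Finset.mem_range.2 (Nat.lt_succ_of_le (Nat.div_le_div_right hkX.le)))
  · have hmod := (Finset.mem_filter.1 hk).2.trans (Finset.mem_filter.1 hl).2.symm
    have hdiv : k / m = l / m := hkl
    rw [← Nat.div_add_mod k m, ← Nat.div_add_mod l m, hdiv, hmod]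

lemma mod_sq_eq_of_sq_dvd {q k l : ℕ} {β : ℤ} (hq : q.Prime) (hβ : ¬(q : ℤ) ∣ β)
    (h : (q : ℤ) ^ 2 ∣ β * (k - l)) : k % q ^ 2 = l % q ^ 2 := by
  have hdvd := (Nat.prime_iff_prime_int.1 hq).pow_dvd_of_dvd_mul_left 2 hβ h
  have hmod : (l : ℤ) ≡ k [ZMOD (q ^ 2 : ℕ)] := Int.modEq_iff_dvd.2 (by exact_mod_cast hdvd)
  exact (Int.natCast_modEq_iff.1 hmod).symm

lemma card_filter_sq_dvd_linear_le (X : ℕ) {q : ℕ} (hq : q.Prime) (α : ℤ) {β : ℤ}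
    (hβ : ¬(q : ℤ) ∣ β) :
    ((Finset.range X).filter fun k : ℕ ↦ (q : ℤ) ^ 2 ∣ α + β * k).card ≤ X / q ^ 2 + 1 := by
  refine (card_filter_range_le X (q ^ 2) _).trans
    (mul_le_of_le_one_right (Nat.zero_le _) (Finset.card_le_one.2 ?_))
  simp only [Finset.forall_mem_image, Finset.mem_filter]
  intro k hk l hl
  exact mod_sq_eq_of_sq_dvd hq hβ ((dvd_sub hk.2 hl.2).trans (dvd_of_eq (by ring)))

lemma sq_dvd_or_sq_dvd_of_sq_dvd_mul {q a b : ℤ} (hq : Prime q) (hab : ¬(q ∣ a ∧ q ∣ b))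
    (h : q ^ 2 ∣ a * b) : q ^ 2 ∣ a ∨ q ^ 2 ∣ b := by
  by_cases ha : q ∣ a
  · exact .inl (hq.pow_dvd_of_dvd_mul_right 2 (fun hb ↦ hab ⟨ha, hb⟩) h)
  · exact .inr (hq.pow_dvd_of_dvd_mul_left 2 ha h)

lemma sq_dvd_sub_or_sq_dvd_add {q r₂ r₁ r₀ l l' : ℤ} (hq : Prime q)
    (hD : ¬q ∣ r₁ ^ 2 - 4 * r₂ * r₀) (hl : q ^ 2 ∣ r₂ * l ^ 2 + r₁ * l + r₀)
    (hl' : q ^ 2 ∣ r₂ * l' ^ 2 + r₁ * l' + r₀) :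
    q ^ 2 ∣ l - l' ∨ q ^ 2 ∣ r₂ * (l + l') + r₁ := by
  refine sq_dvd_or_sq_dvd_of_sq_dvd_mul hq (fun ⟨hsub, hadd⟩ ↦ hD ?_) ?_
  · have hderiv : q ∣ 2 * r₂ * l + r₁ :=
      (dvd_add hadd (hsub.mul_left r₂)).trans (dvd_of_eq (by ring))
    have hroot : q ∣ r₂ * l ^ 2 + r₁ * l + r₀ := (dvd_pow_self q two_ne_zero).trans hl
    exact (dvd_sub (hderiv.mul_left (2 * r₂ * l + r₁)) (hroot.mul_left (4 * r₂))).trans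
      (dvd_of_eq (by ring))
  · exact (dvd_sub hl hl').trans (dvd_of_eq (by ring))

lemma card_filter_sq_dvd_quadratic_le (X : ℕ) {q : ℕ} (hq : q.Prime) (α : ℤ) {β r₂ r₁ r₀ : ℤ}
    (hβ : ¬(q : ℤ) ∣ β) (hr₂ : ¬(q : ℤ) ∣ r₂) (hD : ¬(q : ℤ) ∣ r₁ ^ 2 - 4 * r₂ * r₀) :
    ((Finset.range X).filter fun k : ℕ ↦
      (q : ℤ) ^ 2 ∣ r₂ * (α + β * k) ^ 2 + r₁ * (α + β * k) + r₀).card ≤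
        2 * (X / q ^ 2 + 1) := by
  have hq' := Nat.prime_iff_prime_int.1 hq
  refine (card_filter_range_le X (q ^ 2) _).trans ?_
  rw [mul_comm]
  refine Nat.mul_le_mul_right _ (not_lt.1 fun hcard ↦ ?_)
  simp only [Finset.two_lt_card, Finset.exists_mem_image, Finset.mem_filter] at hcard
  obtain ⟨x, ⟨-, hx⟩, y, ⟨-, hy⟩, z, ⟨-, hz⟩, hxy, hxz, hyz⟩ := hcard
  have hsum : ∀ {k l : ℕ}, (q : ℤ) ^ 2 ∣ r₂ * (α + β * k) ^ 2 + r₁ * (α + β * k) + r₀ →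
      (q : ℤ) ^ 2 ∣ r₂ * (α + β * l) ^ 2 + r₁ * (α + β * l) + r₀ → k % q ^ 2 ≠ l % q ^ 2 →
      (q : ℤ) ^ 2 ∣ r₂ * ((α + β * k) + (α + β * l)) + r₁ := fun {k l} hk hl hkl ↦
    (sq_dvd_sub_or_sq_dvd_add hq' hD hk hl).resolve_left fun h ↦
      hkl (mod_sq_eq_of_sq_dvd hq hβ (h.trans (dvd_of_eq (by ring))))
  exact hyz (mod_sq_eq_of_sq_dvd hq hβ (hq'.pow_dvd_of_dvd_mul_left 2 hr₂
    ((dvd_sub (hsum hx hy hxy) (hsum hx hz hxz)).trans (dvd_of_eq (by ring)))))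

lemma exists_mul_primeCounting_le (c : ℕ) {C : ℕ} (hC : 0 < C) :
    ∃ X : ℕ, 0 < X ∧ c * Nat.primeCounting (C * X) ≤ X := by
  have hlog := Real.tendsto_log_atTop.eventually_ge_atTop (c * C * (Real.log 4 + 1))
  have hcast : Filter.Tendsto (fun X : ℕ ↦ ((C * X : ℕ) : ℝ)) Filter.atTop Filter.atTop :=
    tendsto_natCast_atTop_atTop.comp (Filter.tendsto_id.const_mul_atTop' hC)
  obtain ⟨X, ⟨⟨hπ, hlog⟩, hlog0⟩, hX⟩ := ((hcast.eventually
    (((Chebyshev.eventually_primeCounting_le one_pos).and hlog).and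
      (Real.tendsto_log_atTop.eventually_gt_atTop 0))).and (Filter.eventually_gt_atTop 0)).exists
  refine ⟨X, hX, ?_⟩
  rw [Nat.floor_natCast, le_div_iff₀ hlog0] at hπ
  have : 0 < Real.log 4 := Real.log_pos (by norm_num)
  have : (0 : ℝ) < C := by exact_mod_cast hC
  have hle : (c * Nat.primeCounting (C * X) : ℝ) * (C * (Real.log 4 + 1)) ≤
      X * (C * (Real.log 4 + 1)) := by
    calc _ = (Nat.primeCounting (C * X) : ℝ) * (c * C * (Real.log 4 + 1)) := by ring
      _ ≤ Nat.primeCounting (C * X) * Real.log (C * X : ℕ) := by gcongr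
      _ ≤ (Real.log 4 + 1) * (C * X : ℕ) := hπ
      _ = X * (C * (Real.log 4 + 1)) := by push_cast; ring
  exact_mod_cast le_of_mul_le_mul_right hle (by positivity)

lemma mul_sum_div_sq_le (X : ℕ) {Y k : ℕ} (hk : k ≠ 0) (hkY : k ≤ Y) :
    k * ∑ q ∈ Finset.Ioc k Y, X / q ^ 2 ≤ X := by
  have hk0 : (0 : ℝ) < k := by positivity
  have hsum : ∑ q ∈ Finset.Ioc k Y, ((q : ℝ) ^ 2)⁻¹ ≤ (k : ℝ)⁻¹ :=
    (sum_Ioc_inv_sq_le_sub hk hkY).trans (sub_le_self _ (by positivity))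
  have hle : (k : ℝ) * ∑ q ∈ Finset.Ioc k Y, (X : ℝ) / (q : ℝ) ^ 2 ≤ X := by
    simp only [div_eq_mul_inv, ← Finset.mul_sum]
    calc (k : ℝ) * (X * ∑ q ∈ Finset.Ioc k Y, ((q : ℝ) ^ 2)⁻¹) ≤ k * (X * (k : ℝ)⁻¹) := by gcongr
      _ = X := by field_simp
  have hfloor : ((∑ q ∈ Finset.Ioc k Y, X / q ^ 2 : ℕ) : ℝ) ≤
      ∑ q ∈ Finset.Ioc k Y, (X : ℝ) / (q : ℝ) ^ 2 := by
    rw [Nat.cast_sum]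
    exact Finset.sum_le_sum fun q _ ↦ by exact_mod_cast Nat.cast_div_le (α := ℝ)
  exact_mod_cast (mul_le_mul_of_nonneg_left hfloor hk0.le).trans hle

lemma sum_primes_sieve_lt {X Y : ℕ} (hX : 0 < X) (hY : 10 ≤ Y)
    (hπ : 5 * Nat.primeCounting Y ≤ X) :
    ∑ q ∈ (Finset.Ioc 10 Y).filter Nat.Prime, 3 * (X / q ^ 2 + 1) < X := by
  have hcard : ((Finset.Ioc 10 Y).filter Nat.Prime).card ≤ Nat.primeCounting Y := by
    rw [Nat.primeCounting, Nat.primeCounting', Nat.count_eq_card_filter_range]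
    refine Finset.card_le_card (Finset.filter_subset_filter _ fun q hq ↦ ?_)
    exact Finset.mem_range.2 (Nat.lt_succ_of_le (Finset.mem_Ioc.1 hq).2)
  have hsub : ∑ q ∈ (Finset.Ioc 10 Y).filter Nat.Prime, X / q ^ 2 ≤
      ∑ q ∈ Finset.Ioc 10 Y, X / q ^ 2 :=
    Finset.sum_le_sum_of_subset (Finset.filter_subset _ _)
  have hsum := mul_sum_div_sq_le X (k := 10) (by norm_num) hY
  rw [← Finset.mul_sum, Finset.sum_add_distrib, Finset.sum_const, smul_eq_mul, mul_one]
  lia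

lemma exists_mul_quadratic_ne_zero {K : Type*} [Field K] (h2 : (2 : K) ≠ 0) (h3 : (3 : K) ≠ 0)
    {r₂ r₁ : K} (r₀ : K) (h : r₂ ≠ 0 ∨ r₁ ≠ 0) : ∃ l, l * (r₂ * l ^ 2 + r₁ * l + r₀) ≠ 0 := by
  by_contra! hzero
  have hone := hzero 1
  have hneg := hzero (-1)
  have htwo := (mul_eq_zero.1 (hzero 2)).resolve_left h2
  have hr₁ : r₁ = 0 :=
    (mul_eq_zero.1 (show 2 * r₁ = 0 by linear_combination hone + hneg)).resolve_left h2
  have hr₂ : r₂ = 0 :=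
    (mul_eq_zero.1 (show 3 * r₂ = 0 by linear_combination htwo - hone - hr₁)).resolve_left h3
  exact h.elim (· hr₂) (· hr₁)

lemma exists_zmod_mul_quadratic_ne_zero {q : ℕ} (hq : q.Prime) (hq3 : 3 < q) {r₂ r₁ : ℤ}
    (h : ¬((q : ℤ) ∣ r₂ ∧ (q : ℤ) ∣ r₁)) (r₀ : ℤ) :
    ∃ y : ZMod q, y * (r₂ * y ^ 2 + r₁ * y + r₀) ≠ 0 := by
  have : Fact q.Prime := ⟨hq⟩
  have hsmall (n : ℕ) (hn : 0 < n) (hn3 : n ≤ 3) : (n : ZMod q) ≠ 0 := fun h ↦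
    Nat.not_dvd_of_pos_of_lt hn (hn3.trans_lt hq3) ((ZMod.natCast_eq_zero_iff n q).1 h)
  refine exists_mul_quadratic_ne_zero (hsmall 2 (by simp) (by simp))
    (hsmall 3 (by simp) le_rfl) (r₀ : ZMod q) (not_and_or.1 ?_)
  simpa only [CharP.intCast_eq_zero_iff (ZMod q) q] using h

lemma quadratic_pos {r₂ r₁ r₀ l : ℤ} (hr₂ : 0 < r₂) (hl : |r₁| + |r₀| < l) :
    0 < r₂ * l ^ 2 + r₁ * l + r₀ := by
  have hl0 : 0 < l := lt_of_le_of_lt (by positivity) hl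
  have hr₁ : -|r₁| * l ≤ r₁ * l := mul_le_mul_of_nonneg_right (neg_abs_le r₁) hl0.le
  have hr₀ : |r₀| ≤ |r₀| * l := le_mul_of_one_le_right (abs_nonneg r₀) hl0
  have hsq : l ^ 2 ≤ r₂ * l ^ 2 := le_mul_of_one_le_left (sq_nonneg l) hr₂
  nlinarith [neg_abs_le r₀, mul_lt_mul_of_pos_right hl hl0]

lemma quadratic_le {r₂ r₁ r₀ l : ℤ} (hl : 1 ≤ l) :
    r₂ * l ^ 2 + r₁ * l + r₀ ≤ (r₂ + |r₁| + |r₀|) * l ^ 2 := by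
  have hr₁ : r₁ * l ≤ |r₁| * l ^ 2 :=
    mul_le_mul (le_abs_self r₁) (le_self_pow₀ hl two_ne_zero) (by positivity) (abs_nonneg r₁)
  have hr₀ : r₀ ≤ |r₀| * l ^ 2 :=
    (le_abs_self r₀).trans (le_mul_of_one_le_right (abs_nonneg r₀) (one_le_pow₀ hl))
  linarith

lemma le_mul_of_sq_dvd_or_sq_dvd {r₂ r₁ r₀ l q : ℤ} (hr₂ : 0 < r₂) (hl : |r₁| + |r₀| < l)
    (h : q ^ 2 ∣ l ∨ q ^ 2 ∣ r₂ * l ^ 2 + r₁ * l + r₀) : q ≤ (r₂ + |r₁| + |r₀|) * l := by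
  have hl1 : 1 ≤ l := lt_of_le_of_lt (by positivity) hl
  have hA : 1 ≤ r₂ + |r₁| + |r₀| := by linarith [abs_nonneg r₁, abs_nonneg r₀]
  have hq : q ^ 2 ≤ (r₂ + |r₁| + |r₀|) * l ^ 2 := h.elim
    (fun h ↦ (Int.le_of_dvd (by linarith) h).trans <| (le_self_pow₀ hl1 two_ne_zero).trans <|
      le_mul_of_one_le_left (sq_nonneg l) hA)
    (fun h ↦ (Int.le_of_dvd (quadratic_pos hr₂ hl) h).trans (quadratic_le hl1))
  refine le_of_sq_le_sq (hq.trans ?_) (by positivity)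
  rw [mul_pow]
  exact mul_le_mul_of_nonneg_right (le_self_pow₀ hA two_ne_zero) (sq_nonneg l)

lemma exists_lt_forall_prime_le_not_sq_dvd {X Y : ℕ} (hX : 0 < X) (hY : 10 ≤ Y)
    (hπ : 5 * Nat.primeCounting Y ≤ X) (r₂ r₁ r₀ α β : ℤ) :
    ∃ k < X, ∀ q : ℕ, q.Prime → 10 < q → q ≤ Y → ¬(q : ℤ) ∣ β → ¬(q : ℤ) ∣ r₂ →
      ¬(q : ℤ) ∣ r₁ ^ 2 - 4 * r₂ * r₀ → ¬((q : ℤ) ^ 2 ∣ α + β * k ∨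
        (q : ℤ) ^ 2 ∣ r₂ * (α + β * k) ^ 2 + r₁ * (α + β * k) + r₀) := by
  classical
  set T := ((Finset.Ioc 10 Y).filter Nat.Prime).filter fun q : ℕ ↦
    ¬(q : ℤ) ∣ β ∧ ¬(q : ℤ) ∣ r₂ ∧ ¬(q : ℤ) ∣ r₁ ^ 2 - 4 * r₂ * r₀
  set bad : ℕ → Finset ℕ := fun q ↦ (Finset.range X).filter fun k : ℕ ↦
    (q : ℤ) ^ 2 ∣ α + β * k ∨ (q : ℤ) ^ 2 ∣ r₂ * (α + β * k) ^ 2 + r₁ * (α + β * k) + r₀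
  have hbad : ∀ q ∈ T, (bad q).card ≤ 3 * (X / q ^ 2 + 1) := fun q hq ↦ by
    obtain ⟨hq', hβq, hr₂q, hDq⟩ := Finset.mem_filter.1 hq
    have hqp := (Finset.mem_filter.1 hq').2
    simp only [bad, Finset.filter_or]
    linarith [Finset.card_union_le _ _ |>.trans (add_le_add
      (card_filter_sq_dvd_linear_le X hqp α hβq)
      (card_filter_sq_dvd_quadratic_le X hqp α hβq hr₂q hDq))]
  have hcard : (T.biUnion bad).card < (Finset.range X).card := by
    rw [Finset.card_range]
    exact (Finset.card_biUnion_le.trans (Finset.sum_le_sum hbad)).trans_lt <|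
      (Finset.sum_le_sum_of_subset (Finset.filter_subset _ _)).trans_lt <|
      sum_primes_sieve_lt hX hY hπ
  obtain ⟨k, hk, hkbad⟩ := Finset.exists_mem_notMem_of_card_lt_card hcard
  refine ⟨k, Finset.mem_range.1 hk, fun q hq hq10 hqY hβq hr₂q hDq hor ↦ hkbad ?_⟩
  exact Finset.mem_biUnion.2 ⟨q, Finset.mem_filter.2 ⟨Finset.mem_filter.2
    ⟨Finset.mem_Ioc.2 ⟨hq10, hqY⟩, hq⟩, hβq, hr₂q, hDq⟩, Finset.mem_filter.2 ⟨hk, hor⟩⟩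

-- For `l = α + β k` with `k < X`, only primes `q = O(X)` can have `q² ∣ l` or `q² ∣ R(l)`, and they
-- exclude fewer than `X` values of `k`, since `∑_{q > 10} q⁻² ≤ 1 / 10` and `π(O(X)) = o(X)`.
lemma exists_natCast_forall_prime_not_sq_dvd {r₂ r₁ r₀ α β : ℤ} (hr₂ : 0 < r₂)
    (hα : |r₁| + |r₀| < α) (hβ : 0 < β) :
    ∃ k : ℕ, ∀ q : ℕ, q.Prime → 10 < q → ¬(q : ℤ) ∣ β → ¬(q : ℤ) ∣ r₂ → ¬(q : ℤ) ∣ r₀ →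
      ¬(q : ℤ) ∣ r₁ ^ 2 - 4 * r₂ * r₀ →
      ¬(q : ℤ) ^ 2 ∣ (α + β * k) * (r₂ * (α + β * k) ^ 2 + r₁ * (α + β * k) + r₀) := by
  have hα0 : 0 < α := lt_of_le_of_lt (by positivity) hα
  obtain ⟨C, hC⟩ := Int.eq_ofNat_of_zero_le
    (show 0 ≤ (r₂ + |r₁| + |r₀|) * (α + β) by positivity)
  obtain ⟨X, hX, hπ⟩ := exists_mul_primeCounting_le 5 (show 0 < C + 10 by lia)
  obtain ⟨k, hk, hsieve⟩ :=
    exists_lt_forall_prime_le_not_sq_dvd hX (by nlinarith) hπ r₂ r₁ r₀ α β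
  refine ⟨k, fun q hq hq10 hβq hr₂q hr₀q hDq hdvd ↦ ?_⟩
  have hor := sq_dvd_or_sq_dvd_of_sq_dvd_mul (Nat.prime_iff_prime_int.1 hq)
    (fun ⟨hl, hR⟩ ↦ hr₀q ((Int.dvd_add_right (hl.mul_left (r₂ * (α + β * k) + r₁))).1
      (hR.trans (dvd_of_eq (by ring))))) hdvd
  have hlX : α + β * k ≤ (α + β) * X := by
    nlinarith [mul_le_mul_of_nonneg_left (show (k : ℤ) ≤ X by exact_mod_cast hk.le) hβ.le,
      mul_le_mul_of_nonneg_left (show (1 : ℤ) ≤ X by exact_mod_cast hX) hα0.le]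
  have hqY : (q : ℤ) ≤ ((C + 10) * X : ℕ) := by
    have hβk : 0 ≤ β * k := by positivity
    calc (q : ℤ) ≤ (r₂ + |r₁| + |r₀|) * (α + β * k) :=
          le_mul_of_sq_dvd_or_sq_dvd hr₂ (by linarith) hor
      _ ≤ (r₂ + |r₁| + |r₀|) * ((α + β) * X) := by gcongr
      _ = C * X := by rw [← mul_assoc, hC]
      _ ≤ ((C + 10) * X : ℕ) := by push_cast; gcongr; simp
  exact hsieve q hq hq10 (by exact_mod_cast hqY) hβq hr₂q hDq hor

theorem exists_intCast_eq_and_forall_prime_not_sq_dvd {r₂ r₁ r₀ : ℤ} (hr₂ : 0 < r₂) (hr₀ : r₀ ≠ 0)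
    (hD : r₁ ^ 2 - 4 * r₂ * r₀ ≠ 0) {M : ℕ} (hM : M ≠ 0)
    (hM10 : ∀ q : ℕ, q.Prime → ¬q ∣ M → 10 < q)
    (hprim : ∀ q : ℕ, q.Prime → ¬q ∣ M → ¬((q : ℤ) ∣ r₂ ∧ (q : ℤ) ∣ r₁)) (l₀ : ℤ) :
    ∃ l : ℤ, (l : ZMod M) = l₀ ∧
      ∀ q : ℕ, q.Prime → ¬q ∣ M → ¬(q : ℤ) ^ 2 ∣ l * (r₂ * l ^ 2 + r₁ * l + r₀) := by
  choose! y hy using fun q hq hqM ↦ exists_zmod_mul_quadratic_ne_zero hq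
    (lt_trans (by simp) (hM10 q hq hqM)) (hprim q hq hqM) r₀
  set W := r₂ * r₀ * (r₁ ^ 2 - 4 * r₂ * r₀)
  have hW : W ≠ 0 := mul_ne_zero (mul_ne_zero hr₂.ne' hr₀) hD
  set S := W.natAbs.primeFactors.filter (¬· ∣ M)
  have hS : ∀ q ∈ S, q.Prime ∧ ¬q ∣ M := fun q hq ↦
    (Finset.mem_filter.1 hq).imp_left Nat.prime_of_mem_primeFactors
  obtain ⟨l₁, hl₁, hl₁M, hl₁S⟩ := exists_intCast_eq_of_not_dvd hM hS l₀ y (|r₁| + |r₀| + 1)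
  have hβ : 0 < M * ∏ q ∈ S, q :=
    Nat.mul_pos (Nat.pos_of_ne_zero hM) (Finset.prod_pos fun q hq ↦ (hS q hq).1.pos)
  obtain ⟨k, hk⟩ := exists_natCast_forall_prime_not_sq_dvd hr₂ (by linarith : |r₁| + |r₀| < l₁)
    (Int.natCast_pos.2 hβ)
  refine ⟨l₁ + (M * ∏ q ∈ S, q : ℕ) * k, by simp [hl₁M], fun q hq hqM hdvd ↦ ?_⟩
  by_cases hqS : q ∈ S
  · have hβq : ((M * ∏ q ∈ S, q : ℕ) : ZMod q) = 0 :=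
      (ZMod.natCast_eq_zero_iff _ _).2 ((Finset.dvd_prod_of_mem id hqS).mul_left M)
    have hroot := (CharP.intCast_eq_zero_iff (ZMod q) q _).2
      ((dvd_pow_self _ two_ne_zero).trans hdvd)
    refine hy q hq hqM ?_
    rw [← hl₁S q hqS]
    simpa only [Int.cast_mul, Int.cast_add, Int.cast_pow, Int.cast_natCast, hβq, zero_mul, add_zero]
      using hroot
  · have hWq : ¬(q : ℤ) ∣ W := fun h ↦ hqS (Finset.mem_filter.2 ⟨Nat.mem_primeFactors.2
      ⟨hq, Int.natCast_dvd.1 h, Int.natAbs_ne_zero.2 hW⟩, hqM⟩)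
    refine hk q hq (hM10 q hq hqM) (fun h ↦ ?_) (fun h ↦ hWq ((h.mul_right _).mul_right _))
      (fun h ↦ hWq ((h.mul_left _).mul_right _)) (fun h ↦ hWq (h.mul_left _)) hdvd
    obtain ⟨r, hr, hqr⟩ := (hq.prime.dvd_finsetProd_iff _).1
      ((hq.dvd_mul.1 (Int.natCast_dvd_natCast.1 h)).resolve_left hqM)
    exact hqS ((Nat.prime_dvd_prime_iff_eq hq (hS r hr).1).1 hqr ▸ hr)

end SquareSieve

section SquarefreeDiscriminant

variable {R S : Type*} [CommRing R] [CommRing S]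

lemma BQ.disc_map (φ : R →+* S) (f : BQ R) : (f.map φ).disc = φ f.disc := by
  simp only [BQ.disc, BQ.map, map_add, map_sub, map_mul, map_pow, map_ofNat]

lemma BQ.map_intCast_eq_of_dvd {m n : ℕ} (h : m ∣ n) {f g : BQ ℤ}
    (hfg : f.map (Int.castRingHom (ZMod n)) = g.map (Int.castRingHom (ZMod n))) :
    f.map (Int.castRingHom (ZMod m)) = g.map (Int.castRingHom (ZMod m)) := by
  have hcast : Int.castRingHom (ZMod m) = (ZMod.castHom h (ZMod m)).comp (Int.castRingHom _) :=
    RingHom.ext_int _ _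
  rw [hcast]
  exact congrArg (BQ.map (ZMod.castHom h (ZMod m))) hfg

/-- With `C` this quantity, `B` and `H` as in `BQ.depressedLin` and `BQ.depressedConst`, and
`ℓ = d x + 4 e y`, completing the fourth power in `f` gives
`256 e³ f(x, y) = ℓ⁴ + 2 C ℓ² x² + 8 B ℓ x³ + H x⁴`. -/
def BQ.depressedQuad (f : BQ R) : R := 8 * f.c * f.e - 3 * f.d ^ 2

/-- The linear coefficient `B` of the depressed quartic; see `BQ.depressedQuad`. -/
def BQ.depressedLin (f : BQ R) : R := 8 * f.b * f.e ^ 2 - (4 * f.c * f.e * f.d - f.d ^ 3)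

/-- The constant coefficient `H` of the depressed quartic; see `BQ.depressedQuad`. -/
def BQ.depressedConst (f : BQ R) : R :=
  256 * f.e ^ 3 * f.a - (64 * f.b * f.e ^ 2 * f.d - 16 * f.c * f.e * f.d ^ 2 + 3 * f.d ^ 4)

/-- The form `f + s (d x + 4 e y)⁴`. In the depressed quartic of `BQ.depressedQuad` this only
changes the leading coefficient `1` to `1 + 256 e³ s`. -/
def BQ.pencil (f : BQ R) (s : R) : BQ R :=
  ⟨f.a + s * f.d ^ 4, f.b + s * (16 * f.d ^ 3 * f.e), f.c + s * (96 * f.d ^ 2 * f.e ^ 2),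
    f.d + s * (256 * f.d * f.e ^ 3), f.e + s * (256 * f.e ^ 4)⟩

lemma BQ.map_pencil_of_eq_zero (φ : R →+* S) (f : BQ R) {s : R} (hs : φ s = 0) :
    (f.pencil s).map φ = f.map φ := by
  simp only [BQ.pencil, BQ.map, map_add, map_mul, hs, zero_mul, add_zero]

lemma BQ.disc_pencil (f : BQ R) {s l C B H : R} (hl : l = 1 + 256 * f.e ^ 3 * s)
    (hC : f.depressedQuad = C) (hB : f.depressedLin = B) (hH : f.depressedConst = H) :
    65536 * f.e ^ 6 * (f.pencil s).disc =
      l * (H ^ 3 * l ^ 2 + (-2 * H ^ 2 * C ^ 2 + 72 * H * B ^ 2 * C - 432 * B ^ 4) * l +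
        C ^ 3 * (H * C - 8 * B ^ 2)) := by
  subst hl hC hB hH
  simp only [BQ.pencil, BQ.disc, BQ.depressedQuad, BQ.depressedLin, BQ.depressedConst]
  ring

lemma exists_le_intCast_eq {N : ℕ} (hN : N ≠ 0) (x₀ L : ℤ) :
    ∃ x : ℤ, L ≤ x ∧ (x : ZMod N) = x₀ := by
  obtain ⟨x, hL, hx, -⟩ := exists_intCast_eq_of_not_dvd hN (S := ∅) (by simp) x₀ 0 L
  exact ⟨x, hL, hx⟩

lemma BQ.exists_map_eq_and_forall_prime_dvd_e {N : ℕ} (hN : N ≠ 0) (f₀ : BQ ℤ) :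
    ∃ f : BQ ℤ, f.map (Int.castRingHom (ZMod N)) = f₀.map (Int.castRingHom (ZMod N)) ∧ 0 < f.e ∧
      ∀ q : ℕ, q.Prime → ¬q ∣ N → (q : ℤ) ∣ f.e →
        f.map (Int.castRingHom (ZMod q)) = ⟨0, 1, 0, 1, 0⟩ := by
  obtain ⟨e, he, heN⟩ := exists_le_intCast_eq hN f₀.e 1
  set S := e.natAbs.primeFactors.filter (¬· ∣ N)
  have hS : ∀ q ∈ S, q.Prime ∧ ¬q ∣ N := fun q hq ↦
    (Finset.mem_filter.1 hq).imp_left Nat.prime_of_mem_primeFactors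
  obtain ⟨a, -, haN, ha⟩ := exists_intCast_eq_of_not_dvd hN hS f₀.a 0 0
  obtain ⟨b, -, hbN, hb⟩ := exists_intCast_eq_of_not_dvd hN hS f₀.b 1 0
  obtain ⟨c, -, hcN, hc⟩ := exists_intCast_eq_of_not_dvd hN hS f₀.c 0 0
  obtain ⟨d, -, hdN, hd⟩ := exists_intCast_eq_of_not_dvd hN hS f₀.d 1 0
  refine ⟨⟨a, b, c, d, e⟩, by simp [BQ.map, *], he, fun q hq hqN hqe ↦ ?_⟩
  have hqS : q ∈ S := Finset.mem_filter.2
    ⟨Nat.mem_primeFactors.2 ⟨hq, Int.natCast_dvd.1 hqe, by lia⟩, hqN⟩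
  have heq : (e : ZMod q) = 0 := (CharP.intCast_eq_zero_iff (ZMod q) q _).2 hqe
  simp [BQ.map, ha q hqS, hb q hqS, hc q hqS, hd q hqS, heq]

lemma BQ.exists_depressed_pos {N : ℕ} (hN : N ≠ 0) (g : BQ ℤ) (he : 0 < g.e)
    (hNe : ∀ q : ℕ, q.Prime → ¬q ∣ N → ¬(q : ℤ) ∣ 256 * g.e ^ 3) :
    ∃ f : BQ ℤ, f.map (Int.castRingHom (ZMod N)) = g.map (Int.castRingHom (ZMod N)) ∧ f.e = g.e ∧
      0 < f.depressedQuad ∧ 0 < f.depressedLin ∧ 9 * f.depressedLin ^ 2 < f.depressedConst ∧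
      ∀ q : ℕ, q.Prime → ¬q ∣ N → ¬((q : ℤ) ∣ f.depressedLin ∧ (q : ℤ) ∣ f.depressedConst) := by
  obtain ⟨c, hc, hcN⟩ := exists_le_intCast_eq hN g.c (3 * g.d ^ 2 + 1)
  obtain ⟨b, hb, hbN⟩ := exists_le_intCast_eq hN g.b (|4 * c * g.e * g.d - g.d ^ 3| + 1)
  set B := BQ.depressedLin ⟨g.a, b, c, g.d, g.e⟩ with hB
  set K := 64 * b * g.e ^ 2 * g.d - 16 * c * g.e * g.d ^ 2 + 3 * g.d ^ 4 with hK
  have hBpos : 0 < B := by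
    have := le_mul_of_one_le_right (by linarith [abs_nonneg (4 * c * g.e * g.d - g.d ^ 3)] : 0 ≤ b)
      (one_le_pow₀ he : 1 ≤ g.e ^ 2)
    simp only [hB, BQ.depressedLin]
    linarith [le_abs_self (4 * c * g.e * g.d - g.d ^ 3),
      abs_nonneg (4 * c * g.e * g.d - g.d ^ 3)]
  obtain ⟨a, ha, haN, haB⟩ := exists_intCast_eq_of_not_dvd hN
    (S := B.natAbs.primeFactors.filter (¬· ∣ N))
    (fun q hq ↦ (Finset.mem_filter.1 hq).imp_left Nat.prime_of_mem_primeFactors) g.a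
    (fun q ↦ ((256 * g.e ^ 3 : ℤ) : ZMod q)⁻¹ * (K + 1 : ℤ)) (9 * B ^ 2 + |K| + 1)
  refine ⟨⟨a, b, c, g.d, g.e⟩, by simp [BQ.map, *], rfl, ?_, hBpos, ?_,
    fun q hq hqN ⟨hqB, hqH⟩ ↦ ?_⟩
  · have := le_mul_of_one_le_right (by linarith [sq_nonneg g.d] : 0 ≤ c) he
    simp only [BQ.depressedQuad]
    linarith [sq_nonneg g.d]
  · have := le_mul_of_one_le_right (by linarith [abs_nonneg K, sq_nonneg B] : 0 ≤ a)
      (one_le_pow₀ he : 1 ≤ g.e ^ 3)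
    simp only [BQ.depressedConst, ← hK]
    change 9 * B ^ 2 < _
    linarith [le_abs_self K, abs_nonneg K, sq_nonneg B]
  · have : Fact q.Prime := ⟨hq⟩
    have haq := haB q (Finset.mem_filter.2
      ⟨Nat.mem_primeFactors.2 ⟨hq, Int.natCast_dvd.1 hqB, Int.natAbs_ne_zero.2 hBpos.ne'⟩, hqN⟩)
    have hunit : ((256 * g.e ^ 3 : ℤ) : ZMod q) ≠ 0 :=
      fun h ↦ hNe q hq hqN ((CharP.intCast_eq_zero_iff (ZMod q) q _).1 h)
    have hzero : ((256 * g.e ^ 3 * a - K : ℤ) : ZMod q) = 0 :=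
      (CharP.intCast_eq_zero_iff (ZMod q) q _).2 hqH
    rw [Int.cast_sub, Int.cast_mul, haq, mul_inv_cancel_left₀ hunit] at hzero
    simp at hzero

lemma resolvent_ne_zero {C B H : ℤ} (hC : 0 < C) (hB : 0 < B) (hH : 9 * B ^ 2 < H) :
    C ^ 3 * (H * C - 8 * B ^ 2) ≠ 0 ∧
      (-2 * H ^ 2 * C ^ 2 + 72 * H * B ^ 2 * C - 432 * B ^ 4) ^ 2 -
        4 * H ^ 3 * (C ^ 3 * (H * C - 8 * B ^ 2)) ≠ 0 := by
  have hHC : H ≤ H * C := le_mul_of_one_le_right (by nlinarith) hC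
  constructor
  · exact mul_ne_zero (pow_ne_zero 3 hC.ne') (by nlinarith)
  · have hfactor : (-2 * H ^ 2 * C ^ 2 + 72 * H * B ^ 2 * C - 432 * B ^ 4) ^ 2 -
        4 * H ^ 3 * (C ^ 3 * (H * C - 8 * B ^ 2)) = 256 * B ^ 2 * (9 * B ^ 2 - H * C) ^ 3 := by ring
    rw [hfactor]
    exact mul_ne_zero (by positivity) (pow_ne_zero 3 (by linarith))

lemma dvd_and_dvd_of_dvd_resolvent {q : ℕ} (hq : q.Prime) (hq10 : 10 < q) {C B H : ℤ}
    (hr₂ : (q : ℤ) ∣ H ^ 3)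
    (hr₁ : (q : ℤ) ∣ -2 * H ^ 2 * C ^ 2 + 72 * H * B ^ 2 * C - 432 * B ^ 4) :
    (q : ℤ) ∣ B ∧ (q : ℤ) ∣ H := by
  have hq' := Nat.prime_iff_prime_int.1 hq
  have hH := hq'.dvd_of_dvd_pow hr₂
  have hB : (q : ℤ) ∣ (6 ^ 3 * 2 : ℕ) * B ^ 4 :=
    (dvd_sub (hH.mul_right (-2 * H * C ^ 2 + 72 * B ^ 2 * C)) hr₁).trans
      (dvd_of_eq (by push_cast; ring))
  refine ⟨hq'.dvd_of_dvd_pow ((hq'.dvd_or_dvd hB).resolve_left fun h ↦ ?_), hH⟩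
  rcases hq.dvd_mul.1 (Int.natCast_dvd_natCast.1 h) with h | h
  · exact Nat.not_dvd_of_pos_of_lt (by simp) (by lia) (hq.dvd_of_dvd_pow h)
  · exact Nat.not_dvd_of_pos_of_lt (by simp) (by lia) h

lemma BQ.exists_pencil_forall_prime_not_sq_dvd_disc {n : ℕ} (hn : n ≠ 0)
    (hn10 : ∀ q : ℕ, q.Prime → ¬q ∣ n → 10 < q) {f : BQ ℤ} (he : f.e ≠ 0)
    (hne : ∀ q : ℕ, q.Prime → ¬q ∣ n → ¬(q : ℤ) ∣ 256 * f.e ^ 3)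
    (hC : 0 < f.depressedQuad) (hB : 0 < f.depressedLin)
    (hH : 9 * f.depressedLin ^ 2 < f.depressedConst)
    (hBH : ∀ q : ℕ, q.Prime → ¬q ∣ n →
      ¬((q : ℤ) ∣ f.depressedLin ∧ (q : ℤ) ∣ f.depressedConst)) :
    ∃ s : ℤ, (n : ℤ) ∣ s ∧ ∀ q : ℕ, q.Prime → ¬q ∣ n → ¬(q : ℤ) ^ 2 ∣ (f.pencil s).disc := by
  set M := (256 * f.e ^ 3 * n).natAbs with hM
  have hMn : ∀ {q : ℕ}, q.Prime → ¬q ∣ n → ¬q ∣ M := fun hq hqn h ↦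
    ((Nat.prime_iff_prime_int.1 hq).dvd_or_dvd (Int.natCast_dvd.2 h)).elim (hne _ hq hqn)
      (hqn <| Int.natCast_dvd_natCast.1 ·)
  have hnM : ∀ {q : ℕ}, ¬q ∣ M → ¬q ∣ n := mt fun h ↦
    Int.natCast_dvd.1 ((Int.natCast_dvd_natCast.2 h).mul_left _)
  obtain ⟨hr₀, hD⟩ := resolvent_ne_zero hC hB hH
  obtain ⟨l, hl, hsq⟩ := exists_intCast_eq_and_forall_prime_not_sq_dvd
    (pow_pos (lt_of_le_of_lt (by positivity) hH) 3) hr₀ hD (M := M) (by simp [hM, he, hn])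
    (fun q hq h ↦ hn10 q hq (hnM h)) (fun q hq h hdvd ↦ hBH q hq (hnM h)
      (dvd_and_dvd_of_dvd_resolvent hq (hn10 q hq (hnM h)) hdvd.1 hdvd.2)) 1
  obtain ⟨t, ht⟩ := Int.natAbs_dvd.1 ((ZMod.intCast_eq_intCast_iff_dvd_sub _ _ M).1 hl.symm)
  refine ⟨n * t, dvd_mul_right _ _, fun q hq hqn hdvd ↦ hsq q hq (hMn hq hqn) ?_⟩
  rw [← BQ.disc_pencil f (s := n * t) (by linear_combination ht) rfl rfl rfl]
  exact hdvd.mul_left _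

theorem BQ.exists_map_eq_and_forall_prime_not_sq_dvd_disc {N : ℕ} (hN : N ≠ 0)
    (hN10 : ∀ q : ℕ, q.Prime → ¬q ∣ N → 10 < q) (f₀ : BQ ℤ) :
    ∃ f : BQ ℤ, f.map (Int.castRingHom (ZMod N)) = f₀.map (Int.castRingHom (ZMod N)) ∧
      ∀ q : ℕ, q.Prime → ¬q ∣ N → ¬(q : ℤ) ^ 2 ∣ f.disc := by
  obtain ⟨g, hgN, hge, hgq⟩ := BQ.exists_map_eq_and_forall_prime_dvd_e hN f₀
  set n := N * g.e.natAbs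
  have hn : n ≠ 0 := mul_ne_zero hN (Int.natAbs_ne_zero.2 hge.ne')
  have hn10 : ∀ q : ℕ, q.Prime → ¬q ∣ n → 10 < q := fun q hq h ↦
    hN10 q hq fun hqN ↦ h (hqN.mul_right _)
  have hne : ∀ q : ℕ, q.Prime → ¬q ∣ n → ¬(q : ℤ) ∣ 256 * g.e ^ 3 := fun q hq hqn h ↦ by
    rcases (Nat.prime_iff_prime_int.1 hq).dvd_or_dvd h with h2 | he
    · have hdvd := hq.dvd_of_dvd_pow (show q ∣ 2 ^ 8 by exact_mod_cast h2)
      exact Nat.not_dvd_of_pos_of_lt two_pos (by linarith [hn10 q hq hqn]) hdvd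
    · exact hqn ((Int.natCast_dvd.1
        ((Nat.prime_iff_prime_int.1 hq).dvd_of_dvd_pow he)).mul_left N)
  obtain ⟨f, hfn, hfe, hC, hB, hH, hBH⟩ := BQ.exists_depressed_pos hn g hge hne
  obtain ⟨s, hns, hs⟩ := BQ.exists_pencil_forall_prime_not_sq_dvd_disc hn hn10
    (hfe ▸ hge.ne') (hfe ▸ hne) hC hB hH hBH
  have hpencil : ∀ m : ℕ, m ∣ n → (f.pencil s).map (Int.castRingHom (ZMod m)) =
      g.map (Int.castRingHom (ZMod m)) := fun m hm ↦ by
    rw [BQ.map_pencil_of_eq_zero _ _ ((CharP.intCast_eq_zero_iff (ZMod m) m s).2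
      ((Int.natCast_dvd_natCast.2 hm).trans hns)), BQ.map_intCast_eq_of_dvd hm hfn]
  refine ⟨f.pencil s, (hpencil N (dvd_mul_right _ _)).trans hgN, fun q hq hqN hdvd ↦ ?_⟩
  by_cases hqe : (q : ℤ) ∣ g.e
  · have hdisc := congrArg BQ.disc
      ((hpencil q ((Int.natCast_dvd.1 hqe).mul_left N)).trans (hgq q hq hqN hqe))
    rw [BQ.disc_map, eq_intCast, (CharP.intCast_eq_zero_iff (ZMod q) q _).2
      ((dvd_pow_self _ two_ne_zero).trans hdvd)] at hdisc
    have hfour : ((4 : ℕ) : ZMod q) = 0 := by simpa [BQ.disc] using hdisc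
    exact Nat.not_dvd_of_pos_of_lt (by simp) (by linarith [hN10 q hq hqN])
      ((ZMod.natCast_eq_zero_iff 4 q).1 hfour)
  · exact hs q hq (fun h ↦ (hq.dvd_mul.1 h).elim hqN fun h ↦ hqe (Int.natCast_dvd.2 h)) hdvd

end SquarefreeDiscriminant

section PolynomialCongruences

open Polynomial

theorem exists_eq_C_add_X_sub_C_mul {R : Type*} [CommRing R] {f : R[X]} {n : ℕ}
    (hf : f.natDegree ≤ n + 1) (y : R) :
    ∃ g : R[X], g.natDegree ≤ n ∧ C (f.eval y) + (X - C y) * g = f := by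
  refine ⟨f /ₘ (X - C y), ?_, ?_⟩
  · rcases subsingleton_or_nontrivial R with _ | _
    · simp [Subsingleton.elim (f /ₘ (X - C y)) 0]
    · rw [natDegree_divByMonic f (monic_X_sub_C y), natDegree_X_sub_C]
      exact Nat.sub_le_iff_le_add.2 hf
  · rw [← modByMonic_X_sub_C_eq_C_eval]
    exact modByMonic_add_div f (X - C y)

theorem dvd_pow_mul_coeff_of_dvd_eval {R : Type*} [CommRing R] {q D : R} {n : ℕ} {f : R[X]}
    (hf : f.natDegree ≤ n) {S : Finset R} (hS : S.card = n + 1)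
    (hD : ∀ x ∈ S, ∀ y ∈ S, x ≠ y → x - y ∣ D) (hq : ∀ x ∈ S, q ∣ f.eval x) (k : ℕ) :
    q ∣ D ^ n * f.coeff k := by
  classical
  induction n generalizing f S k with
  | zero =>
    obtain ⟨x, rfl⟩ := Finset.card_eq_one.1 hS
    have hx := hq x (Finset.mem_singleton_self x)
    rw [eq_C_of_natDegree_le_zero hf, eval_C] at hx
    rw [pow_zero, one_mul]
    rcases k.eq_zero_or_pos with rfl | hk
    · exact hx
    · rw [coeff_eq_zero_of_natDegree_lt (hf.trans_lt hk)]
      exact dvd_zero q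
  | succ n ih =>
    obtain ⟨y, T, hyT, rfl, hT⟩ := Finset.card_eq_succ.1 hS
    have hy := hq y (Finset.mem_insert_self y T)
    obtain ⟨g, hg, hfg⟩ := exists_eq_C_add_X_sub_C_mul hf y
    have hg_eval : ∀ x ∈ T, q ∣ (C D * g).eval x := by
      intro x hx
      have hxT : x ∈ insert y T := Finset.mem_insert_of_mem hx
      obtain ⟨c, hc⟩ := hD x hxT y (Finset.mem_insert_self y T) (ne_of_mem_of_not_mem hx hyT)
      have hfx : f.eval x - f.eval y = (x - y) * g.eval x := by
        conv_lhs => rw [← hfg]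
        simp
      refine ((dvd_sub (hq x hxT) hy).mul_left c).trans (dvd_of_eq ?_)
      rw [hfx, eval_mul, eval_C, hc]
      ring
    have hg_coeff (k : ℕ) : q ∣ D ^ (n + 1) * g.coeff k := by
      have := ih ((natDegree_C_mul_le D g).trans hg) hT (fun x hx z hz ↦
        hD x (Finset.mem_insert_of_mem hx) z (Finset.mem_insert_of_mem hz)) hg_eval k
      rwa [coeff_C_mul, ← mul_assoc, ← pow_succ] at this
    rw [← hfg, coeff_add, sub_mul, coeff_sub, coeff_C_mul, mul_add, mul_sub, mul_left_comm]
    refine dvd_add (dvd_mul_of_dvd_right ?_ _) (dvd_sub ?_ ((hg_coeff k).mul_left y))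
    · rw [coeff_C]
      split_ifs
      exacts [hy, dvd_zero q]
    · rcases k with _ | k
      · simp
      · simpa using hg_coeff k

theorem dvd_pow_of_not_pow_succ_dvd {R : Type*} [CommRing R] [IsDomain R] [ValuationRing R]
    {ϖ x : R} (hϖ : Prime ϖ) {m : ℕ} (h : ¬ϖ ^ (m + 1) ∣ x) : x ∣ ϖ ^ m := by
  obtain ⟨i, hi, hx⟩ := (dvd_prime_pow hϖ (m + 1)).1 ((ValuationRing.dvd_total x _).resolve_right h)
  refine hx.dvd.trans (pow_dvd_pow _ (Nat.lt_succ_iff.1 (hi.lt_of_ne ?_)))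
  rintro rfl
  exact h hx.symm.dvd

theorem isUnit_of_prime_not_dvd {R : Type*} [CommRing R] [IsDomain R] [ValuationRing R]
    {ϖ x : R} (hϖ : Prime ϖ) (h : ¬ϖ ∣ x) : IsUnit x :=
  isUnit_of_dvd_one (by simpa using dvd_pow_of_not_pow_succ_dvd (m := 0) hϖ (by simpa using h))

variable {p : ℕ} [hp : Fact p.Prime]

theorem eq_of_pow_dvd_natCast_sub {m i j : ℕ} (hi : i < p ^ m) (hj : j < p ^ m)
    (h : (p : ℤ_[p]) ^ m ∣ (i : ℤ_[p]) - j) : i = j := by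
  rw [← Ideal.mem_span_singleton, ← PadicInt.ker_toZModPow, RingHom.mem_ker, map_sub, map_natCast,
    map_natCast, sub_eq_zero, ZMod.natCast_eq_natCast_iff'] at h
  rwa [Nat.mod_eq_of_lt hi, Nat.mod_eq_of_lt hj] at h

theorem card_le_of_pow_dvd_eval {f : ℤ_[p][X]} {d m n k : ℕ} (hf : f.natDegree ≤ d)
    (hk : ¬(p : ℤ_[p]) ^ n ∣ (p : ℤ_[p]) ^ (m * d) * f.coeff k) (y : ℤ_[p]) {B : Finset ℕ}
    (hB : B ⊆ Finset.range (p ^ (m + 1))) (h : ∀ i ∈ B, (p : ℤ_[p]) ^ n ∣ f.eval (i + y)) :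
    B.card ≤ d := by
  classical
  by_contra! hcard
  obtain ⟨T, hTB, hT⟩ := Finset.exists_subset_card_eq hcard
  have hinj : Function.Injective fun i : ℕ ↦ (i : ℤ_[p]) + y :=
    (add_left_injective y).comp Nat.cast_injective
  refine hk ((dvd_pow_mul_coeff_of_dvd_eval (D := (p : ℤ_[p]) ^ m) hf
    (S := T.image fun i : ℕ ↦ (i : ℤ_[p]) + y) ?_ ?_ ?_ k).trans (dvd_of_eq (by rw [← pow_mul])))
  · rw [Finset.card_image_of_injective T hinj, hT]
  · simp only [Finset.forall_mem_image, add_sub_add_right_eq_sub]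
    intro i hi j hj hij
    refine dvd_pow_of_not_pow_succ_dvd PadicInt.prime_p fun hdvd ↦ hij ?_
    rw [eq_of_pow_dvd_natCast_sub (Finset.mem_range.1 (hB (hTB hi)))
      (Finset.mem_range.1 (hB (hTB hj))) hdvd]
  · exact Finset.forall_mem_image.2 fun i hi ↦ h i (hTB hi)

theorem card_le_of_dvd_eval {f : ℤ_[p][X]} {d k : ℕ} (hf : f.natDegree ≤ d)
    (hk : ¬(p : ℤ_[p]) ∣ f.coeff k) (y : ℤ_[p]) {B : Finset ℕ} (hB : B ⊆ Finset.range p)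
    (h : ∀ i ∈ B, (p : ℤ_[p]) ∣ f.eval (i + y)) : B.card ≤ d :=
  card_le_of_pow_dvd_eval (m := 0) (n := 1) hf (by simpa using hk) y (by simpa using hB)
    (by simpa using h)

theorem natCast_sub_natCast_mod_dvd (i : ℕ) :
    (p : ℤ_[p]) ∣ (i : ℤ_[p]) - ((i % p : ℕ) : ℤ_[p]) := by
  rw [← Int.cast_natCast i, ← Int.cast_natCast (i % p), ← Int.cast_sub, ← Int.cast_natCast p]
  refine Int.cast_dvd_cast _ _ ?_
  push_cast
  exact Int.dvd_self_sub_emod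

/-- Simple roots modulo `p` lift uniquely, so reduction modulo `p` is injective on `B`. -/
theorem card_le_of_sq_dvd_eval {f : ℤ_[p][X]} {d k : ℕ} (hf : f.natDegree ≤ d)
    (hk : ¬(p : ℤ_[p]) ∣ f.coeff k) (y : ℤ_[p]) {B : Finset ℕ} (hB : B ⊆ Finset.range (p ^ 2))
    (h : ∀ i ∈ B, (p : ℤ_[p]) ^ 2 ∣ f.eval (i + y))
    (h' : ∀ i ∈ B, ¬(p : ℤ_[p]) ∣ f.derivative.eval (i + y)) : B.card ≤ d := by
  have hinj : Set.InjOn (· % p) (B : Set ℕ) := by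
    intro i hi j hj (hij : i % p = j % p)
    have hsub : (p : ℤ_[p]) ∣ (i : ℤ_[p]) - j := by
      have := dvd_sub (natCast_sub_natCast_mod_dvd (p := p) i) (natCast_sub_natCast_mod_dvd j)
      rwa [hij, sub_sub_sub_cancel_right] at this
    obtain ⟨c, hc⟩ := f.binomExpansion (j + y) (i - j)
    have hfactor : f.eval (i + y) - f.eval (j + y)
        = (i - j) * (f.derivative.eval (j + y) + (i - j) * c) := by
      rw [show (i : ℤ_[p]) + y = j + y + (i - j) by ring, hc]
      ring
    have hunit : IsUnit (f.derivative.eval (j + y) + (i - j) * c) :=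
      isUnit_of_prime_not_dvd PadicInt.prime_p fun hdvd ↦
        h' j hj ((dvd_add_left (hsub.mul_right c)).1 hdvd)
    have hsq := dvd_sub (h i hi) (h j hj)
    rw [hfactor, hunit.dvd_mul_right] at hsq
    exact eq_of_pow_dvd_natCast_sub (Finset.mem_range.1 (hB hi)) (Finset.mem_range.1 (hB hj)) hsq
  rw [← Finset.card_image_of_injOn hinj]
  refine card_le_of_dvd_eval hf hk y ?_ (Finset.forall_mem_image.2 fun i hi ↦ ?_)
  · exact Finset.image_subset_iff.2 fun i _ ↦ Finset.mem_range.2 (Nat.mod_lt i hp.out.pos)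
  · have hmod : (p : ℤ_[p]) ∣ f.eval (i + y) - f.eval (↑(i % p) + y) :=
      (natCast_sub_natCast_mod_dvd i).trans
        (by simpa using sub_dvd_eval_sub (i + y) (↑(i % p) + y) f)
    exact (dvd_iff_dvd_of_dvd_sub hmod).1 ((dvd_pow_self _ two_ne_zero).trans (h i hi))

end PolynomialCongruences

section FibreCounting

open Polynomial

theorem card_mul_measureReal_le {G : Type*} [AddGroup G] [MeasurableSpace G] [MeasurableAdd G]
    {μ : Measure G} [IsProbabilityMeasure μ] [μ.IsAddLeftInvariant] {A : Set G}
    (hA : MeasurableSet A) {ι : Type*} (T : Finset ι) (t : ι → G) {n : ℕ}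
    (h : ∀ v, ∀ B ⊆ T, (∀ i ∈ B, t i + v ∈ A) → B.card ≤ n) : T.card * μ.real A ≤ n := by
  classical
  have hmeas (i : ι) : MeasurableSet {v | t i + v ∈ A} := measurable_const_add (t i) hA
  have hint (i : ι) : ∫ v, Set.indicator {v | t i + v ∈ A} 1 v ∂μ = μ.real A := by
    rw [integral_indicator_one (hmeas i)]
    exact congrArg ENNReal.toReal (measure_preimage_add μ (t i) A)
  calc T.card * μ.real A = ∑ i ∈ T, ∫ v, Set.indicator {v | t i + v ∈ A} 1 v ∂μ := by
        simp [hint]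
    _ = ∫ v, ∑ i ∈ T, Set.indicator {v | t i + v ∈ A} (1 : G → ℝ) v ∂μ :=
        (integral_finsetSum T fun i _ ↦ (integrable_const 1).indicator (hmeas i)).symm
    _ ≤ ∫ _, (n : ℝ) ∂μ := by
        refine integral_mono (integrable_finsetSum T fun i _ ↦
          (integrable_const 1).indicator (hmeas i)) (integrable_const _) fun v ↦ ?_
        simp only [Set.indicator_apply, Set.mem_ofPred_eq, Pi.one_apply, Finset.sum_boole]
        exact_mod_cast h v _ (Finset.filter_subset _ _) fun i hi ↦ (Finset.mem_filter.1 hi).2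
    _ = n := by simp

theorem card_le_mul_of_card_image_fst_le {α β : Type*} [DecidableEq α] {B : Finset (α × β)}
    {n m : ℕ} (h₁ : (B.image Prod.fst).card ≤ n)
    (h₂ : ∀ i, ∀ C : Finset β, (∀ j ∈ C, (i, j) ∈ B) → C.card ≤ m) : B.card ≤ n * m := by
  classical
  rw [mul_comm n m]
  refine (Finset.card_le_mul_card_image B m fun i _ ↦ ?_).trans (Nat.mul_le_mul_left m h₁)
  rw [← Finset.card_image_of_injOn (f := Prod.snd)]
  · refine h₂ i _ (Finset.forall_mem_image.2 ?_)
    rintro ⟨i', j⟩ hx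
    obtain ⟨hxB, rfl : i' = i⟩ := Finset.mem_filter.1 hx
    exact hxB
  · rintro ⟨_, j⟩ hx ⟨_, j'⟩ hx' (rfl : j = j')
    rw [Finset.coe_filter, Set.mem_ofPred_eq] at hx hx'
    exact Prod.ext (hx.2.trans hx'.2.symm) rfl

variable {p : ℕ} [hp : Fact p.Prime] {ι : Type*} [DecidableEq ι]
  {μ : Measure (ι → ℤ_[p])} [IsProbabilityMeasure μ] [μ.IsAddLeftInvariant]
  {A : Set (ι → ℤ_[p])} {d e n m : ℕ} {j l : ι}

theorem measureReal_le_of_pow_dvd_eval (hA : MeasurableSet A) {F : (ι → ℤ_[p]) → ℤ_[p][X]}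
    (hF : ∀ x v, F (Pi.single j x + v) = F v) (hdeg : ∀ v, (F v).natDegree ≤ d)
    (hcoeff : ∀ v ∈ A, ∃ k, ¬(p : ℤ_[p]) ^ n ∣ (p : ℤ_[p]) ^ (m * d) * (F v).coeff k)
    (hdvd : ∀ v ∈ A, (p : ℤ_[p]) ^ n ∣ (F v).eval (v j)) :
    μ.real A ≤ d / (p : ℝ) ^ (m + 1) := by
  rw [le_div_iff₀' (pow_pos (Nat.cast_pos.2 hp.out.pos) _)]
  have := card_mul_measureReal_le (μ := μ) hA (Finset.range (p ^ (m + 1)))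
    (fun i : ℕ ↦ Pi.single j (i : ℤ_[p])) (n := d) fun v B hB hBA ↦ ?_
  · simpa using this
  rcases B.eq_empty_or_nonempty with rfl | ⟨i₀, hi₀⟩
  · simp
  obtain ⟨k, hk⟩ := hcoeff _ (hBA i₀ hi₀)
  refine card_le_of_pow_dvd_eval (hdeg v) (by rwa [hF] at hk) (v j) hB fun i hi ↦ ?_
  simpa [hF] using hdvd _ (hBA i hi)

theorem measureReal_le_of_sq_dvd_eval (hA : MeasurableSet A) {F : (ι → ℤ_[p]) → ℤ_[p][X]}
    (hF : ∀ x v, F (Pi.single j x + v) = F v) (hdeg : ∀ v, (F v).natDegree ≤ d)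
    (hcoeff : ∀ v ∈ A, ∃ k, ¬(p : ℤ_[p]) ∣ (F v).coeff k)
    (hdvd : ∀ v ∈ A, (p : ℤ_[p]) ^ 2 ∣ (F v).eval (v j))
    (hsimple : ∀ v ∈ A, ¬(p : ℤ_[p]) ∣ (F v).derivative.eval (v j)) :
    μ.real A ≤ d / (p : ℝ) ^ 2 := by
  rw [le_div_iff₀' (pow_pos (Nat.cast_pos.2 hp.out.pos) _)]
  have := card_mul_measureReal_le (μ := μ) hA (Finset.range (p ^ 2))
    (fun i : ℕ ↦ Pi.single j (i : ℤ_[p])) (n := d) fun v B hB hBA ↦ ?_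
  · simpa using this
  rcases B.eq_empty_or_nonempty with rfl | ⟨i₀, hi₀⟩
  · simp
  obtain ⟨k, hk⟩ := hcoeff _ (hBA i₀ hi₀)
  refine card_le_of_sq_dvd_eval (hdeg v) (by rwa [hF] at hk) (v j) hB (fun i hi ↦ ?_)
    fun i hi ↦ ?_
  · simpa [hF] using hdvd _ (hBA i hi)
  · simpa [hF] using hsimple _ (hBA i hi)

theorem measureReal_le_of_dvd_eval_of_dvd_eval (hA : MeasurableSet A) (hjl : j ≠ l)
    {F G : (ι → ℤ_[p]) → ℤ_[p][X]} (hF : ∀ x y v, F (Pi.single j x + Pi.single l y + v) = F v)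
    (hG : ∀ y v, G (Pi.single l y + v) = G v)
    (hFdeg : ∀ v, (F v).natDegree ≤ d) (hGdeg : ∀ v, (G v).natDegree ≤ e)
    (hFcoeff : ∀ v ∈ A, ∃ k, ¬(p : ℤ_[p]) ∣ (F v).coeff k)
    (hGcoeff : ∀ v ∈ A, ∃ k, ¬(p : ℤ_[p]) ∣ (G v).coeff k)
    (hFdvd : ∀ v ∈ A, (p : ℤ_[p]) ∣ (F v).eval (v j))
    (hGdvd : ∀ v ∈ A, (p : ℤ_[p]) ∣ (G v).eval (v l)) :
    μ.real A ≤ d * e / (p : ℝ) ^ 2 := by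
  rw [le_div_iff₀' (pow_pos (Nat.cast_pos.2 hp.out.pos) _)]
  have := card_mul_measureReal_le (μ := μ) hA (Finset.range p ×ˢ Finset.range p)
    (fun i : ℕ × ℕ ↦ Pi.single j (i.1 : ℤ_[p]) + Pi.single l (i.2 : ℤ_[p])) (n := d * e)
    fun v B hB hBA ↦ ?_
  · simpa [← sq] using this
  rcases B.eq_empty_or_nonempty with rfl | ⟨i₀, hi₀⟩
  · simp
  refine card_le_mul_of_card_image_fst_le ?_ fun i C hC ↦ ?_
  · obtain ⟨k, hk⟩ := hFcoeff _ (hBA i₀ hi₀)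
    refine card_le_of_dvd_eval (hFdeg v) (by rwa [hF] at hk) (v j)
      (Finset.image_subset_iff.2 fun x hx ↦ (Finset.mem_product.1 (hB hx)).1)
      (Finset.forall_mem_image.2 fun x hx ↦ ?_)
    simpa [hF, hjl] using hFdvd _ (hBA x hx)
  · rcases C.eq_empty_or_nonempty with rfl | ⟨c, hc⟩
    · simp
    have hGC (x : ℕ) : G (Pi.single j (i : ℤ_[p]) + Pi.single l (x : ℤ_[p]) + v)
        = G (Pi.single j (i : ℤ_[p]) + v) := by
      rw [add_assoc, add_left_comm, hG]
    obtain ⟨k, hk⟩ := hGcoeff _ (hBA _ (hC c hc))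
    rw [hGC] at hk
    refine card_le_of_dvd_eval (hGdeg _) hk (v l)
      (fun x hx ↦ (Finset.mem_product.1 (hB (hC x hx))).2) fun x hx ↦ ?_
    simpa [hGC, hjl.symm] using hGdvd _ (hBA _ (hC x hx))

end FibreCounting

section DiscriminantCubic

open Polynomial

variable {R : Type*} [CommRing R]

theorem natDegree_toPoly_le (P : Cubic R) : P.toPoly.natDegree ≤ 3 :=
  natDegree_cubic_le

/-- The cofactors come from eliminating `x` between `P` and `P'` by the Euclidean algorithm. -/
theorem dvd_discr_of_dvd_eval {P : Cubic R} {q x : R} (h : q ∣ P.toPoly.eval x)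
    (h' : q ∣ P.toPoly.derivative.eval x) : q ∣ P.discr := by
  obtain ⟨α, β, γ, δ⟩ := P
  simp only [Cubic.toPoly, eval_add, eval_mul, eval_C, eval_pow, eval_X, derivative_add,
    derivative_mul, derivative_C, derivative_X_pow, derivative_X, map_natCast,
    eval_natCast, eval_zero, eval_one] at h h'
  set u := 6 * α * γ - 2 * β ^ 2 with hu
  set w := 9 * α * δ - β * γ with hw
  refine (dvd_sub (h.mul_left (3 * α * (u * x - w) + 2 * β * u)) (h'.mul_left
    (α * u * x ^ 2 - α * w * x + β * u * x + 4 * α * γ ^ 2 - β ^ 2 * γ - 3 * α * β * δ))).trans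
    (dvd_of_eq ?_)
  simp only [Cubic.discr, hu, hw]
  push_cast
  ring

/-- The quartic form `a x⁴ + v₀ x³y + v₁ x²y² + v₂ xy³ + v₃ y⁴`; this identifies `V_a(R)` with
`R⁴`. -/
def BQ.ofLeadingCoeff (a : R) (v : Fin 4 → R) : BQ R := ⟨a, v 0, v 1, v 2, v 3⟩

/-- The discriminant of `a x⁴ + b x³y + c x²y² + d xy³ + e y⁴` as a cubic polynomial in `e`. -/
def discCubic (a b c d : R) : Cubic R where
  a := 256 * a ^ 3
  b := -192 * a ^ 2 * b * d - 128 * a ^ 2 * c ^ 2 + 144 * a * b ^ 2 * c - 27 * b ^ 4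
  c := 144 * a ^ 2 * c * d ^ 2 - 6 * a * b ^ 2 * d ^ 2 - 80 * a * b * c ^ 2 * d + 16 * a * c ^ 4
    + 18 * b ^ 3 * c * d - 4 * b ^ 2 * c ^ 3
  d := -27 * a ^ 2 * d ^ 4 + 18 * a * b * c * d ^ 3 - 4 * a * c ^ 3 * d ^ 2 - 4 * b ^ 3 * d ^ 3
    + b ^ 2 * c ^ 2 * d ^ 2

/-- The product of the two factors of the discriminant of `discCubic a b c d`, as a cubic
polynomial in `d`: its roots are the `d` for which `discCubic a b c d` has a multiple root. -/
def criticalCubic (a b c : R) : Cubic R where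
  a := 864 * a ^ 4
  b := 8 * a ^ 2 * (27 * b ^ 3 - 108 * a * b * c) + 108 * a ^ 2 * (b ^ 3 - 4 * a * b * c)
  c := 8 * a ^ 2 * (32 * a * c ^ 3 - 9 * b ^ 2 * c ^ 2) + 27 * (b ^ 3 - 4 * a * b * c) ^ 2
  d := (b ^ 3 - 4 * a * b * c) * (32 * a * c ^ 3 - 9 * b ^ 2 * c ^ 2)

theorem eval_discCubic (a : R) (v : Fin 4 → R) :
    (discCubic a (v 0) (v 1) (v 2)).toPoly.eval (v 3) = (BQ.ofLeadingCoeff a v).disc := by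
  simp only [discCubic, Cubic.toPoly, BQ.ofLeadingCoeff, BQ.disc, eval_add, eval_mul, eval_C,
    eval_pow, eval_X]
  ring

theorem discr_discCubic (a b c d : R) :
    (discCubic a b c d).discr = -16 * (8 * a ^ 2 * d + (b ^ 3 - 4 * a * b * c)) ^ 2 *
      (108 * a ^ 2 * d ^ 2 + (27 * b ^ 3 - 108 * a * b * c) * d
        + (32 * a * c ^ 3 - 9 * b ^ 2 * c ^ 2)) ^ 3 := by
  simp only [discCubic, Cubic.discr]
  ring

theorem eval_criticalCubic (a b c d : R) :
    (criticalCubic a b c).toPoly.eval d = (8 * a ^ 2 * d + (b ^ 3 - 4 * a * b * c)) *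
      (108 * a ^ 2 * d ^ 2 + (27 * b ^ 3 - 108 * a * b * c) * d
        + (32 * a * c ^ 3 - 9 * b ^ 2 * c ^ 2)) := by
  simp only [criticalCubic, Cubic.toPoly, eval_add, eval_mul, eval_C, eval_pow, eval_X]
  ring

theorem dvd_eval_criticalCubic {q a b c d e : R} (hq : Prime q) (h2 : ¬q ∣ 2)
    (h : q ∣ (discCubic a b c d).toPoly.eval e)
    (h' : q ∣ (discCubic a b c d).toPoly.derivative.eval e) :
    q ∣ (criticalCubic a b c).toPoly.eval d := by
  have hdiscr := dvd_discr_of_dvd_eval h h'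
  rw [discr_discCubic, neg_mul, neg_mul, dvd_neg, show (16 : R) = 2 ^ 4 by norm_num] at hdiscr
  rw [eval_criticalCubic]
  rcases hq.dvd_or_dvd hdiscr with hdiscr | hdiscr
  · rcases hq.dvd_or_dvd hdiscr with hdiscr | hdiscr
    · exact absurd (hq.dvd_of_dvd_pow hdiscr) h2
    · exact (hq.dvd_of_dvd_pow hdiscr).mul_right _
  · exact (hq.dvd_of_dvd_pow hdiscr).mul_left _

theorem exists_not_dvd_coeff_criticalCubic {q a b : R} (hq : Prime q) (h2 : ¬q ∣ 2) (h3 : ¬q ∣ 3)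
    (hab : ¬(q ∣ a ∧ q ∣ b)) (c : R) : ∃ k, ¬q ∣ (criticalCubic a b c).toPoly.coeff k := by
  by_cases ha : q ∣ a
  · refine ⟨1, fun h ↦ hab ⟨ha, ?_⟩⟩
    have h27 : q ∣ 3 ^ 3 * b ^ 6 := by
      rw [Cubic.coeff_eq_c] at h
      obtain ⟨x, rfl⟩ := ha
      refine (dvd_sub h ⟨8 * q * x ^ 2 * (32 * (q * x) * c ^ 3 - 9 * b ^ 2 * c ^ 2)
        + 27 * (16 * q * (x * b * c) ^ 2 - 8 * x * b ^ 4 * c), rfl⟩).trans (dvd_of_eq ?_)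
      simp only [criticalCubic]
      ring
    exact hq.dvd_of_dvd_pow
      ((hq.dvd_or_dvd h27).resolve_left fun h ↦ h3 (hq.dvd_of_dvd_pow h))
  · refine ⟨3, fun h ↦ ?_⟩
    rw [Cubic.coeff_eq_a, criticalCubic, show (864 : R) = 2 ^ 5 * 3 ^ 3 by norm_num] at h
    rcases hq.dvd_or_dvd h with h | h
    · rcases hq.dvd_or_dvd h with h | h
      exacts [h2 (hq.dvd_of_dvd_pow h), h3 (hq.dvd_of_dvd_pow h)]
    · exact ha (hq.dvd_of_dvd_pow h)

end DiscriminantCubic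

section Coefficients

variable {R : Type*} [CommRing R] {q a b : R}

theorem exists_not_pow_dvd_coeff_discCubic [IsDomain R] [ValuationRing R] (hq : Prime q)
    (h2 : ¬q ∣ 2) (h3 : ¬q ∣ 3) {m : ℕ} (hb : ¬q ^ (m + 1) ∣ b) (c d : R) :
    ∃ k, ¬q ^ (9 * m + 1) ∣ q ^ (m * 3) * (discCubic a b c d).toPoly.coeff k := by
  have hcancel (x : R) : q ^ (9 * m + 1) ∣ q ^ (m * 3) * x ↔ q ^ (6 * m + 1) ∣ x := by
    rw [show 9 * m + 1 = m * 3 + (6 * m + 1) by ring, pow_add]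
    exact mul_dvd_mul_iff_left (pow_ne_zero _ hq.ne_zero)
  simp only [hcancel]
  by_cases ha : q ^ (2 * m + 1) ∣ a
  · refine ⟨2, fun h ↦ h3 (hq.dvd_of_dvd_pow (n := 3) ?_)⟩
    have hbq : b ∣ q ^ m := dvd_pow_of_not_pow_succ_dvd hq hb
    have hb0 : b ≠ 0 := by rintro rfl; exact hb (dvd_zero _)
    obtain ⟨x, rfl⟩ : b ^ 2 * q ∣ a := by
      refine Dvd.dvd.trans ?_ ha
      rw [pow_succ q, mul_comm 2 m, pow_mul]
      exact mul_dvd_mul_right (pow_dvd_pow_of_dvd hbq 2) q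
    have hb4 : b ^ 4 * q ∣ q ^ (6 * m + 1) := by
      rw [pow_succ q]
      refine mul_dvd_mul_right ((pow_dvd_pow_of_dvd hbq 4).trans ?_) q
      rw [← pow_mul]
      exact pow_dvd_pow q (by omega)
    refine (mul_dvd_mul_iff_left (pow_ne_zero 4 hb0)).1 ((dvd_sub (Dvd.intro
      (-192 * q * x ^ 2 * b * d - 128 * q * x ^ 2 * c ^ 2 + 144 * x * c) rfl)
      (hb4.trans h)).trans (dvd_of_eq ?_))
    rw [Cubic.coeff_eq_b, discCubic]
    ring
  · refine ⟨3, fun h ↦ ?_⟩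
    have h256 : IsUnit (256 : R) := by
      rw [show (256 : R) = 2 ^ 8 by norm_num]
      exact (isUnit_of_prime_not_dvd hq h2).pow 8
    rw [Cubic.coeff_eq_a, discCubic, h256.dvd_mul_left] at h
    have := h.trans (pow_dvd_pow_of_dvd (dvd_pow_of_not_pow_succ_dvd hq ha) 3)
    rw [← pow_mul, pow_dvd_pow_iff hq.ne_zero hq.not_isUnit] at this
    omega

theorem exists_not_dvd_coeff_discCubic [IsDomain R] [ValuationRing R] (hq : Prime q)
    (h2 : ¬q ∣ 2) (h3 : ¬q ∣ 3) (hab : ¬(q ∣ a ∧ q ∣ b)) (c d : R) :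
    ∃ k, ¬q ∣ (discCubic a b c d).toPoly.coeff k := by
  by_cases hb : q ∣ b
  · refine ⟨3, fun h ↦ ?_⟩
    rw [Cubic.coeff_eq_a, discCubic, show (256 : R) = 2 ^ 8 by norm_num] at h
    rcases hq.dvd_or_dvd h with h | h
    exacts [h2 (hq.dvd_of_dvd_pow h), hab ⟨hq.dvd_of_dvd_pow h, hb⟩]
  · simpa using exists_not_pow_dvd_coeff_discCubic (m := 0) hq h2 h3 (by simpa using hb) c d

theorem dvd_or_dvd_of_sq_dvd_disc [IsDomain R] {f : BQ R} (hq : Prime q) (h2 : ¬q ∣ 2)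
    (ha : q ∣ f.a) (ha2 : ¬q ^ 2 ∣ f.a) (hb : q ∣ f.b) (h : q ^ 2 ∣ f.disc) :
    q ∣ f.c ∨ q ∣ 4 * f.c * f.e - f.d ^ 2 := by
  obtain ⟨a, b, c, d, e⟩ := f
  obtain ⟨a, rfl⟩ := ha
  obtain ⟨b, rfl⟩ := hb
  have hlead : q ^ 2 ∣ q * (2 ^ 2 * (a * (c ^ 3 * (4 * c * e - d ^ 2)))) := by
    refine (dvd_sub h ⟨256 * q * a ^ 3 * e ^ 3 - 192 * q * a ^ 2 * b * d * e ^ 2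
      - 128 * a ^ 2 * c ^ 2 * e ^ 2 + 144 * a ^ 2 * c * d ^ 2 * e
      - 27 * a ^ 2 * d ^ 4 + 144 * q * a * b ^ 2 * c * e ^ 2
      - 6 * q * a * b ^ 2 * d ^ 2 * e - 80 * a * b * c ^ 2 * d * e
      + 18 * a * b * c * d ^ 3 - 27 * q ^ 2 * b ^ 4 * e ^ 2
      + 18 * q * b ^ 3 * c * d * e - 4 * q * b ^ 3 * d ^ 3
      - 4 * b ^ 2 * c ^ 3 * e + b ^ 2 * c ^ 2 * d ^ 2, rfl⟩).trans (dvd_of_eq ?_)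
    simp only [BQ.disc]
    ring
  rw [sq, mul_dvd_mul_iff_left hq.ne_zero] at hlead
  have hlead := (hq.dvd_or_dvd hlead).resolve_left fun h ↦ h2 (hq.dvd_of_dvd_pow h)
  have hlead := (hq.dvd_or_dvd hlead).resolve_left fun h ↦
    ha2 (sq q ▸ mul_dvd_mul_left q h)
  exact (hq.dvd_or_dvd hlead).imp_left hq.dvd_of_dvd_pow

end Coefficients

section LocalDensities

open Polynomial

variable {p : ℕ} [hp : Fact p.Prime]

theorem natCast_prime_dvd_natCast_iff {n : ℕ} : (p : ℤ_[p]) ∣ (n : ℤ_[p]) ↔ p ∣ n := by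
  simpa [Int.natCast_dvd_natCast] using PadicInt.pow_p_dvd_int_iff (p := p) 1 n

theorem not_natCast_prime_dvd_natCast {n : ℕ} (hn : n ≠ 0) (hnp : n < p) :
    ¬(p : ℤ_[p]) ∣ (n : ℤ_[p]) :=
  natCast_prime_dvd_natCast_iff.not.2 (Nat.not_dvd_of_pos_of_lt (Nat.pos_of_ne_zero hn) hnp)

theorem measurableSet_pow_dvd {g : (Fin 4 → ℤ_[p]) → ℤ_[p]} (hg : Continuous g) (n : ℕ) :
    MeasurableSet {v | (p : ℤ_[p]) ^ n ∣ g v} := by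
  simp only [← Ideal.mem_span_singleton, ← PadicInt.norm_le_pow_iff_mem_span_pow]
  exact (isClosed_le hg.norm continuous_const).measurableSet

theorem measurableSet_dvd {g : (Fin 4 → ℤ_[p]) → ℤ_[p]} (hg : Continuous g) :
    MeasurableSet {v | (p : ℤ_[p]) ∣ g v} := by
  simpa using measurableSet_pow_dvd hg 1

theorem continuous_disc_ofLeadingCoeff (a : ℤ_[p]) :
    Continuous fun v ↦ (BQ.ofLeadingCoeff a v).disc := by
  unfold BQ.ofLeadingCoeff BQ.disc
  fun_prop

theorem continuous_eval_derivative_discCubic (a : ℤ_[p]) :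
    Continuous fun v : Fin 4 → ℤ_[p] ↦
      (discCubic a (v 0) (v 1) (v 2)).toPoly.derivative.eval (v 3) := by
  simp only [discCubic, Cubic.toPoly, eval_add, eval_mul, eval_C, eval_pow, eval_X,
    derivative_add, derivative_mul, derivative_C, derivative_X_pow, derivative_X, eval_natCast,
    map_natCast]
  fun_prop

variable (μ : Measure (Fin 4 → ℤ_[p])) [IsProbabilityMeasure μ] [μ.IsAddLeftInvariant]

theorem measureReal_disc_eq_zero_le {a : ℤ_[p]} (ha : a ≠ 0) (m : ℕ) :
    μ.real {v | (BQ.ofLeadingCoeff a v).disc = 0} ≤ 3 / (p : ℝ) ^ (m + 1) := by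
  have hlead : (p : ℤ_[p]) ^ (m * 3) * (256 * a ^ 3) ≠ 0 :=
    mul_ne_zero (pow_ne_zero _ PadicInt.prime_p.ne_zero) (mul_ne_zero (by norm_num)
      (pow_ne_zero 3 ha))
  obtain ⟨n, hn⟩ := FiniteMultiplicity.of_not_isUnit PadicInt.prime_p.not_isUnit hlead
  refine measureReal_le_of_pow_dvd_eval (j := 3) (d := 3) (n := n + 1)
    (F := fun v ↦ (discCubic a (v 0) (v 1) (v 2)).toPoly)
    (isClosed_singleton.preimage (continuous_disc_ofLeadingCoeff a)).measurableSet
    (fun x v ↦ by simp) (fun v ↦ natDegree_toPoly_le _)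
    (fun v _ ↦ ⟨3, by rwa [Cubic.coeff_eq_a, discCubic]⟩) fun v hv ↦ ?_
  rw [eval_discCubic]
  exact (dvd_zero _).trans (dvd_of_eq (Eq.symm hv))

theorem ae_disc_ofLeadingCoeff_ne_zero {a : ℤ_[p]} (ha : a ≠ 0) :
    ∀ᵐ v ∂μ, (BQ.ofLeadingCoeff a v).disc ≠ 0 := by
  have htend : Tendsto (fun m : ℕ ↦ 3 / (p : ℝ) ^ (m + 1)) atTop (𝓝 0) :=
    ((tendsto_pow_atTop_atTop_of_one_lt (Nat.one_lt_cast.2 hp.out.one_lt)).comp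
      (tendsto_add_atTop_nat 1)).const_div_atTop 3
  have := ge_of_tendsto' htend (measureReal_disc_eq_zero_le μ ha)
  have h0 := (measureReal_eq_zero_iff).1 (this.antisymm measureReal_nonneg)
  simpa [ae_iff] using h0

variable (hp5 : 5 ≤ p) (a : ℤ_[p])

include hp5 in
theorem not_natCast_prime_dvd_two : ¬(p : ℤ_[p]) ∣ 2 := by
  exact_mod_cast not_natCast_prime_dvd_natCast (p := p) two_ne_zero (by omega)

include hp5 in
theorem not_natCast_prime_dvd_three : ¬(p : ℤ_[p]) ∣ 3 := by
  exact_mod_cast not_natCast_prime_dvd_natCast (p := p) three_ne_zero (by omega)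

include hp5 in
theorem measureReal_pow_dvd_disc_le {m n : ℕ} (hn : 9 * m + 1 ≤ n) :
    μ.real {v | (p : ℤ_[p]) ^ n ∣ (BQ.ofLeadingCoeff a v).disc} ≤ 4 / (p : ℝ) ^ (m + 1) := by
  have hb := measurableSet_pow_dvd (p := p) (continuous_apply 0) (m + 1)
  have hb_le : μ.real {v | (p : ℤ_[p]) ^ (m + 1) ∣ v 0} ≤ 1 / (p : ℝ) ^ (m + 1) := by
    have := measureReal_le_of_pow_dvd_eval (μ := μ) (j := 0) (d := 1) (n := m + 1) (m := m)
      (F := fun _ ↦ X) hb (fun _ _ ↦ rfl) (fun _ ↦ natDegree_X_le)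
      (fun _ _ ↦ ⟨1, ?_⟩) fun v hv ↦ by simpa using hv
    · simpa using this
    · rw [coeff_X_one, mul_one, mul_one, pow_dvd_pow_iff PadicInt.prime_p.ne_zero
        PadicInt.prime_p.not_isUnit]
      omega
  have hdisc_le : μ.real ({v | (p : ℤ_[p]) ^ n ∣ (BQ.ofLeadingCoeff a v).disc} \
      {v | (p : ℤ_[p]) ^ (m + 1) ∣ v 0}) ≤ 3 / (p : ℝ) ^ (m + 1) := by
    refine measureReal_le_of_pow_dvd_eval (j := 3) (d := 3) (n := 9 * m + 1)
      (F := fun v ↦ (discCubic a (v 0) (v 1) (v 2)).toPoly)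
      ((measurableSet_pow_dvd (continuous_disc_ofLeadingCoeff a) n).diff hb)
      (fun x v ↦ by simp) (fun v ↦ natDegree_toPoly_le _)
      (fun v hv ↦ exists_not_pow_dvd_coeff_discCubic PadicInt.prime_p
        (not_natCast_prime_dvd_two hp5) (not_natCast_prime_dvd_three hp5) hv.2 _ _) fun v hv ↦ ?_
    rw [eval_discCubic]
    exact (pow_dvd_pow _ hn).trans hv.1
  refine (measureReal_mono (Set.sdiff_union_self.symm ▸ Set.subset_union_left)).trans
    ((measureReal_union_le _ _).trans ((add_le_add hdisc_le hb_le).trans_eq ?_))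
  ring

include hp5 in
theorem measureReal_sq_dvd_disc_simple_le :
    μ.real {v | (p : ℤ_[p]) ^ 2 ∣ (BQ.ofLeadingCoeff a v).disc ∧
      ¬(p : ℤ_[p]) ∣ (discCubic a (v 0) (v 1) (v 2)).toPoly.derivative.eval (v 3) ∧
      ¬((p : ℤ_[p]) ∣ a ∧ (p : ℤ_[p]) ∣ v 0)} ≤ 3 / (p : ℝ) ^ 2 := by
  refine measureReal_le_of_sq_dvd_eval (j := 3) (d := 3)
    (F := fun v ↦ (discCubic a (v 0) (v 1) (v 2)).toPoly) ?_
    (fun x v ↦ by simp) (fun v ↦ natDegree_toPoly_le _)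
    (fun v hv ↦ exists_not_dvd_coeff_discCubic PadicInt.prime_p (not_natCast_prime_dvd_two hp5)
      (not_natCast_prime_dvd_three hp5) hv.2.2 _ _) (fun v hv ↦ ?_) fun v hv ↦ hv.2.1
  · exact (measurableSet_pow_dvd (continuous_disc_ofLeadingCoeff a) 2).inter
      ((measurableSet_dvd (continuous_eval_derivative_discCubic a)).compl.inter
        ((MeasurableSet.const _).inter (measurableSet_dvd (continuous_apply 0))).compl)
  · rw [eval_discCubic]
    exact hv.1

include hp5 in
theorem measureReal_dvd_disc_multiple_le :
    μ.real {v | (p : ℤ_[p]) ∣ (BQ.ofLeadingCoeff a v).disc ∧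
      (p : ℤ_[p]) ∣ (discCubic a (v 0) (v 1) (v 2)).toPoly.derivative.eval (v 3) ∧
      ¬((p : ℤ_[p]) ∣ a ∧ (p : ℤ_[p]) ∣ v 0)} ≤ 9 / (p : ℝ) ^ 2 := by
  have h2 := not_natCast_prime_dvd_two hp5
  have h3 := not_natCast_prime_dvd_three hp5
  refine (measureReal_le_of_dvd_eval_of_dvd_eval (j := 2) (l := 3) (d := 3) (e := 3)
    (F := fun v ↦ (criticalCubic a (v 0) (v 1)).toPoly)
    (G := fun v ↦ (discCubic a (v 0) (v 1) (v 2)).toPoly) ?_ (by decide)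
    (fun x y v ↦ by simp) (fun y v ↦ by simp)
    (fun v ↦ natDegree_toPoly_le _) (fun v ↦ natDegree_toPoly_le _)
    (fun v hv ↦ exists_not_dvd_coeff_criticalCubic PadicInt.prime_p h2 h3 hv.2.2 _)
    (fun v hv ↦ exists_not_dvd_coeff_discCubic PadicInt.prime_p h2 h3 hv.2.2 _ _)
    (fun v hv ↦ dvd_eval_criticalCubic PadicInt.prime_p h2
      ((eval_discCubic a v).symm ▸ hv.1) hv.2.1)
    fun v hv ↦ (eval_discCubic a v).symm ▸ hv.1).trans_eq (by norm_num)
  exact (measurableSet_dvd (continuous_disc_ofLeadingCoeff a)).inter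
    ((measurableSet_dvd (continuous_eval_derivative_discCubic a)).inter
      ((MeasurableSet.const _).inter (measurableSet_dvd (continuous_apply 0))).compl)

theorem measureReal_dvd_dvd_le :
    μ.real {v | (p : ℤ_[p]) ∣ v 0 ∧ (p : ℤ_[p]) ∣ v 1} ≤ 1 / (p : ℝ) ^ 2 := by
  have hX : ∃ k, ¬(p : ℤ_[p]) ∣ (X : ℤ_[p][X]).coeff k :=
    ⟨1, by rw [coeff_X_one]; exact PadicInt.prime_p.not_dvd_one⟩
  refine (measureReal_le_of_dvd_eval_of_dvd_eval (j := 0) (l := 1) (d := 1) (e := 1)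
    (F := fun _ ↦ X) (G := fun _ ↦ X) ((measurableSet_dvd (continuous_apply 0)).inter
      (measurableSet_dvd (continuous_apply 1))) (by decide) (fun _ _ _ ↦ rfl) (fun _ _ ↦ rfl)
    (fun _ ↦ natDegree_X_le) (fun _ ↦ natDegree_X_le) (fun _ _ ↦ hX) (fun _ _ ↦ hX)
    (fun v hv ↦ by simpa using hv.1) fun v hv ↦ by simpa using hv.2).trans_eq (by norm_num)

include hp5 in
theorem measureReal_dvd_quadratic_disc_le :
    μ.real {v | (p : ℤ_[p]) ∣ v 0 ∧ ¬(p : ℤ_[p]) ∣ v 1 ∧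
      (p : ℤ_[p]) ∣ 4 * v 1 * v 3 - v 2 ^ 2} ≤ 1 / (p : ℝ) ^ 2 := by
  refine (measureReal_le_of_dvd_eval_of_dvd_eval (j := 0) (l := 3) (d := 1) (e := 1)
    (F := fun _ ↦ X) (G := fun v ↦ C (4 * v 1) * X + C (-v 2 ^ 2))
    ((measurableSet_dvd (continuous_apply 0)).inter
      ((measurableSet_dvd (continuous_apply 1)).compl.inter (measurableSet_dvd (by fun_prop))))
    (by decide) (fun _ _ _ ↦ rfl) (fun _ _ ↦ by simp)
    (fun _ ↦ natDegree_X_le) (fun _ ↦ natDegree_linear_le)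
    (fun _ _ ↦ ⟨1, by rw [coeff_X_one]; exact PadicInt.prime_p.not_dvd_one⟩) (fun v hv ↦ ⟨1, ?_⟩)
    (fun v hv ↦ by simpa using hv.1)
    fun v hv ↦ by simpa [← sub_eq_add_neg] using hv.2.2).trans_eq (by norm_num)
  rw [coeff_add, coeff_C_mul_X, coeff_C_succ, if_pos rfl, add_zero,
    show (4 : ℤ_[p]) = 2 ^ 2 by norm_num]
  exact fun h ↦ (PadicInt.prime_p.dvd_or_dvd h).elim
    (fun h ↦ not_natCast_prime_dvd_two hp5 (PadicInt.prime_p.dvd_of_dvd_pow h)) hv.2.1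

variable {a}

include hp5 in
theorem measureReal_sq_dvd_disc_le (ha : ¬(p : ℤ_[p]) ^ 2 ∣ a) :
    μ.real {v | (p : ℤ_[p]) ^ 2 ∣ (BQ.ofLeadingCoeff a v).disc} ≤ 14 / (p : ℝ) ^ 2 := by
  refine (measureReal_mono fun v (hv : (p : ℤ_[p]) ^ 2 ∣ _) ↦ ?_).trans
    ((measureReal_union_le _ _).trans ((add_le_add (measureReal_sq_dvd_disc_simple_le μ hp5 a)
      ((measureReal_union_le _ _).trans ((add_le_add (measureReal_dvd_disc_multiple_le μ hp5 a)
        ((measureReal_union_le _ _).trans (add_le_add (measureReal_dvd_dvd_le μ)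
          (measureReal_dvd_quadratic_disc_le μ hp5))))))).trans_eq ?_))
  · by_cases hab : (p : ℤ_[p]) ∣ a ∧ (p : ℤ_[p]) ∣ v 0
    · by_cases hc : (p : ℤ_[p]) ∣ v 1
      · exact .inr (.inr (.inl ⟨hab.2, hc⟩))
      · exact .inr (.inr (.inr ⟨hab.2, hc, (dvd_or_dvd_of_sq_dvd_disc PadicInt.prime_p
          (not_natCast_prime_dvd_two hp5) hab.1 ha hab.2 hv).resolve_left hc⟩))
    · by_cases he :
        (p : ℤ_[p]) ∣ (discCubic a (v 0) (v 1) (v 2)).toPoly.derivative.eval (v 3)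
      · exact .inr (.inl ⟨(dvd_pow_self _ two_ne_zero).trans hv, he, hab⟩)
      · exact .inl ⟨hv, he, hab⟩
  · ring

end LocalDensities

section LocalIntegrals

/-- The decay in `k` of the density of forms with `p^(2(k+1)) ∣ Δ`. -/
def discWeight (k : ℕ) : ℝ := (1 / 2) ^ ((2 * k + 1) / 9)

theorem discWeight_nonneg (k : ℕ) : 0 ≤ discWeight k := by
  unfold discWeight
  positivity

theorem summable_discWeight : Summable discWeight := by
  have hgeom : Summable fun k : ℕ ↦ ((0.95 : ℝ) ^ 8)⁻¹ * 0.95 ^ k :=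
    (summable_geometric_of_lt_one (by norm_num) (by norm_num)).mul_left _
  refine hgeom.of_nonneg_of_le discWeight_nonneg fun k ↦ ?_
  rw [inv_mul_eq_div, le_div_iff₀ (by norm_num), discWeight]
  set q := (2 * k + 1) / 9
  calc (1 / 2 : ℝ) ^ q * 0.95 ^ 8 ≤ (0.95 ^ 9) ^ q * 0.95 ^ 8 := by gcongr; norm_num
    _ = 0.95 ^ (9 * q + 8) := by rw [← pow_mul, ← pow_add]
    _ ≤ 0.95 ^ k := pow_le_pow_of_le_one (by norm_num) (by norm_num) (by omega)

variable {p : ℕ} [hp : Fact p.Prime]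

theorem one_div_pow_le_one_half_pow (m : ℕ) : 1 / (p : ℝ) ^ m ≤ (1 / 2) ^ m := by
  rw [div_pow, one_pow]
  gcongr
  exact_mod_cast hp.out.two_le

theorem continuous_ofLeadingCoeff_of_congMod {n : ℕ} {F : BQ ℤ_[p] → ℝ}
    (hF : ∀ f g, CongMod p n f g → F f = F g) (a : ℤ_[p]) :
    Continuous fun v ↦ F (BQ.ofLeadingCoeff a v) := by
  refine ((IsLocallyConstant.iff_eventually_eq _).2 fun v ↦ ?_).continuous
  have hpos : (0 : ℝ) < (p : ℝ) ^ (-n : ℤ) := zpow_pos (Nat.cast_pos.2 hp.out.pos) _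
  filter_upwards [Metric.ball_mem_nhds v hpos] with w hw
  have hdvd (i : Fin 4) : (p : ℤ_[p]) ^ n ∣ w i - v i := by
    rw [← Ideal.mem_span_singleton, ← PadicInt.norm_le_pow_iff_mem_span_pow]
    exact (norm_le_pi_norm (w - v) i).trans (mem_ball_iff_norm.1 hw).le
  exact hF _ _ ⟨by simp [BQ.ofLeadingCoeff], hdvd 0, hdvd 1, hdvd 2, hdvd 3⟩

variable {μ : Measure (Fin 4 → ℤ_[p])} [IsProbabilityMeasure μ] [μ.IsAddLeftInvariant]

theorem measureReal_disc_le_discWeight (hp5 : 5 ≤ p) (a : ℤ_[p]) (k : ℕ) :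
    μ.real {v | (p : ℤ_[p]) ^ (2 * (k + 1)) ∣ (BQ.ofLeadingCoeff a v).disc}
      ≤ 4 / p * discWeight k := by
  refine (measureReal_pow_dvd_disc_le μ hp5 a (m := (2 * k + 1) / 9) (by omega)).trans ?_
  rw [discWeight, pow_succ', ← div_div, div_eq_mul_one_div (4 / (p : ℝ))]
  gcongr
  exact one_div_pow_le_one_half_pow _

theorem measureReal_disc_le_discWeight_of_not_sq_dvd (hp5 : 5 ≤ p) {a : ℤ_[p]}
    (ha : ¬(p : ℤ_[p]) ^ 2 ∣ a) (k : ℕ) :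
    μ.real {v | (p : ℤ_[p]) ^ (2 * (k + 1)) ∣ (BQ.ofLeadingCoeff a v).disc}
      ≤ 14 / (p : ℝ) ^ 2 * discWeight k := by
  rw [discWeight]
  rcases hm : (2 * k + 1) / 9 with _ | m
  · rw [pow_zero, mul_one]
    exact (measureReal_mono fun v hv ↦ (pow_dvd_pow _ (by omega)).trans hv).trans
      (measureReal_sq_dvd_disc_le μ hp5 ha)
  · calc
      _ ≤ 4 / (p : ℝ) ^ (m + 1 + 1) := measureReal_pow_dvd_disc_le μ hp5 a (by omega)
      _ = 4 / (p : ℝ) ^ 2 * (1 / (p : ℝ) ^ m) := by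
        rw [div_mul_div_comm, mul_one, ← pow_add, add_comm 2]
      _ ≤ 4 / (p : ℝ) ^ 2 * (1 / 2) ^ m := by
        gcongr
        exact one_div_pow_le_one_half_pow m
      _ ≤ 14 / (p : ℝ) ^ 2 * (1 / 2) ^ (m + 1) := by
        rw [pow_succ' _ m, ← mul_assoc]
        gcongr ?_ * _
        rw [div_mul_eq_mul_div]
        gcongr
        norm_num

theorem abs_integral_sub_one_le {φ : BQ ℤ_[p] → ℝ} {ψ : ℕ → BQ ℤ_[p] → ℝ}
    (hψ : ApproxSeries p φ ψ) (hsupp : SupportBound p ψ 0) {a : ℤ_[p]} (ha : a ≠ 0) {w : ℕ → ℝ}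
    (hw : Summable w) (hdisc : ∀ k, μ.real {v | (p : ℤ_[p]) ^ (2 * (k + 1)) ∣
      (BQ.ofLeadingCoeff a v).disc} ≤ w k) :
    |∫ v, φ (BQ.ofLeadingCoeff a v) ∂μ - 1| ≤ ∑' k, w k := by
  obtain ⟨hzero, hone, hsum, hper⟩ := hψ
  have hint (k : ℕ) : Integrable (fun v ↦ ψ k (BQ.ofLeadingCoeff a v)) μ :=
    .of_bound (continuous_ofLeadingCoeff_of_congMod (hper k) a).aestronglyMeasurable 1
      (.of_forall fun v ↦ hone k _)
  have hbound (k : ℕ) : ∫ v, ‖ψ (k + 1) (BQ.ofLeadingCoeff a v)‖ ∂μ ≤ w k := by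
    have hmeas := measurableSet_pow_dvd (continuous_disc_ofLeadingCoeff a) (2 * (k + 1))
    refine le_trans ?_ (hdisc k)
    rw [← integral_indicator_one hmeas]
    refine integral_mono (hint _).norm ((integrable_const 1).indicator hmeas) fun v ↦ ?_
    by_cases hv : ψ (k + 1) (BQ.ofLeadingCoeff a v) = 0
    · simp only [hv, norm_zero]
      exact Set.indicator_nonneg (fun _ _ ↦ zero_le_one) v
    · rw [Set.indicator_of_mem (by simpa using hsupp (k + 1) _ hv)]
      exact hone _ _
  have hnorm : Summable fun k ↦ ∫ v, ‖ψ k (BQ.ofLeadingCoeff a v)‖ ∂μ :=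
    (summable_nat_add_iff 1).1 (hw.of_nonneg_of_le
      (fun k ↦ integral_nonneg fun v ↦ norm_nonneg _) hbound)
  have hasSum := hasSum_integral_of_summable_integral_norm hint hnorm
  have hφ : ∫ v, ∑' k, ψ k (BQ.ofLeadingCoeff a v) ∂μ = ∫ v, φ (BQ.ofLeadingCoeff a v) ∂μ :=
    integral_congr_ae ((ae_disc_ofLeadingCoeff_ne_zero μ ha).mono fun v hv ↦ (hsum _ hv).2.tsum_eq)
  rw [hφ, ← hasSum_nat_add_iff' 1] at hasSum
  simp only [Finset.range_one, Finset.sum_singleton, hzero, integral_const, probReal_univ,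
    smul_eq_mul, mul_one] at hasSum
  rw [← hasSum.tsum_eq, ← Real.norm_eq_abs]
  exact tsum_of_norm_bounded hw.hasSum fun k ↦ (norm_integral_le_integral_norm _).trans (hbound k)

end LocalIntegrals

section Substitution

variable {R S : Type*} [CommRing R] [CommRing S]

theorem Mat2.det_map (φ : R →+* S) (m : Mat2 R) : (m.map φ).det = φ m.det := by
  simp only [Mat2.det, Mat2.map, map_sub, map_mul]

theorem BQ.map_subst (φ : R →+* S) (f : BQ R) (m : Mat2 R) :
    (f.subst m).map φ = (f.map φ).subst (m.map φ) := by
  simp only [BQ.map, BQ.subst, Mat2.map, map_add, map_mul, map_pow, map_ofNat]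

theorem BQ.subst_one (f : BQ R) : f.subst ⟨1, 0, 0, 1⟩ = f := by
  simp [BQ.subst]

theorem BQ.invI_subst (f : BQ R) (m : Mat2 R) : (f.subst m).invI = m.det ^ 4 * f.invI := by
  simp only [BQ.invI, BQ.subst, Mat2.det]
  ring

set_option maxHeartbeats 1000000 in
-- `ring` expands a polynomial of degree 15 in nine variables
theorem BQ.invJ_subst (f : BQ R) (m : Mat2 R) : (f.subst m).invJ = m.det ^ 6 * f.invJ := by
  simp only [BQ.invJ, BQ.subst, Mat2.det]
  ring

theorem BQ.disc_eq_invI_invJ (f : BQ R) : 27 * f.disc = 4 * f.invI ^ 3 - f.invJ ^ 2 := by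
  simp only [BQ.invI, BQ.invJ, BQ.disc]
  ring

theorem BQ.disc_subst [IsDomain R] [CharZero R] (f : BQ R) (m : Mat2 R) :
    (f.subst m).disc = m.det ^ 12 * f.disc := by
  refine mul_left_cancel₀ (by simp : (27 : R) ≠ 0) ?_
  rw [BQ.disc_eq_invI_invJ, BQ.invI_subst, BQ.invJ_subst]
  linear_combination -m.det ^ 12 * f.disc_eq_invI_invJ

end Substitution

section LocallyConstant

variable {p : ℕ} [hp : Fact p.Prime]

theorem toZModPow_eq_toZModPow_iff {K : ℕ} {x y : ℤ_[p]} :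
    PadicInt.toZModPow K x = PadicInt.toZModPow K y ↔ (p : ℤ_[p]) ^ K ∣ x - y := by
  rw [← sub_eq_zero, ← map_sub, ← RingHom.mem_ker, PadicInt.ker_toZModPow,
    Ideal.mem_span_singleton]

theorem congMod_iff_map_toZModPow_eq {K : ℕ} {f g : BQ ℤ_[p]} :
    CongMod p K f g ↔ f.map (PadicInt.toZModPow K) = g.map (PadicInt.toZModPow K) := by
  simp only [CongMod, ← toZModPow_eq_toZModPow_iff, BQ.map, BQ.mk.injEq]

theorem congMod_map_intCast_iff {K : ℕ} {f : BQ ℤ} {g : BQ ℤ_[p]} :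
    CongMod p K (f.map (Int.castRingHom _)) g ↔
      f.map (Int.castRingHom (ZMod (p ^ K))) = g.map (PadicInt.toZModPow K) := by
  rw [congMod_iff_map_toZModPow_eq,
    ← RingHom.ext_int ((PadicInt.toZModPow K).comp (Int.castRingHom ℤ_[p])) (Int.castRingHom _)]
  rfl

theorem CongMod.mono {j k : ℕ} (hjk : j ≤ k) {f g : BQ ℤ_[p]} (h : CongMod p k f g) :
    CongMod p j f g :=
  have hdvd := pow_dvd_pow (p : ℤ_[p]) hjk
  ⟨hdvd.trans h.1, hdvd.trans h.2.1, hdvd.trans h.2.2.1, hdvd.trans h.2.2.2.1,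
    hdvd.trans h.2.2.2.2⟩

theorem CongMod.dvd_disc_sub_disc {K : ℕ} {f g : BQ ℤ_[p]} (h : CongMod p K f g) :
    (p : ℤ_[p]) ^ K ∣ f.disc - g.disc := by
  rw [← toZModPow_eq_toZModPow_iff, ← BQ.disc_map, ← BQ.disc_map,
    congMod_iff_map_toZModPow_eq.1 h]

theorem SupportBound.eq_zero {ψ : ℕ → BQ ℤ_[p] → ℝ} {c n k : ℕ} (hψ : SupportBound p ψ c)
    {f : BQ ℤ_[p]} (hf : ¬(p : ℤ_[p]) ^ n ∣ f.disc) (hk : n + c ≤ 2 * k) : ψ k f = 0 := by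
  by_contra hne
  have hdvd := (pow_dvd_pow _ ((add_comm c n).trans_le hk)).trans (hψ k f hne)
  rw [pow_add] at hdvd
  exact hf ((mul_dvd_mul_iff_left (pow_ne_zero _ PadicInt.prime_p.ne_zero)).1 hdvd)

theorem ApproxSeries.exists_forall_congMod_eq {φ : BQ ℤ_[p] → ℝ} {ψ : ℕ → BQ ℤ_[p] → ℝ}
    (hψ : ApproxSeries p φ ψ) {c : ℕ} (hsupp : SupportBound p ψ c) {f : BQ ℤ_[p]}
    (hf : f.disc ≠ 0) : ∃ K : ℕ, ∀ g, CongMod p K g f → φ g = φ f := by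
  obtain ⟨-, -, hsum, hper⟩ := hψ
  obtain ⟨n, hn⟩ := FiniteMultiplicity.of_not_isUnit PadicInt.prime_p.not_isUnit hf
  refine ⟨2 * (n + 1 + c), fun g hg ↦ ?_⟩
  have hgn : ¬(p : ℤ_[p]) ^ (n + 1) ∣ g.disc := fun h ↦
    hn ((dvd_sub_right h).1 ((pow_dvd_pow _ (by omega)).trans hg.dvd_disc_sub_disc))
  have hψgf : (ψ · g) = (ψ · f) := funext fun k ↦ by
    rcases le_or_gt k (n + 1 + c) with hk | hk
    · exact hper k _ _ (hg.mono (by omega))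
    · rw [hsupp.eq_zero hgn (by omega), hsupp.eq_zero hn (by omega)]
  have hφg := (hsum g fun h ↦ hgn (h ▸ dvd_zero _)).2
  rw [hψgf] at hφg
  exact hφg.unique (hsum f hf).2

theorem ApproxSeries.eq_one {φ : BQ ℤ_[p] → ℝ} {ψ : ℕ → BQ ℤ_[p] → ℝ}
    (hψ : ApproxSeries p φ ψ) (hsupp : SupportBound p ψ 0) {f : BQ ℤ_[p]}
    (hf : ¬(p : ℤ_[p]) ^ 2 ∣ f.disc) : φ f = 1 := by
  obtain ⟨hzero, -, hsum, -⟩ := hψ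
  have hφf := (hsum f fun h ↦ hf (h ▸ dvd_zero _)).2
  rw [hφf.unique (hasSum_single 0 fun k hk ↦ hsupp.eq_zero hf (by omega)), hzero]

end LocallyConstant

section StrongApproximation

theorem isCoprime_of_forall_prime_dvd {x y : ℤ}
    (h : ∀ l : ℕ, l.Prime → (l : ℤ) ∣ x → ¬(l : ℤ) ∣ y) : IsCoprime x y :=
  Int.isCoprime_iff_gcd_eq_one.2 <| Nat.Coprime.gcd_eq_one <| Nat.coprime_of_dvd fun l hl hx hy ↦
    h l hl (Int.natCast_dvd.2 hx) (Int.natCast_dvd.2 hy)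

theorem Mat2.exists_det_eq_one_and_map_eq {N : ℕ} (hN : N ≠ 0) (m : Mat2 (ZMod N))
    (hm : m.det = 1) : ∃ γ : Mat2 ℤ, γ.det = 1 ∧ γ.map (Int.castRingHom (ZMod N)) = m := by
  obtain ⟨q, hq, hqN⟩ := exists_le_intCast_eq hN (m.q.cast : ℤ) 1
  obtain ⟨p, -, hpN, hpq⟩ := exists_intCast_eq_of_not_dvd hN
    (S := q.natAbs.primeFactors.filter (¬· ∣ N))
    (fun l hl ↦ (Finset.mem_filter.1 hl).imp_left Nat.prime_of_mem_primeFactors)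
    (m.p.cast : ℤ) 1 0
  rw [ZMod.intCast_zmod_cast] at hpN hqN
  set r : ℤ := m.r.cast
  set s : ℤ := m.s.cast
  have hr : (r : ZMod N) = m.r := ZMod.intCast_zmod_cast _
  have hs : (s : ZMod N) = m.s := ZMod.intCast_zmod_cast _
  obtain ⟨h, hdet⟩ : (N : ℤ) ∣ p * s - q * r - 1 := by
    rw [← ZMod.intCast_zmod_eq_zero_iff_dvd]
    simp only [Int.cast_sub, Int.cast_mul, Int.cast_one, hpN, hqN, hr, hs]
    exact sub_eq_zero.2 hm
  obtain ⟨u, v, huv⟩ : IsCoprime p q := isCoprime_of_forall_prime_dvd fun l hl hlp hlq ↦ by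
    have hl1 : ¬(l : ℤ) ∣ 1 := (Nat.prime_iff_prime_int.1 hl).not_dvd_one
    by_cases hlN : l ∣ N
    · exact hl1 ((dvd_sub ((hlp.mul_right s).sub (hlq.mul_right r))
        ((Int.natCast_dvd_natCast.2 hlN).mul_right h)).trans
          (dvd_of_eq (by linear_combination hdet)))
    · have : Fact l.Prime := ⟨hl⟩
      have hpl := hpq l (Finset.mem_filter.2
        ⟨Nat.mem_primeFactors.2 ⟨hl, Int.natCast_dvd.1 hlq, by omega⟩, hlN⟩)
      rw [(CharP.intCast_eq_zero_iff (ZMod l) l p).2 hlp] at hpl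
      exact zero_ne_one hpl
  refine ⟨⟨p, q, r + N * h * v, s - N * h * u⟩, ?_, ?_⟩
  · simp only [Mat2.det]
    linear_combination hdet - N * h * huv
  · simp [Mat2.map, hpN, hqN, hr, hs]

/-- The Chinese remainder isomorphism for the `K`-th powers of the primes in `S`. -/
def chineseRemainder (S : Finset Nat.Primes) (K : ℕ) :
    ZMod (∏ q : S, (q : ℕ) ^ K) ≃+* ∀ q : S, ZMod ((q : ℕ) ^ K) :=
  ZMod.prodEquivPi _ fun q r hqr ↦ Nat.Coprime.pow _ _
    ((Nat.coprime_primes q.1.2 r.1.2).2 fun h ↦ hqr (Subtype.ext (Subtype.ext h)))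

variable (S : Finset Nat.Primes) (K : ℕ)

theorem chineseRemainder_comp_intCast :
    (chineseRemainder S K).toRingHom.comp (Int.castRingHom _) = Int.castRingHom _ :=
  RingHom.ext_int _ _

theorem prod_primes_pow_ne_zero : ∏ q : S, (q : ℕ) ^ K ≠ 0 :=
  Finset.prod_ne_zero_iff.2 fun q _ ↦ pow_ne_zero _ q.1.2.ne_zero

theorem dvd_prod_primes_pow_iff {K : ℕ} (hK : K ≠ 0) {q : Nat.Primes} :
    (q : ℕ) ∣ ∏ r : S, (r : ℕ) ^ K ↔ q ∈ S := by
  refine ⟨fun h ↦ ?_, fun h ↦ (dvd_pow_self _ hK).trans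
    (Finset.dvd_prod_of_mem (fun r : S ↦ (r : ℕ) ^ K) (Finset.mem_univ ⟨q, h⟩))⟩
  obtain ⟨r, -, hqr⟩ := (q.2.prime.dvd_finsetProd_iff _).1 h
  rw [Subtype.ext ((Nat.prime_dvd_prime_iff_eq q.2 r.1.2).1 (q.2.dvd_of_dvd_pow hqr))]
  exact r.2

theorem Mat2.exists_det_eq_one_and_forall_map_eq (m : ∀ q : S, Mat2 (ZMod ((q : ℕ) ^ K)))
    (hm : ∀ q, (m q).det = 1) :
    ∃ γ : Mat2 ℤ, γ.det = 1 ∧ ∀ q, γ.map (Int.castRingHom _) = m q := by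
  set e := chineseRemainder S K
  set M : Mat2 (∀ q : S, ZMod ((q : ℕ) ^ K)) :=
    ⟨fun q ↦ (m q).p, fun q ↦ (m q).q, fun q ↦ (m q).r, fun q ↦ (m q).s⟩
  have hM : M.det = 1 := funext hm
  obtain ⟨γ, hγ, hγM⟩ := Mat2.exists_det_eq_one_and_map_eq (prod_primes_pow_ne_zero S K)
    (M.map e.symm.toRingHom) (by rw [Mat2.det_map, hM, map_one])
  have hγM' : γ.map (Int.castRingHom _) = M := by
    rw [← chineseRemainder_comp_intCast]
    exact (congrArg (Mat2.map e.toRingHom) hγM).trans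
      (by simp only [Mat2.map, RingEquiv.toRingHom_eq_coe, RingHom.coe_coe, e.apply_symm_apply])
  exact ⟨γ, hγ, fun q ↦ congrArg (Mat2.map (Pi.evalRingHom _ q)) hγM'⟩

theorem BQ.exists_forall_map_eq_and_forall_not_sq_dvd_disc {K : ℕ} (hK : K ≠ 0)
    (hS : ∀ q : Nat.Primes, (q : ℕ) ≤ 10 → q ∈ S) (f : ∀ q : S, BQ (ZMod ((q : ℕ) ^ K))) :
    ∃ g : BQ ℤ, (∀ q, g.map (Int.castRingHom _) = f q) ∧
      ∀ q : Nat.Primes, q ∉ S → ¬((q : ℕ) : ℤ) ^ 2 ∣ g.disc := by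
  set e := chineseRemainder S K
  set F : BQ (∀ q : S, ZMod ((q : ℕ) ^ K)) :=
    ⟨fun q ↦ (f q).a, fun q ↦ (f q).b, fun q ↦ (f q).c, fun q ↦ (f q).d, fun q ↦ (f q).e⟩
  obtain ⟨g, hgF, hg⟩ := BQ.exists_map_eq_and_forall_prime_not_sq_dvd_disc
    (prod_primes_pow_ne_zero S K)
    (fun q hq h ↦ not_le.1 fun hq10 ↦ h ((dvd_prod_primes_pow_iff S hK).2 (hS ⟨q, hq⟩ hq10)))
    ⟨(e.symm F.a).cast, (e.symm F.b).cast, (e.symm F.c).cast, (e.symm F.d).cast,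
      (e.symm F.e).cast⟩
  have hgF' : g.map (Int.castRingHom _) = F := by
    rw [← chineseRemainder_comp_intCast]
    exact (congrArg (BQ.map e.toRingHom) hgF).trans
      (by simp only [BQ.map, eq_intCast, ZMod.intCast_zmod_cast, RingEquiv.toRingHom_eq_coe,
        RingHom.coe_coe, e.apply_symm_apply])
  exact ⟨g, fun q ↦ congrArg (BQ.map (Pi.evalRingHom _ q)) hgF',
    fun q hq ↦ hg q q.2 (mt (dvd_prod_primes_pow_iff S hK).1 hq)⟩

end StrongApproximation

section LocalInvariance

variable {φ : BQ ℤ → ℝ} {φp : (p : Nat.Primes) → BQ ℤ_[(p : ℕ)] → ℝ} {P : ℕ}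
  (hφ : ∀ m : Mat2 ℤ, m.det = 1 → ∀ f, φ (f.subst m) = φ f)
  (hprod : ∀ f : BQ ℤ, f.disc ≠ 0 →
    HasProd (fun p : Nat.Primes ↦ φp p (f.map (Int.castRingHom ℤ_[(p : ℕ)]))) (φ f))
  (hloc : ∀ (p : Nat.Primes) (f : BQ ℤ_[(p : ℕ)]), f.disc ≠ 0 →
    ∃ K : ℕ, ∀ g, CongMod p K g f → φp p g = φp p f)
  (hone : ∀ p : Nat.Primes, P < (p : ℕ) → ∀ f : BQ ℤ_[(p : ℕ)],
    ¬((p : ℕ) : ℤ_[(p : ℕ)]) ^ 2 ∣ f.disc → φp p f = 1)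

include hprod hone in
theorem prod_eq_of_forall_not_sq_dvd_disc {S : Finset Nat.Primes}
    (hS : ∀ q : Nat.Primes, (q : ℕ) ≤ P → q ∈ S) {f : BQ ℤ} (hf0 : f.disc ≠ 0)
    (hf : ∀ q : Nat.Primes, q ∉ S → ¬((q : ℕ) : ℤ) ^ 2 ∣ f.disc) :
    ∏ q ∈ S, φp q (f.map (Int.castRingHom _)) = φ f := by
  refine (hasProd_prod_of_ne_finset_one fun q hq ↦ ?_).unique (hprod f hf0)
  refine hone q (not_le.1 (mt (hS q) hq)) _ fun h ↦ hf q hq ?_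
  rw [BQ.disc_map, eq_intCast, PadicInt.pow_p_dvd_int_iff] at h
  exact_mod_cast h

include hφ hprod hloc hone in
theorem prod_subst_eq_prod {S : Finset Nat.Primes}
    (hS : ∀ q : Nat.Primes, (q : ℕ) ≤ max P 10 → q ∈ S) {f : ∀ q : Nat.Primes, BQ ℤ_[(q : ℕ)]}
    (hf : ∀ q, (f q).disc ≠ 0) {m : ∀ q : Nat.Primes, Mat2 ℤ_[(q : ℕ)]}
    (hm : ∀ q, (m q).det = 1) :
    ∏ q ∈ S, φp q ((f q).subst (m q)) = ∏ q ∈ S, φp q (f q) := by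
  have hfm : ∀ q, ((f q).subst (m q)).disc ≠ 0 := fun q ↦ by
    simpa only [BQ.disc_subst, hm, one_pow, one_mul] using hf q
  choose K hK using fun q ↦ hloc q (f q) (hf q)
  choose L hL using fun q ↦ hloc q _ (hfm q)
  set N := S.sup K + S.sup L + 1
  obtain ⟨g, hgf, hgS⟩ := BQ.exists_forall_map_eq_and_forall_not_sq_dvd_disc S (K := N) (by omega)
    (fun q hq ↦ hS q (hq.trans (le_max_right _ _))) fun q ↦ (f q).map (PadicInt.toZModPow N)
  obtain ⟨γ, hγ, hγm⟩ := Mat2.exists_det_eq_one_and_forall_map_eq S N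
    (fun q ↦ (m q).map (PadicInt.toZModPow N)) (fun q ↦ by rw [Mat2.det_map, hm, map_one])
  have hgf' : ∀ q ∈ S, φp q (g.map (Int.castRingHom _)) = φp q (f q) := fun q hq ↦
    hK q _ ((congMod_map_intCast_iff.2 (hgf ⟨q, hq⟩)).mono
      (show K q ≤ N from (Finset.le_sup (f := K) hq).trans (by omega)))
  have hgγ : ∀ q ∈ S, φp q ((g.subst γ).map (Int.castRingHom _)) = φp q ((f q).subst (m q)) :=
    fun q hq ↦ hL q _ ((congMod_map_intCast_iff.2 (by
      rw [BQ.map_subst, BQ.map_subst, hgf ⟨q, hq⟩, hγm ⟨q, hq⟩])).mono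
        (show L q ≤ N from (Finset.le_sup (f := L) hq).trans (by omega)))
  have hdisc : (g.subst γ).disc = g.disc := by rw [BQ.disc_subst, hγ, one_pow, one_mul]
  have hg0 : g.disc ≠ 0 := fun h ↦ by
    obtain ⟨q, hqS⟩ := Infinite.exists_notMem_finset S
    exact hgS q hqS (h ▸ dvd_zero _)
  have hSP : ∀ q : Nat.Primes, (q : ℕ) ≤ P → q ∈ S := fun q hq ↦ hS q (hq.trans (le_max_left _ _))
  calc ∏ q ∈ S, φp q ((f q).subst (m q))
      = ∏ q ∈ S, φp q ((g.subst γ).map (Int.castRingHom _)) :=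
        (Finset.prod_congr rfl hgγ).symm
    _ = φ (g.subst γ) := prod_eq_of_forall_not_sq_dvd_disc hprod hone hSP (hdisc ▸ hg0)
        (by simpa only [hdisc] using hgS)
    _ = φ g := hφ γ hγ g
    _ = ∏ q ∈ S, φp q (g.map (Int.castRingHom _)) :=
        (prod_eq_of_forall_not_sq_dvd_disc hprod hone hSP hg0 hgS).symm
    _ = ∏ q ∈ S, φp q (f q) := Finset.prod_congr rfl hgf'

theorem finite_setOf_primes_le (n : ℕ) : {q : Nat.Primes | (q : ℕ) ≤ n}.Finite :=
  (Set.finite_Iic n).preimage Subtype.coe_injective.injOn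

include hφ hprod hloc hone in
theorem localFactor_subst_eq
    (hne : ∀ q : Nat.Primes, ∃ f : BQ ℤ_[(q : ℕ)], f.disc ≠ 0 ∧ φp q f ≠ 0) {p : Nat.Primes}
    {m : Mat2 ℤ_[(p : ℕ)]} (hm : m.det = 1) {f : BQ ℤ_[(p : ℕ)]} (hf : f.disc ≠ 0) :
    φp p (f.subst m) = φp p f := by
  classical
  choose g hg hφg using hne
  set S := insert p (finite_setOf_primes_le (max P 10)).toFinset
  set f' := Function.update (β := fun q : Nat.Primes ↦ BQ ℤ_[(q : ℕ)]) g p f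
  set m' := Function.update (β := fun q : Nat.Primes ↦ Mat2 ℤ_[(q : ℕ)]) (fun _ ↦ ⟨1, 0, 0, 1⟩) p m
  have hf'p : f' p = f := Function.update_self ..
  have hm'p : m' p = m := Function.update_self ..
  have hf'q : ∀ q ≠ p, f' q = g q := fun q hq ↦ Function.update_of_ne hq ..
  have hm'q : ∀ q ≠ p, m' q = ⟨1, 0, 0, 1⟩ := fun q hq ↦ Function.update_of_ne hq ..
  have hf' : ∀ q, (f' q).disc ≠ 0 := fun q ↦ by
    rcases eq_or_ne q p with rfl | hq
    · rwa [hf'p]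
    · rw [hf'q q hq]
      exact hg q
  have hm' : ∀ q, (m' q).det = 1 := fun q ↦ by
    rcases eq_or_ne q p with rfl | hq
    · rwa [hm'p]
    · simp only [hm'q q hq, Mat2.det, mul_one, mul_zero, sub_zero]
  have hprodS := prod_subst_eq_prod hφ hprod hloc hone (S := S) (by simp +contextual [S]) hf' hm'
  have hpS : p ∈ S := Finset.mem_insert_self _ _
  rw [← Finset.mul_prod_erase S _ hpS, ← Finset.mul_prod_erase S _ hpS, hf'p, hm'p] at hprodS
  have hrest : ∀ q ∈ S.erase p, φp q ((f' q).subst (m' q)) = φp q (f' q) := fun q hq ↦ by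
    rw [hm'q q (Finset.ne_of_mem_erase hq), BQ.subst_one]
  rw [Finset.prod_congr rfl hrest] at hprodS
  refine mul_right_cancel₀ (Finset.prod_ne_zero_iff.2 fun q hq ↦ ?_) hprodS
  rw [hf'q q (Finset.ne_of_mem_erase hq)]
  exact hφg q

end LocalInvariance

section Scaling

theorem measurePreserving_mul_left_of_isUnit {R : Type*} [Ring R] [TopologicalSpace R]
    [IsTopologicalRing R] [CompactSpace R] [MeasurableSpace R] [BorelSpace R] (μ : Measure R)
    [IsProbabilityMeasure μ] [μ.IsAddLeftInvariant] {u : R} (hu : IsUnit u) :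
    MeasurePreserving (u * ·) μ μ := by
  have : μ.IsAddHaarMeasure := Measure.isAddHaarMeasure_of_isCompact_nonempty_interior μ Set.univ
    isCompact_univ (by simp) (by simp) (by simp)
  exact AddMonoidHom.measurePreserving (f := AddMonoidHom.mulLeft u) (continuous_const_mul u)
    hu.unit.mulLeft.surjective rfl

variable {p : ℕ} [hp : Fact p.Prime]

theorem integral_ofLeadingCoeff_mul_pow_four (μ : Measure (Fin 4 → ℤ_[p])) [IsProbabilityMeasure μ]
    [μ.IsAddLeftInvariant] {φ : BQ ℤ_[p] → ℝ} {t : ℤ_[p]ˣ}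
    (hφ : ∀ f : BQ ℤ_[p], f.disc ≠ 0 → φ (f.subst ⟨t, 0, 0, ↑t⁻¹⟩) = φ f) {a : ℤ_[p]}
    (ha : a ≠ 0) :
    ∫ v, φ (BQ.ofLeadingCoeff (a * t ^ 4) v) ∂μ = ∫ v, φ (BQ.ofLeadingCoeff a v) ∂μ := by
  set w : Fin 4 → ℤ_[p] := ![t ^ 2, 1, ↑t⁻¹ ^ 2, ↑t⁻¹ ^ 4]
  have hw : IsUnit w := Pi.isUnit_iff.2 fun i ↦ by fin_cases i <;> simp [w]
  have hemb : MeasurableEmbedding (w * ·) :=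
    ((continuous_const_mul w).isClosedEmbedding hw.mul_right_injective).measurableEmbedding
  rw [← (measurePreserving_mul_left_of_isUnit μ hw).integral_comp hemb]
  refine integral_congr_ae ?_
  filter_upwards [ae_disc_ofLeadingCoeff_ne_zero μ ha] with v hv
  have hsubst : (BQ.ofLeadingCoeff a v).subst (⟨t, 0, 0, ↑t⁻¹⟩ : Mat2 ℤ_[p]) =
      BQ.ofLeadingCoeff (a * t ^ 4) (w * v) := by
    have ht := t.mul_inv
    simp only [BQ.ofLeadingCoeff, BQ.subst, w, Pi.mul_apply, Matrix.cons_val, BQ.mk.injEq]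
    refine ⟨by ring, ?_, ?_, ?_, by ring⟩
    · linear_combination t ^ 2 * v 0 * ht
    · linear_combination v 1 * (t * ↑t⁻¹ + 1) * ht
    · linear_combination v 2 * ↑t⁻¹ ^ 2 * ht
  rw [← hsubst, hφ _ hv]

theorem exists_pow_four_eq {c : ℤ_[p]} (hc : (fourthPowerModulus p : ℤ_[p]) ∣ c - 1) :
    ∃ t : ℤ_[p], t ^ 4 = c := by
  have hnorm : ‖1 - c‖ < ‖(4 : ℤ_[p])‖ ^ 2 := by
    rcases eq_or_ne p 2 with rfl | h2
    · obtain ⟨k, hk⟩ : (32 : ℤ_[2]) ∣ c - 1 := mod_cast hc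
      have h2 : ‖(2 : ℤ_[2])‖ = 2⁻¹ := by exact_mod_cast PadicInt.norm_p (p := 2)
      rw [show 1 - c = 2 ^ 5 * -k by linear_combination -hk, show (4 : ℤ_[2]) = 2 ^ 2 by norm_num,
        norm_mul, norm_pow, norm_pow, h2]
      linarith [PadicInt.norm_le_one (-k)]
    · have h4 : ‖(4 : ℤ_[p])‖ = 1 := mod_cast PadicInt.norm_natCast_eq_one_iff.2
        (show p.Coprime (2 ^ 2) from ((Nat.coprime_primes hp.out Nat.prime_two).2 h2).pow_right 2)
      rw [fourthPowerModulus_of_ne_two h2, dvd_sub_comm, ← PadicInt.norm_lt_one_iff_dvd] at hc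
      rwa [h4, one_pow]
  obtain ⟨t, ht, -⟩ := hensels_lemma (p := p) (F := Polynomial.X ^ 4 - Polynomial.C c) (a := 1)
    (by simpa [show (3 + 1 : ℤ_[p]) = 4 by norm_num] using hnorm)
  exact ⟨t, by simpa [sub_eq_zero] using ht⟩

theorem isUnit_natCast_iff_not_dvd {n : ℕ} : IsUnit (n : ℤ_[p]) ↔ ¬p ∣ n := by
  rw [PadicInt.isUnit_iff, PadicInt.norm_natCast_eq_one_iff, hp.out.coprime_iff_not_dvd]

theorem eq_of_modEq_fourthPowerModulus {α : Type*} {F : ℤ_[p] → α}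
    (hF : ∀ a ≠ 0, ∀ t : ℤ_[p]ˣ, F (a * t ^ 4) = F a) {b : ℤ_[p]} (hb : b ≠ 0) {u u' : ℕ}
    (hu : ¬p ∣ u) (h : u ≡ u' [MOD fourthPowerModulus p]) : F (b * u) = F (b * u') := by
  have hu' : ¬p ∣ u' := ((h.of_dvd (dvd_fourthPowerModulus p)).dvd_iff dvd_rfl).not.1 hu
  obtain ⟨x, hx⟩ := isUnit_natCast_iff_not_dvd.2 hu
  obtain ⟨x', hx'⟩ := isUnit_natCast_iff_not_dvd.2 hu'
  have hmod : (fourthPowerModulus p : ℤ_[p]) ∣ (u' : ℤ_[p]) - u := by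
    exact_mod_cast map_dvd (Int.castRingHom ℤ_[p]) h.dvd
  have hc : (fourthPowerModulus p : ℤ_[p]) ∣ ((x' * x⁻¹ : ℤ_[p]ˣ) : ℤ_[p]) - 1 := by
    refine (hmod.mul_right (↑x⁻¹ : ℤ_[p])).trans (dvd_of_eq ?_)
    rw [← hx, ← hx', sub_mul, Units.mul_inv, Units.val_mul]
  obtain ⟨t, ht⟩ := exists_pow_four_eq hc
  obtain ⟨t, rfl⟩ : IsUnit t := (isUnit_pow_iff four_ne_zero).1 (ht ▸ Units.isUnit _)
  rw [← hF (b * u) (mul_ne_zero hb (hx ▸ x.ne_zero)) t, ht, ← hx, ← hx', mul_assoc, ← Units.val_mul,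
    mul_comm x', mul_inv_cancel_left]

end Scaling

section DirichletSeries

theorem nuA_eq_zero {φp : (p : Nat.Primes) → BQ ℤ_[(p : ℕ)] → ℝ}
    {μ : (p : Nat.Primes) → Measure (Fin 4 → ℤ_[(p : ℕ)])} {p : Nat.Primes}
    [IsProbabilityMeasure (μ p)] [(μ p).IsAddLeftInvariant] (hφp : ∀ f, f.disc ≠ 0 → φp p f = 0)
    {a : ℤ} (ha : a ≠ 0) : nuA φp μ a = 0 :=
  tprod_of_exists_eq_zero ⟨p, integral_eq_zero_of_ae
    ((ae_disc_ofLeadingCoeff_ne_zero (μ p) (Int.cast_ne_zero.2 ha)).mono fun _ hv ↦ hφp _ hv)⟩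

theorem not_natCast_prime_sq_dvd_intCast_mul_natCast {p : ℕ} [hp : Fact p.Prime] {m : ℤ}
    (hm : m ≠ 0) (hmp : m.natAbs < p) {n : ℕ} (hn : ¬p ^ 2 ∣ n) :
    ¬(p : ℤ_[p]) ^ 2 ∣ ((m * n : ℤ) : ℤ_[p]) := by
  rw [PadicInt.pow_p_dvd_int_iff]
  refine fun h ↦ hn ?_
  have hpm : ¬p ∣ m.natAbs := Nat.not_dvd_of_pos_of_lt (Int.natAbs_pos.2 hm) hmp
  rw [← Int.natCast_pow, Int.natCast_dvd, Int.natAbs_mul, Int.natAbs_natCast] at h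
  exact (((hp.out.coprime_iff_not_dvd.2 hpm).pow_left 2).dvd_mul_left).1 h

variable {φ : BQ ℤ → ℝ} {φp : (p : Nat.Primes) → BQ ℤ_[(p : ℕ)] → ℝ}
  {ψ : (p : Nat.Primes) → ℕ → BQ ℤ_[(p : ℕ)] → ℝ} {P : ℕ}
  (hφ : ∀ m : Mat2 ℤ, m.det = 1 → ∀ f, φ (f.subst m) = φ f)
  (hbdd : ∀ p : Nat.Primes, ∃ B : ℝ, ∀ f, |φp p f| ≤ B)
  (hψ : ∀ p : Nat.Primes, ApproxSeries (p : ℕ) (φp p) (ψ p))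
  (hsupp : ∀ p : Nat.Primes, ∃ c : ℕ, SupportBound (p : ℕ) (ψ p) c)
  (hP : ∀ p : Nat.Primes, P < (p : ℕ) → SupportBound (p : ℕ) (ψ p) 0)
  (hprod : ∀ f : BQ ℤ, f.disc ≠ 0 →
    HasProd (fun p : Nat.Primes ↦ φp p (f.map (Int.castRingHom ℤ_[(p : ℕ)]))) (φ f))
  (μ : (p : Nat.Primes) → Measure (Fin 4 → ℤ_[(p : ℕ)]))
  [∀ p, IsProbabilityMeasure (μ p)] [∀ p, (μ p).IsAddLeftInvariant] {m : ℤ}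

include hφ hψ hsupp hP hprod in
theorem integral_ofLeadingCoeff_mul_prime_pow_eq
    (hne : ∀ p : Nat.Primes, ∃ f : BQ ℤ_[(p : ℕ)], f.disc ≠ 0 ∧ φp p f ≠ 0) (hm : m ≠ 0)
    (p : Nat.Primes) (j : ℕ) {u u' : ℕ} (hu : ¬(p : ℕ) ∣ u)
    (h : u ≡ u' [MOD fourthPowerModulus p]) :
    ∫ v, φp p (BQ.ofLeadingCoeff ((m * ((p : ℕ) ^ j * u : ℕ) : ℤ) : ℤ_[(p : ℕ)]) v) ∂μ p =
      ∫ v, φp p (BQ.ofLeadingCoeff ((m * ((p : ℕ) ^ j * u' : ℕ) : ℤ) : ℤ_[(p : ℕ)]) v) ∂μ p := by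
  have hloc (q : Nat.Primes) (f : BQ ℤ_[(q : ℕ)]) (hf : f.disc ≠ 0) :
      ∃ K : ℕ, ∀ g, CongMod q K g f → φp q g = φp q f :=
    (hsupp q).elim fun _ hc ↦ (hψ q).exists_forall_congMod_eq hc hf
  have hone (q : Nat.Primes) (hq : P < (q : ℕ)) (f : BQ ℤ_[(q : ℕ)])
      (hf : ¬((q : ℕ) : ℤ_[(q : ℕ)]) ^ 2 ∣ f.disc) : φp q f = 1 :=
    (hψ q).eq_one (hP q hq) hf
  have hscale (a : ℤ_[(p : ℕ)]) (ha : a ≠ 0) (t : ℤ_[(p : ℕ)]ˣ) :=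
    integral_ofLeadingCoeff_mul_pow_four (μ p) (φ := φp p) (t := t) (fun f hf ↦
      localFactor_subst_eq hφ hprod hloc hone hne (by simp [Mat2.det]) hf) ha
  have hb : (m * (p : ℕ) ^ j : ℤ_[(p : ℕ)]) ≠ 0 :=
    mul_ne_zero (Int.cast_ne_zero.2 hm) (pow_ne_zero _ (Nat.cast_ne_zero.2 p.2.ne_zero))
  simpa only [Int.cast_mul, Int.cast_natCast, Int.cast_pow, Nat.cast_mul, Nat.cast_pow,
    mul_assoc] using
    eq_of_modEq_fourthPowerModulus (F := fun a ↦ ∫ v, φp p (BQ.ofLeadingCoeff a v) ∂μ p)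
      hscale hb hu h

include hφ hbdd hψ hsupp hP hprod in
theorem hasLSeriesContinuation_nuA_of_exists_ne_zero
    (hne : ∀ p : Nat.Primes, ∃ f : BQ ℤ_[(p : ℕ)], f.disc ≠ 0 ∧ φp p f ≠ 0) (hm : m ≠ 0) :
    HasLSeriesContinuation (fun n ↦ nuA φp μ (m * n)) (1 / 3) := by
  choose A hA using hbdd
  have hcast (p : Nat.Primes) {n : ℕ} (hn : n ≠ 0) : ((m * n : ℤ) : ℤ_[(p : ℕ)]) ≠ 0 :=
    Int.cast_ne_zero.2 (mul_ne_zero hm (Nat.cast_ne_zero.2 hn))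
  refine hasLSeriesContinuation_of_abs_sub_one_le (P₀ := P + 5 + m.natAbs)
    (C := 14 * ∑' k, discWeight k) (A := A)
    (E := fun p n ↦ ∫ v, φp p (BQ.ofLeadingCoeff ((m * n : ℤ) : ℤ_[(p : ℕ)]) v) ∂μ p)
    (by omega) (mul_nonneg (by norm_num) (tsum_nonneg discWeight_nonneg)) (fun p n ↦ ?_)
    (fun p n hn hp ↦ ?_) (fun p n hp hpn ↦ ?_)
    fun p j u u' hu h ↦ integral_ofLeadingCoeff_mul_prime_pow_eq hφ hψ hsupp hP hprod μ hne hm p j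
      hu h
  · simpa using norm_integral_le_of_norm_le_const (μ := μ p) (C := A p)
      (f := fun v ↦ φp p (BQ.ofLeadingCoeff ((m * n : ℤ) : ℤ_[(p : ℕ)]) v))
      (.of_forall fun v ↦ hA p _)
  · refine (abs_integral_sub_one_le (hψ p) (hP p (by omega)) (hcast p hn)
      (summable_discWeight.mul_left _)
      (measureReal_disc_le_discWeight (by omega) _)).trans ?_
    rw [tsum_mul_left, div_mul_eq_mul_div]
    gcongr
    · exact tsum_nonneg discWeight_nonneg
    · norm_num
  · refine (abs_integral_sub_one_le (hψ p) (hP p (by omega))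
      (hcast p (by rintro rfl; exact hpn (dvd_zero _))) (summable_discWeight.mul_left _)
      (measureReal_disc_le_discWeight_of_not_sq_dvd (by omega)
        (not_natCast_prime_sq_dvd_intCast_mul_natCast hm (by omega) hpn))).trans_eq ?_
    rw [tsum_mul_left, div_mul_eq_mul_div]

include hφ hbdd hψ hsupp hP hprod in
theorem hasLSeriesContinuation_nuA (hm : m ≠ 0) :
    HasLSeriesContinuation (fun n ↦ nuA φp μ (m * n)) (1 / 3) := by
  by_cases hne : ∀ p : Nat.Primes, ∃ f : BQ ℤ_[(p : ℕ)], f.disc ≠ 0 ∧ φp p f ≠ 0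
  · exact hasLSeriesContinuation_nuA_of_exists_ne_zero hφ hbdd hψ hsupp hP hprod μ hne hm
  · push Not at hne
    obtain ⟨p, hp⟩ := hne
    have h0 {n : ℕ} (hn : n ≠ 0) : (nuA φp μ (m * n) : ℂ) = (0 : ℕ → ℂ) n := by
      rw [nuA_eq_zero hp (mul_ne_zero hm (Nat.cast_ne_zero.2 hn)), Complex.ofReal_zero,
        Pi.zero_apply]
    refine ⟨fun s _ ↦ (LSeriesSummable_congr s h0).2 LSeriesSummable_zero, 0, 0,
      differentiableOn_const 0, fun s _ ↦ ?_⟩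
    simp [LSeries_congr h0]

end DirichletSeries

theorem dirichlet_series_continuation_general
    (φ : BQ ℤ → ℝ)
    (hφinv : ∀ m : Mat2 ℤ, m.det = 1 → ∀ f, φ (f.subst m) = φ f)
    (φp : (p : Nat.Primes) → BQ ℤ_[(p : ℕ)] → ℝ)
    (hφpb : ∀ p : Nat.Primes, ∃ Bp : ℝ, ∀ f, |φp p f| ≤ Bp)
    (ψ : (p : Nat.Primes) → ℕ → BQ ℤ_[(p : ℕ)] → ℝ)
    (hψ : ∀ p : Nat.Primes, ApproxSeries (p : ℕ) (φp p) (ψ p))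
    (hψsupp : ∀ p : Nat.Primes, ∃ c : ℕ, SupportBound (p : ℕ) (ψ p) c)
    (hlarge : ∃ P : ℕ, ∀ p : Nat.Primes, P < (p : ℕ) → SupportBound (p : ℕ) (ψ p) 0)
    (hprod : ∀ f : BQ ℤ, f.disc ≠ 0 →
      HasProd (fun p : Nat.Primes ↦ φp p (f.map (Int.castRingHom ℤ_[(p : ℕ)]))) (φ f))
    (μ : (p : Nat.Primes) → Measure (Fin 4 → ℤ_[(p : ℕ)]))
    (hμprob : ∀ p : Nat.Primes, IsProbabilityMeasure (μ p))
    (hμinv : ∀ (p : Nat.Primes) (t : Fin 4 → ℤ_[(p : ℕ)]),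
      (μ p).map (fun x ↦ t + x) = μ p) (sgn : Bool) :
    (∀ s : ℂ, 1 < s.re →
      Summable (fun n : ℕ ↦
        ‖(nuA φp μ (if sgn then ((n : ℤ) + 1) else -((n : ℤ) + 1)) : ℂ)
          / ((n : ℂ) + 1) ^ s‖)) ∧
    ∃ (G : ℂ → ℂ) (r : ℂ),
      DifferentiableOn ℂ G {s : ℂ | 1 / 3 < s.re} ∧
      ∀ s : ℂ, 1 < s.re → Dseries φp μ sgn s = G s + r / (s - 1) := by
  have (p : Nat.Primes) : (μ p).IsAddLeftInvariant := ⟨hμinv p⟩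
  obtain ⟨P, hP⟩ := hlarge
  set ε : ℤ := if sgn then 1 else -1 with hε
  obtain ⟨hsum, G, r, hG, hGr⟩ := hasLSeriesContinuation_nuA hφinv hφpb hψ hψsupp hP hprod μ
    (m := ε) (by rw [hε]; split_ifs <;> decide)
  have hterm (n : ℕ) (s : ℂ) :
      (nuA φp μ (if sgn then ((n : ℤ) + 1) else -((n : ℤ) + 1)) : ℂ) / ((n : ℂ) + 1) ^ s =
        LSeries.term (fun a ↦ (nuA φp μ (ε * a) : ℂ)) s (n + 1) := by
    rw [LSeries_term_succ, hε]
    cases sgn <;> simp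
  refine ⟨fun s hs ↦ ?_, G, r, hG, fun s hs ↦ ?_⟩
  · simp only [hterm]
    exact ((summable_nat_add_iff 1).2 (hsum s hs)).norm
  · rw [Dseries, ← hGr s hs, ← tsum_div_cpow_eq_LSeries]
    exact tsum_congr fun n ↦ (hterm n s).trans (LSeries_term_succ ..)

/-- Let `φ : V(ℤ) → ℝ` be large and locally well approximated (the
hypotheses below unpack this definition: `φ` is a bounded `PGL₂(ℤ)`-invariant product
of local factors `φ_p`, each almost well approximated by periodic functions, and well
approximated via strongly invariant functions for all large `p`).  Then each Dirichlet
series `D^{±}(φ,s)` converges absolutely for `Re(s) > 1` and extends meromorphically to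
`Re(s) > 1/3`, holomorphically except for at most a simple pole at `s = 1`; in
particular `D^{±}(φ,1/2)` is well defined. -/
theorem dirichlet_series_continuation
    (φ : BQ ℤ → ℝ) (B : ℝ) (hφb : ∀ f, |φ f| ≤ B)
    (hφinv : ∀ m : Mat2 ℤ, IsUnit m.det → ∀ f, φ (f.subst m) = φ f)
    (φp : (p : Nat.Primes) → BQ ℤ_[(p : ℕ)] → ℝ)
    (hφpb : ∀ p : Nat.Primes, ∃ Bp : ℝ, ∀ f, |φp p f| ≤ Bp)
    (ψ : (p : Nat.Primes) → ℕ → BQ ℤ_[(p : ℕ)] → ℝ)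
    (hψ : ∀ p : Nat.Primes, ApproxSeries (p : ℕ) (φp p) (ψ p))
    (hψsupp : ∀ p : Nat.Primes, ∃ c : ℕ, SupportBound (p : ℕ) (ψ p) c)
    (hlarge : ∃ P : ℕ, ∀ p : Nat.Primes, P < (p : ℕ) →
      SupportBound (p : ℕ) (ψ p) 0 ∧ StronglyInvariantFamily (p : ℕ) (ψ p))
    (hprod : ∀ f : BQ ℤ, f.disc ≠ 0 →
      HasProd (fun p : Nat.Primes => φp p (f.map (Int.castRingHom ℤ_[(p : ℕ)]))) (φ f))
    (μ : (p : Nat.Primes) → Measure (Fin 4 → ℤ_[(p : ℕ)]))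
    (hμprob : ∀ p : Nat.Primes, IsProbabilityMeasure (μ p))
    (hμinv : ∀ (p : Nat.Primes) (t : Fin 4 → ℤ_[(p : ℕ)]),
      (μ p).map (fun x => t + x) = μ p) :
    ∀ sgn : Bool,
      (∀ s : ℂ, 1 < s.re →
        Summable (fun n : ℕ =>
          ‖(nuA φp μ (if sgn then ((n : ℤ) + 1) else -((n : ℤ) + 1)) : ℂ)
            / ((n : ℂ) + 1) ^ s‖)) ∧
      ∃ (G : ℂ → ℂ) (r : ℂ),
        DifferentiableOn ℂ G {s : ℂ | 1 / 3 < s.re} ∧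
        ∀ s : ℂ, 1 < s.re → Dseries φp μ sgn s = G s + r / (s - 1) :=
  dirichlet_series_continuation_general φ (fun m hm ↦ hφinv m (hm ▸ isUnit_one)) φp hφpb ψ hψ
    hψsupp (hlarge.imp fun _ hP p hp ↦ (hP p hp).1) hprod μ hμprob hμinv

end BQPaper
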